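/- Every nest algebra Alg 𝒩 on a complex separable Hilbert space H is a zero product determined Banach algebra. -/

import Mathlib

open scoped Topology

/-- A complex Banach algebra `A` is *zero product determined*. -/
def ZeroProductDetermined (A : Type*) [NonUnitalNonAssocRing A] [Module ℂ A]
    [TopologicalSpace A] : Prop :=
  ∀ φ : A →ₗ[ℂ] A →ₗ[ℂ] ℂ, Continuous (fun p : A × A => φ p.1 p.2) →
    (∀ x y : A, x * y = 0 → φ x y = 0) →
    ∃ τ : A →L[ℂ] ℂ, ∀ x y : A, φ x y = τ (x * y)

/-!
Idempotents pass from one argument of `φ` to the other, and so do all elements of the closed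
algebra that they generate. Hence it is enough that the nest algebra is the closed hull of its
idempotents. That hull contains every off-diagonal corner of an idempotent of the algebra, and with
it every operator of the algebra that factors through a complementary corner.

The span of a maximal orthonormal set of atomic vectors reduces the nest and splits an operator into
an atomic corner, a nonatomic corner and two off-diagonal ones. In the atomic corner the operator is
approximated by a block tridiagonal one, whose blocks are diagonalized or shifted along the
coordinates. The nonatomic part is divided into `E` and `F`, both of which meet nontrivially every
interval of the nest that the whole part meets nontrivially. Such intersections are infinite
dimensional, which leaves room in `F` for an approximate factorization `‖1 - YZ‖ < 1` of the
identity of `E`; then a Neumann series factors every operator on `E` through `F`, and conversely.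
-/

/-! ### Algebras generated by idempotents -/

section IdempotentHull

variable {R A : Type*} [CommRing R] [Ring A] [Algebra R A] [TopologicalSpace A]
  [IsTopologicalRing A] {B : Subalgebra R A} {p x y z : A}

/-- The closed subalgebra generated by the idempotents of a subalgebra `B`, taken in the ambient
algebra. -/
def idempotentHull (B : Subalgebra R A) : Subalgebra R A :=
  (Algebra.adjoin R {p | p ∈ B ∧ IsIdempotentElem p}).topologicalClosure

namespace idempotentHull

lemma mem_of_isIdempotentElem (hp : p ∈ B) (h : IsIdempotentElem p) : p ∈ idempotentHull B :=
  Subalgebra.le_topologicalClosure _ (Algebra.subset_adjoin ⟨hp, h⟩)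

-- Both `p` and `p + y` are idempotent.
lemma mem_of_mul_eq_self_of_mul_eq_zero (hp : p ∈ B) (h : IsIdempotentElem p) (hy : y ∈ B)
    (hpy : p * y = y) (hyp : y * p = 0) : y ∈ idempotentHull B := by
  have hyy : y * y = 0 := by
    calc y * y = (y * p) * y := by rw [mul_assoc, hpy]
    _ = 0 := by rw [hyp, zero_mul]
  have hadd : IsIdempotentElem (p + y) := by
    rw [IsIdempotentElem, mul_add, add_mul, add_mul, h.eq, hpy, hyp, hyy, add_zero, add_zero]
  simpa using (idempotentHull B).sub_mem (mem_of_isIdempotentElem (B.add_mem hp hy) hadd)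
    (mem_of_isIdempotentElem hp h)

lemma mem_of_mul_eq_zero_of_mul_eq_self (hp : p ∈ B) (h : IsIdempotentElem p) (hy : y ∈ B)
    (hpy : p * y = 0) (hyp : y * p = y) : y ∈ idempotentHull B :=
  mem_of_mul_eq_self_of_mul_eq_zero (p := 1 - p) (B.sub_mem B.one_mem hp) h.one_sub hy
    (by rw [sub_mul, hpy, one_mul, sub_zero]) (by rw [mul_sub, hyp, mul_one, sub_self])

lemma mul_mem_of_factor (hp : p ∈ B) (h : IsIdempotentElem p) (hy : y ∈ B) (hz : z ∈ B)
    (hpy : p * y = 0) (hyp : y * p = y) (hpz : p * z = z) (hzp : z * p = 0) :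
    y * z ∈ idempotentHull B :=
  (idempotentHull B).mul_mem (mem_of_mul_eq_zero_of_mul_eq_self hp h hy hpy hyp)
    (mem_of_mul_eq_self_of_mul_eq_zero hp h hz hpz hzp)

lemma mem_of_diagonal_corners (hp : p ∈ B) (h : IsIdempotentElem p) (hx : x ∈ B)
    (hpp : p * x * p ∈ idempotentHull B) (hqq : (1 - p) * x * (1 - p) ∈ idempotentHull B) :
    x ∈ idempotentHull B := by
  have hq : 1 - p ∈ B := B.sub_mem B.one_mem hp
  have hpq : p * x * (1 - p) ∈ idempotentHull B :=
    mem_of_mul_eq_self_of_mul_eq_zero hp h (B.mul_mem (B.mul_mem hp hx) hq)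
      (by rw [← mul_assoc, ← mul_assoc, h.eq]) (by rw [mul_assoc, h.one_sub_mul_self, mul_zero])
  have hqp : (1 - p) * x * p ∈ idempotentHull B :=
    mem_of_mul_eq_zero_of_mul_eq_self hp h (B.mul_mem (B.mul_mem hq hx) hp)
      (by rw [← mul_assoc, ← mul_assoc, h.mul_one_sub_self, zero_mul, zero_mul])
      (by rw [mul_assoc, h.eq])
  have hsum : x = p * x * p + (1 - p) * x * (1 - p) + p * x * (1 - p) + (1 - p) * x * p := by
    noncomm_ring
  rw [hsum]
  exact add_mem (add_mem (add_mem hpp hqq) hpq) hqp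

end idempotentHull

end IdempotentHull

lemma idempotentHull.mem_of_forall_norm_sub_le {R A : Type*} [CommRing R] [NormedRing A]
    [Algebra R A] {B : Subalgebra R A} {x : A}
    (h : ∀ ε > 0, ∃ y ∈ idempotentHull B, ‖x - y‖ ≤ ε) : x ∈ idempotentHull B := by
  refine (Subalgebra.isClosed_topologicalClosure _).closure_subset_iff.2 Set.Subset.rfl
    (Metric.mem_closure_iff.2 fun ε hε => ?_)
  obtain ⟨y, hy, hxy⟩ := h (ε / 2) (half_pos hε)
  exact ⟨y, hy, by rw [dist_eq_norm]; exact hxy.trans_lt (half_lt_self hε)⟩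

lemma idempotentHull.mem_of_norm_sub_mul_lt_one {R A : Type*} [CommRing R] [NormedRing A]
    [CompleteSpace A] [Algebra R A] {B : Subalgebra R A} (hB : IsClosed (B : Set A))
    {p q x y z : A} (hp : p ∈ B) (h : IsIdempotentElem p) (hq : q ∈ B) (hx : x ∈ B) (hy : y ∈ B)
    (hz : z ∈ B) (hpq : p * q = 0) (hqx : q * x = x) (hxp : x * p = 0) (hpy : p * y = 0)
    (hyp : y * p = y) (hpz : p * z = z) (hlt : ‖q - y * z‖ < 1) : x ∈ idempotentHull B := by
  set u := Units.oneSub (q - y * z) hlt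
  have hu : (u : A) = 1 - (q - y * z) := rfl
  have hinv : (↑u⁻¹ : A) ∈ B :=
    tsum_mem hB fun n => pow_mem (B.sub_mem hq (B.mul_mem hy hz)) n
  have hpu : p * ↑u⁻¹ = p := by
    rw [Units.mul_inv_eq_iff_eq_mul, hu, mul_sub, mul_sub, hpq, ← mul_assoc, hpy, zero_mul,
      sub_zero, mul_one, sub_zero]
  have hfactor : x = ↑u⁻¹ * y * (z * x) := by
    rw [mul_assoc, Units.eq_inv_mul_iff_mul_eq, hu, sub_mul, sub_mul, one_mul, hqx,
      sub_sub_cancel, mul_assoc]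
  rw [hfactor]
  exact mul_mem_of_factor hp h (B.mul_mem hinv hy) (B.mul_mem hz hx)
    (by rw [← mul_assoc, hpu, hpy]) (by rw [mul_assoc, hyp]) (by rw [← mul_assoc, hpz])
    (by rw [mul_assoc, hxp, mul_zero])

section BalancedSubalgebra

variable {R A M : Type*} [CommRing R] [Ring A] [Algebra R A] [AddCommGroup M] [Module R M]

/-- The elements that a bilinear map `φ` lets pass from its first to its second argument. -/
def balancedSubalgebra (φ : A →ₗ[R] A →ₗ[R] M) : Subalgebra R A where
  carrier := {s | ∀ x y, φ (x * s) y = φ x (s * y)}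
  mul_mem' {a b} ha hb x y := by rw [← mul_assoc, hb, ha, mul_assoc]
  add_mem' {a b} ha hb x y := by
    rw [mul_add, map_add, LinearMap.add_apply, ha, hb, add_mul, map_add]
  algebraMap_mem' r x y := by simp [Algebra.algebraMap_eq_smul_one]

lemma mem_balancedSubalgebra_of_isIdempotentElem {φ : A →ₗ[R] A →ₗ[R] M}
    (hφ : ∀ x y, x * y = 0 → φ x y = 0) {e : A} (he : IsIdempotentElem e) :
    e ∈ balancedSubalgebra φ := by
  intro x y
  have h₁ : φ (x * e) ((1 - e) * y) = 0 := hφ _ _ <| by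
    rw [mul_assoc, ← mul_assoc e, he.mul_one_sub_self, zero_mul, mul_zero]
  have h₂ : φ (x * (1 - e)) (e * y) = 0 := hφ _ _ <| by
    rw [mul_assoc, ← mul_assoc (1 - e), he.one_sub_mul_self, zero_mul, mul_zero]
  rw [sub_mul, one_mul, map_sub, sub_eq_zero] at h₁
  rw [mul_sub, mul_one, map_sub, LinearMap.sub_apply, sub_eq_zero] at h₂
  exact h₁.trans h₂.symm

lemma isClosed_balancedSubalgebra [TopologicalSpace A] [ContinuousMul A] [TopologicalSpace M]
    [T2Space M] {φ : A →ₗ[R] A →ₗ[R] M} (hφ : Continuous fun p : A × A => φ p.1 p.2) :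
    IsClosed (balancedSubalgebra φ : Set A) := by
  have : (balancedSubalgebra φ : Set A) = ⋂ x, ⋂ y, {s | φ (x * s) y = φ x (s * y)} := by
    ext s
    simp only [Set.mem_iInter]
    rfl
  rw [this]
  exact isClosed_iInter fun x => isClosed_iInter fun y => isClosed_eq
    (hφ.comp (by fun_prop : Continuous fun s : A => (x * s, y)))
    (hφ.comp (by fun_prop : Continuous fun s : A => (x, s * y)))

end BalancedSubalgebra

theorem ZeroProductDetermined.of_le_idempotentHull {A : Type*} [Ring A] [Algebra ℂ A]
    [TopologicalSpace A] [IsTopologicalRing A] {B : Subalgebra ℂ A}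
    (hB : B ≤ idempotentHull B) : ZeroProductDetermined B := by
  intro φ hφ hzero
  have hadjoin : Algebra.adjoin ℂ {p | p ∈ B ∧ IsIdempotentElem p} ≤
      (balancedSubalgebra φ).map B.val := by
    refine Algebra.adjoin_le ?_
    rintro p ⟨hpB, hp⟩
    exact ⟨⟨p, hpB⟩, mem_balancedSubalgebra_of_isIdempotentElem hzero (Subtype.ext hp), rfl⟩
  have hall : ∀ s : B, s ∈ balancedSubalgebra φ := by
    intro s
    have hs : s ∈ closure (balancedSubalgebra φ : Set B) := by
      rw [Topology.IsInducing.subtypeVal.closure_eq_preimage_closure_image]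
      exact closure_mono hadjoin (hB s.2)
    rwa [(isClosed_balancedSubalgebra hφ).closure_eq] at hs
  refine ⟨⟨φ 1, hφ.comp (by fun_prop : Continuous fun s : B => ((1 : B), s))⟩, fun x y => ?_⟩
  have hxy : φ x y = φ 1 (x * y) := by simpa only [one_mul] using hall x 1 y
  exact hxy

/-! ### Orthogonal projections -/

section Projection

variable {𝕜 H : Type*} [RCLike 𝕜] [NormedAddCommGroup H] [InnerProductSpace 𝕜 H]
  {K L : Submodule 𝕜 H} {x u : H}

lemma mem_orthogonal_span_iff {X : Set H} :
    x ∈ (Submodule.span 𝕜 X)ᗮ ↔ ∀ y ∈ X, inner 𝕜 y x = 0 := by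
  refine ⟨fun h y hy => h y (Submodule.subset_span hy), fun h => ?_⟩
  have hle : Submodule.span 𝕜 X ≤ (Submodule.span 𝕜 {x})ᗮ :=
    Submodule.span_le.2 fun y hy => Submodule.mem_orthogonal_singleton_iff_inner_left.2 (h y hy)
  exact fun y hy => Submodule.mem_orthogonal_singleton_iff_inner_left.1 (hle hy)

variable [CompleteSpace H]

/-- The orthogonal projection onto the closure of a subspace. Passing to the closure makes it
available for every subspace of a Hilbert space. -/
noncomputable def proj (K : Submodule 𝕜 H) : H →L[𝕜] H := K.topologicalClosure.starProjection

lemma proj_mem_topologicalClosure (K : Submodule 𝕜 H) (x : H) :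
    proj K x ∈ K.topologicalClosure :=
  Submodule.starProjection_apply_mem _ _

lemma proj_mem (hK : IsClosed (K : Set H)) (x : H) : proj K x ∈ K := by
  simpa only [hK.submodule_topologicalClosure_eq] using proj_mem_topologicalClosure K x

lemma sub_proj_mem_orthogonal (K : Submodule 𝕜 H) (x : H) : x - proj K x ∈ Kᗮ := by
  have := Submodule.sub_starProjection_mem_orthogonal (K := K.topologicalClosure) x
  rwa [Submodule.orthogonal_closure] at this

lemma proj_eq_of_mem (hu : u ∈ K.topologicalClosure) (hx : x - u ∈ Kᗮ) : proj K x = u :=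
  Submodule.eq_starProjection_of_mem_orthogonal hu (by rwa [Submodule.orthogonal_closure])

lemma proj_eq_self_iff_mem_topologicalClosure : proj K x = x ↔ x ∈ K.topologicalClosure :=
  Submodule.starProjection_eq_self_iff

lemma proj_eq_self_iff (hK : IsClosed (K : Set H)) : proj K x = x ↔ x ∈ K := by
  rw [proj_eq_self_iff_mem_topologicalClosure, hK.submodule_topologicalClosure_eq]

lemma proj_eq_self (hx : x ∈ K) : proj K x = x :=
  proj_eq_self_iff_mem_topologicalClosure.2 (K.le_topologicalClosure hx)

lemma proj_eq_zero_iff : proj K x = 0 ↔ x ∈ Kᗮ := by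
  rw [proj, Submodule.starProjection_apply_eq_zero_iff, Submodule.orthogonal_closure]

lemma inner_proj_left (K : Submodule 𝕜 H) (x y : H) :
    inner 𝕜 (proj K x) y = inner 𝕜 x (proj K y) :=
  Submodule.inner_starProjection_left_eq_right _ _ _

lemma norm_proj_le_one (K : Submodule 𝕜 H) : ‖proj K‖ ≤ 1 := Submodule.starProjection_norm_le _

lemma norm_proj_apply_le (K : Submodule 𝕜 H) (x : H) : ‖proj K x‖ ≤ ‖x‖ :=
  Submodule.norm_starProjection_apply_le _ _

lemma isIdempotentElem_proj (K : Submodule 𝕜 H) : IsIdempotentElem (proj K) :=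
  Submodule.isIdempotentElem_starProjection _

lemma proj_proj (K : Submodule 𝕜 H) (x : H) : proj K (proj K x) = proj K x :=
  DFunLike.congr_fun (isIdempotentElem_proj K) x

lemma proj_topologicalClosure (K : Submodule 𝕜 H) : proj K.topologicalClosure = proj K := by
  ext x
  exact proj_eq_of_mem (Submodule.le_topologicalClosure _ (proj_mem_topologicalClosure K x))
    (by simpa using sub_proj_mem_orthogonal K x)

lemma norm_sq_eq_add_norm_sq_proj (K : Submodule 𝕜 H) (x : H) :
    ‖x‖ ^ 2 = ‖proj K x‖ ^ 2 + ‖x - proj K x‖ ^ 2 := by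
  rw [Submodule.norm_sq_eq_add_norm_sq_starProjection x K.topologicalClosure,
    Submodule.starProjection_orthogonal_val]
  rfl

lemma inner_self_proj (K : Submodule 𝕜 H) (x : H) :
    inner 𝕜 x (proj K x) = ((‖proj K x‖ ^ 2 : ℝ) : 𝕜) := by
  rw [← proj_proj, ← inner_proj_left, proj_proj, inner_self_eq_norm_sq_to_K]
  norm_cast

lemma proj_orthogonal (K : Submodule 𝕜 H) : proj Kᗮ = 1 - proj K := by
  ext x
  refine proj_eq_of_mem (Submodule.le_topologicalClosure _ (sub_proj_mem_orthogonal K x)) ?_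
  simpa [Submodule.orthogonal_orthogonal_eq_closure] using proj_mem_topologicalClosure K x

lemma proj_proj_of_le (h : K ≤ L) (x : H) : proj K (proj L x) = proj K x := by
  have := proj_eq_zero_iff.2 (Submodule.orthogonal_le h (sub_proj_mem_orthogonal L x))
  rw [map_sub, sub_eq_zero] at this
  exact this.symm

lemma proj_proj_of_ge (h : K ≤ L) (x : H) : proj L (proj K x) = proj K x :=
  proj_eq_self_iff_mem_topologicalClosure.2
    (Submodule.topologicalClosure_mono h (proj_mem_topologicalClosure K x))

lemma proj_mul_proj_of_le (h : K ≤ L) : proj K * proj L = proj K :=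
  ContinuousLinearMap.ext (proj_proj_of_le h)

lemma proj_mul_proj_of_ge (h : K ≤ L) : proj L * proj K = proj K :=
  ContinuousLinearMap.ext (proj_proj_of_ge h)

lemma norm_proj_apply_mono (h : K ≤ L) (x : H) : ‖proj K x‖ ≤ ‖proj L x‖ := by
  rw [← proj_proj_of_le h]
  exact norm_proj_apply_le _ _

lemma norm_sq_proj_sub_proj (h : K ≤ L) (x : H) :
    ‖proj L x - proj K x‖ ^ 2 = ‖proj L x‖ ^ 2 - ‖proj K x‖ ^ 2 := by
  have := norm_sq_eq_add_norm_sq_proj K (proj L x)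
  rw [proj_proj_of_le h] at this
  linarith

lemma proj_mul_proj_of_isOrtho (h : K ⟂ L) : proj K * proj L = 0 :=
  ContinuousLinearMap.ext fun x => proj_eq_zero_iff.2 <|
    Submodule.topologicalClosure_minimal _ h.symm (Submodule.isClosed_orthogonal K)
      (proj_mem_topologicalClosure L x)

lemma proj_sup_of_isOrtho (h : K ⟂ L) : proj (K ⊔ L) = proj K + proj L := by
  ext x
  rw [add_apply]
  have hmem : ∀ {J}, J ≤ K ⊔ L → proj J x ∈ (K ⊔ L).topologicalClosure := fun {J} hJ =>
    Submodule.topologicalClosure_mono hJ (proj_mem_topologicalClosure J x)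
  refine proj_eq_of_mem (add_mem (hmem le_sup_left) (hmem le_sup_right)) ?_
  rw [← Submodule.inf_orthogonal, Submodule.mem_inf, ← proj_eq_zero_iff, ← proj_eq_zero_iff]
  simp only [map_sub, map_add, ← mul_apply_eq_comp, (isIdempotentElem_proj _).eq,
    proj_mul_proj_of_isOrtho h, proj_mul_proj_of_isOrtho h.symm, zero_apply, add_zero, zero_add,
    sub_self, and_self]

lemma norm_sq_proj_add_norm_sq_proj_le (h : K ⟂ L) (x : H) :
    ‖proj K x‖ ^ 2 + ‖proj L x‖ ^ 2 ≤ ‖x‖ ^ 2 := by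
  have hinner : inner 𝕜 (proj K x) (proj L x) = 0 := by
    rw [inner_proj_left, ← mul_apply_eq_comp, proj_mul_proj_of_isOrtho h, zero_apply,
      inner_zero_right]
  calc ‖proj K x‖ ^ 2 + ‖proj L x‖ ^ 2 = ‖proj (K ⊔ L) x‖ ^ 2 := by
        rw [proj_sup_of_isOrtho h, add_apply, sq, sq, sq]
        exact (norm_add_sq_eq_norm_sq_add_norm_sq_of_inner_eq_zero _ _ hinner).symm
    _ ≤ ‖x‖ ^ 2 := by
        gcongr
        exact norm_proj_apply_le _ _

end Projection

/-! ### Nest algebras -/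

section NestAlgebra

variable {𝕜 H : Type*} [RCLike 𝕜] [NormedAddCommGroup H] [InnerProductSpace 𝕜 H]

/-- A nest: a chain of closed subspaces that contains `⊥` and `⊤` and is complete. -/
structure IsNest (𝒩 : Set (Submodule 𝕜 H)) : Prop where
  isClosed : ∀ N ∈ 𝒩, IsClosed (N : Set H)
  bot_mem : ⊥ ∈ 𝒩
  top_mem : ⊤ ∈ 𝒩
  isChain : IsChain (· ≤ ·) 𝒩
  sInf_mem : ∀ F ⊆ 𝒩, F.Nonempty → sInf F ∈ 𝒩
  closure_sSup_mem : ∀ F ⊆ 𝒩, F.Nonempty → (sSup F).topologicalClosure ∈ 𝒩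

/-- The algebra of the bounded operators that leave every subspace in `𝒩` invariant. -/
def nestAlgebra (𝒩 : Set (Submodule 𝕜 H)) : Subalgebra 𝕜 (H →L[𝕜] H) where
  carrier := {T | ∀ N ∈ 𝒩, ∀ x ∈ N, T x ∈ N}
  mul_mem' hS hT N hN x hx := hS N hN _ (hT N hN x hx)
  add_mem' hS hT N hN x hx := N.add_mem (hS N hN x hx) (hT N hN x hx)
  algebraMap_mem' c N _ x hx := by
    simpa [Algebra.algebraMap_eq_smul_one] using N.smul_mem c hx

/-- `K` reduces `𝒩` if it is invariant under the projections onto the subspaces in `𝒩`. -/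
def Reduces [CompleteSpace H] (𝒩 : Set (Submodule 𝕜 H)) (K : Submodule 𝕜 H) : Prop :=
  ∀ N ∈ 𝒩, ∀ x ∈ K, proj N x ∈ K

variable {𝒩 : Set (Submodule 𝕜 H)} {K L : Submodule 𝕜 H}

lemma mem_nestAlgebra {T : H →L[𝕜] H} : T ∈ nestAlgebra 𝒩 ↔ ∀ N ∈ 𝒩, ∀ x ∈ N, T x ∈ N :=
  Iff.rfl

lemma mem_nestAlgebra_of_hasSum (hclosed : ∀ N ∈ 𝒩, IsClosed (N : Set H)) {ι : Type*}
    {T : ι → H →L[𝕜] H} {S : H →L[𝕜] H} (hT : ∀ i, T i ∈ nestAlgebra 𝒩)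
    (hS : ∀ v, HasSum (fun i => T i v) (S v)) : S ∈ nestAlgebra 𝒩 :=
  fun N hN x hx => (hclosed N hN).mem_of_tendsto (hS x)
    (Filter.Eventually.of_forall fun _ => N.sum_mem fun i _ => hT i N hN x hx)

lemma rankOne_mem_nestAlgebra (hchain : IsChain (· ≤ ·) 𝒩) {M : Submodule 𝕜 H} (hM : M ∈ 𝒩)
    {h k : H} (hh : h ∈ M) (hk : k ∈ Mᗮ) : InnerProductSpace.rankOne 𝕜 h k ∈ nestAlgebra 𝒩 := by
  intro N hN x hx
  rw [InnerProductSpace.rankOne_apply]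
  rcases hchain.total hN hM with hNM | hMN
  · rw [Submodule.inner_left_of_mem_orthogonal (hNM hx) hk, zero_smul]
    exact N.zero_mem
  · exact N.smul_mem _ (hMN hh)

namespace Reduces

variable [CompleteSpace H]

lemma of_mem (h𝒩 : IsNest 𝒩) (hK : K ∈ 𝒩) : Reduces 𝒩 K := by
  intro N hN x hx
  rcases h𝒩.isChain.total hN hK with h | h
  · exact h (proj_mem (h𝒩.isClosed N hN) x)
  · rwa [proj_eq_self (h hx)]

lemma orthogonal (hK : Reduces 𝒩 K) : Reduces 𝒩 Kᗮ := by
  intro N hN x hx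
  rw [Submodule.mem_orthogonal] at hx ⊢
  intro u hu
  rw [← inner_proj_left]
  exact hx _ (hK N hN u hu)

lemma inf (hK : Reduces 𝒩 K) (hL : Reduces 𝒩 L) : Reduces 𝒩 (K ⊓ L) :=
  fun N hN x hx => ⟨hK N hN x hx.1, hL N hN x hx.2⟩

lemma iSup {ι : Sort*} {K : ι → Submodule 𝕜 H} (hK : ∀ i, Reduces 𝒩 (K i)) :
    Reduces 𝒩 (⨆ i, K i) := by
  intro N hN
  exact iSup_le (a := (⨆ i, K i).comap (proj N).toLinearMap)
    fun i x hx => Submodule.mem_iSup_of_mem i (hK i N hN x hx)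

lemma sup (hK : Reduces 𝒩 K) (hL : Reduces 𝒩 L) : Reduces 𝒩 (K ⊔ L) := by
  rw [sup_eq_iSup]
  exact iSup fun b => by cases b <;> assumption

lemma topologicalClosure (hK : Reduces 𝒩 K) : Reduces 𝒩 K.topologicalClosure :=
  fun N hN _ hx => map_mem_closure (proj N).continuous hx (hK N hN)

lemma span {X : Set H} (hX : ∀ N ∈ 𝒩, ∀ x ∈ X, proj N x ∈ Submodule.span 𝕜 X) :
    Reduces 𝒩 (Submodule.span 𝕜 X) := by
  intro N hN
  exact Submodule.span_le (p := (Submodule.span 𝕜 X).comap (proj N).toLinearMap).2 (hX N hN)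

lemma proj_comm (hK : Reduces 𝒩 K) {N : Submodule 𝕜 H} (hN : N ∈ 𝒩) (x : H) :
    proj K (proj N x) = proj N (proj K x) := by
  refine proj_eq_of_mem (hK.topologicalClosure N hN _ (proj_mem_topologicalClosure K x)) ?_
  rw [← map_sub]
  exact hK.orthogonal N hN _ (sub_proj_mem_orthogonal K x)

lemma proj_mem_nestAlgebra (hclosed : ∀ N ∈ 𝒩, IsClosed (N : Set H)) (hK : Reduces 𝒩 K) :
    proj K ∈ nestAlgebra 𝒩 := by
  intro N hN x hx
  rw [← proj_eq_self_iff (hclosed N hN), ← hK.proj_comm hN, proj_eq_self hx]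

end Reduces

end NestAlgebra

section OrthogonalSeries

variable {𝕜 E F ι : Type*} [RCLike 𝕜] [NormedAddCommGroup E] [NormedSpace 𝕜 E]
  [NormedAddCommGroup F] [InnerProductSpace 𝕜 F] {T : ι → E →L[𝕜] F}

lemma norm_sq_sum_apply_of_orthogonal
    (hT : Pairwise fun i j => ∀ x y, inner 𝕜 (T i x) (T j y) = 0) (v : E) (s : Finset ι) :
    ‖∑ i ∈ s, T i v‖ ^ 2 = ∑ i ∈ s, ‖T i v‖ ^ 2 := by
  have hfam : OrthogonalFamily 𝕜 (fun i => (T i).range) fun i => (T i).range.subtypeₗᵢ := by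
    rintro i j hij ⟨_, x, rfl⟩ ⟨_, y, rfl⟩
    exact hT hij x y
  exact hfam.norm_sum (fun i => ⟨T i v, v, rfl⟩) s

lemma summable_apply_of_orthogonal [CompleteSpace F]
    (hT : Pairwise fun i j => ∀ x y, inner 𝕜 (T i x) (T j y) = 0) (v : E)
    (hsum : Summable fun i => ‖T i v‖ ^ 2) : Summable fun i => T i v := by
  have hfam : OrthogonalFamily 𝕜 (fun i => (T i).range) fun i => (T i).range.subtypeₗᵢ := by
    rintro i j hij ⟨_, x, rfl⟩ ⟨_, y, rfl⟩
    exact hT hij x y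
  exact (hfam.summable_iff_norm_sq_summable fun i => ⟨T i v, v, rfl⟩).2 hsum

theorem exists_hasSum_of_orthogonal [CompleteSpace F]
    (hT : Pairwise fun i j => ∀ x y, inner 𝕜 (T i x) (T j y) = 0) {C : ℝ} (hC : 0 ≤ C)
    (hbound : ∀ v, ∀ s : Finset ι, ∑ i ∈ s, ‖T i v‖ ^ 2 ≤ (C * ‖v‖) ^ 2) :
    ∃ S : E →L[𝕜] F, (∀ v, HasSum (fun i => T i v) (S v)) ∧ ‖S‖ ≤ C := by
  have hsum : ∀ v, Summable fun i => T i v := fun v =>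
    summable_apply_of_orthogonal hT v (summable_of_sum_le (fun i => sq_nonneg _) (hbound v))
  let S₀ : E →ₗ[𝕜] F :=
    { toFun := fun v => ∑' i, T i v
      map_add' := fun x y => by simp only [map_add, (hsum x).tsum_add (hsum y)]
      map_smul' := fun c x => by
        simp only [map_smul, RingHom.id_apply, (hsum x).tsum_const_smul c] }
  have hS₀ : ∀ v, ‖S₀ v‖ ≤ C * ‖v‖ := by
    refine fun v => le_of_tendsto (hsum v).hasSum.norm (Filter.Eventually.of_forall fun s => ?_)
    refine (sq_le_sq₀ (norm_nonneg _) (by positivity)).1 ?_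
    exact (norm_sq_sum_apply_of_orthogonal hT v s).trans_le (hbound v s)
  exact ⟨S₀.mkContinuous C hS₀, fun v => (hsum v).hasSum, S₀.mkContinuous_norm_le hC hS₀⟩

end OrthogonalSeries

/-! ### Operators on the span of an orthonormal family -/

section Corner

variable {𝕜 H : Type*} [RCLike 𝕜] [NormedAddCommGroup H] [InnerProductSpace 𝕜 H] [CompleteSpace H]

/-- The operators that map the closure of `K` into itself and vanish on `Kᗮ`. -/
noncomputable def corner (K : Submodule 𝕜 H) : Submodule 𝕜 (H →L[𝕜] H) where
  carrier := {T | proj K * T = T ∧ T * proj K = T}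
  add_mem' hS hT := ⟨by rw [mul_add, hS.1, hT.1], by rw [add_mul, hS.2, hT.2]⟩
  zero_mem' := ⟨mul_zero _, zero_mul _⟩
  smul_mem' c _ hT := ⟨by rw [mul_smul_comm, hT.1], by rw [smul_mul_assoc, hT.2]⟩

lemma mul_mem_corner {K : Submodule 𝕜 H} {S T : H →L[𝕜] H} (hS : S ∈ corner K)
    (hT : T ∈ corner K) : S * T ∈ corner K :=
  ⟨by rw [← mul_assoc, hS.1], by rw [mul_assoc, hT.2]⟩

lemma isClosed_corner (K : Submodule 𝕜 H) : IsClosed (corner K : Set (H →L[𝕜] H)) :=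
  (isClosed_eq (continuous_const.mul continuous_id) continuous_id).inter
    (isClosed_eq (continuous_id.mul continuous_const) continuous_id)

end Corner

section CoordinateProjection

variable {𝕜 H ι : Type*} [RCLike 𝕜] [NormedAddCommGroup H] [InnerProductSpace 𝕜 H]
  [CompleteSpace H] {e : ι → H} {S T : H →L[𝕜] H} {M N M' N' : Set ι}

/-- The orthogonal projection onto the closed span of `e i`, `i ∈ M`. -/
noncomputable def coordProj (𝕜 : Type*) {H ι : Type*} [RCLike 𝕜] [NormedAddCommGroup H]
    [InnerProductSpace 𝕜 H] [CompleteSpace H] (e : ι → H) (M : Set ι) : H →L[𝕜] H :=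
  proj (Submodule.span 𝕜 (e '' M))

lemma coordProj_univ (e : ι → H) :
    coordProj 𝕜 e Set.univ = proj (Submodule.span 𝕜 (Set.range e)) := by
  rw [coordProj, Set.image_univ]

lemma isIdempotentElem_coordProj (e : ι → H) (M : Set ι) : IsIdempotentElem (coordProj 𝕜 e M) :=
  isIdempotentElem_proj _

lemma coordProj_mem_corner (e : ι → H) (M : Set ι) :
    coordProj 𝕜 e M ∈ corner (Submodule.span 𝕜 (Set.range e)) :=
  ⟨proj_mul_proj_of_ge (Submodule.span_mono (Set.image_subset_range e M)),
    proj_mul_proj_of_le (Submodule.span_mono (Set.image_subset_range e M))⟩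

lemma coordProj_mul_mul_mem_corner (hT : T ∈ corner (Submodule.span 𝕜 (Set.range e)))
    (M N : Set ι) :
    coordProj 𝕜 e M * T * coordProj 𝕜 e N ∈ corner (Submodule.span 𝕜 (Set.range e)) :=
  mul_mem_corner (mul_mem_corner (coordProj_mem_corner e M) hT) (coordProj_mem_corner e N)

lemma coordProj_apply (he : Orthonormal 𝕜 e) (M : Set ι) (j : ι) :
    coordProj 𝕜 e M (e j) = M.indicator e j := by
  by_cases hj : j ∈ M
  · rw [Set.indicator_of_mem hj]
    exact proj_eq_self (Submodule.subset_span ⟨j, hj, rfl⟩)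
  · rw [Set.indicator_of_notMem hj]
    refine proj_eq_zero_iff.2 (mem_orthogonal_span_iff.2 ?_)
    rintro _ ⟨i, hi, rfl⟩
    exact he.2 fun h => hj (h ▸ hi)

lemma inner_coordProj (he : Orthonormal 𝕜 e) (M : Set ι) (i : ι) (x : H) :
    inner 𝕜 (e i) (coordProj 𝕜 e M x) = M.indicator (fun i => inner 𝕜 (e i) x) i := by
  rw [coordProj, ← inner_proj_left, ← coordProj, coordProj_apply he]
  by_cases hi : i ∈ M
  · rw [Set.indicator_of_mem hi, Set.indicator_of_mem hi]
  · rw [Set.indicator_of_notMem hi, Set.indicator_of_notMem hi, inner_zero_left]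

lemma apply_eq_zero_of_forall_inner_eq_zero
    (hT : T ∈ corner (Submodule.span 𝕜 (Set.range e))) {x : H}
    (h : ∀ i, inner 𝕜 (e i) (T x) = 0) : T x = 0 := by
  rw [← hT.1]
  exact proj_eq_zero_iff.2 (mem_orthogonal_span_iff.2 (Set.forall_mem_range.2 h))

lemma ext_apply (hS : S ∈ corner (Submodule.span 𝕜 (Set.range e)))
    (hT : T ∈ corner (Submodule.span 𝕜 (Set.range e))) (h : ∀ j, S (e j) = T (e j)) : S = T := by
  have hker : (Submodule.span 𝕜 (Set.range e)).topologicalClosure ≤ (S - T).ker := by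
    refine Submodule.topologicalClosure_minimal _ (Submodule.span_le.2 ?_) (S - T).isClosed_ker
    rintro _ ⟨j, rfl⟩
    exact sub_eq_zero.2 (h j)
  ext x
  rw [← hS.2, ← hT.2]
  exact sub_eq_zero.1 (hker (proj_mem_topologicalClosure _ x))

lemma ext_inner_apply (hS : S ∈ corner (Submodule.span 𝕜 (Set.range e)))
    (hT : T ∈ corner (Submodule.span 𝕜 (Set.range e)))
    (h : ∀ i j, inner 𝕜 (e i) (S (e j)) = inner 𝕜 (e i) (T (e j))) : S = T := by
  refine ext_apply hS hT fun j => sub_eq_zero.1 ?_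
  refine apply_eq_zero_of_forall_inner_eq_zero (sub_mem hS hT) fun i => ?_
  rw [sub_apply, inner_sub_right, h, sub_self]

lemma inner_mul_coordProj_apply (he : Orthonormal 𝕜 e) (T : H →L[𝕜] H) (M : Set ι) (x : H)
    (j : ι) : inner 𝕜 x ((T * coordProj 𝕜 e M) (e j)) =
      M.indicator (fun j => inner 𝕜 x (T (e j))) j := by
  rw [mul_apply_eq_comp, coordProj_apply he]
  by_cases hj : j ∈ M
  · rw [Set.indicator_of_mem hj, Set.indicator_of_mem hj]
  · rw [Set.indicator_of_notMem hj, Set.indicator_of_notMem hj, map_zero, inner_zero_right]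

lemma inner_coordProj_mul_mul_apply (he : Orthonormal 𝕜 e) (T : H →L[𝕜] H) (M N : Set ι)
    (i j : ι) : inner 𝕜 (e i) ((coordProj 𝕜 e M * T * coordProj 𝕜 e N) (e j)) =
      M.indicator (fun i => N.indicator (fun j => inner 𝕜 (e i) (T (e j))) j) i := by
  rw [mul_assoc, mul_apply_eq_comp, inner_coordProj he]
  simp only [inner_mul_coordProj_apply he]

lemma coordProj_mul_coordProj (he : Orthonormal 𝕜 e) (M N : Set ι) :
    coordProj 𝕜 e M * coordProj 𝕜 e N = coordProj 𝕜 e (M ∩ N) := by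
  refine ext_inner_apply (mul_mem_corner (coordProj_mem_corner e M) (coordProj_mem_corner e N))
    (coordProj_mem_corner e _) fun i j => ?_
  rw [mul_apply_eq_comp, inner_coordProj he, inner_coordProj he,
    ← Set.indicator_indicator]
  simp only [inner_coordProj he, Set.indicator]

lemma coordProj_union (he : Orthonormal 𝕜 e) (h : Disjoint M N) :
    coordProj 𝕜 e (M ∪ N) = coordProj 𝕜 e M + coordProj 𝕜 e N := by
  refine ext_inner_apply (coordProj_mem_corner e _)
    (add_mem (coordProj_mem_corner e M) (coordProj_mem_corner e N)) fun i j => ?_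
  rw [add_apply, inner_add_right, inner_coordProj he, inner_coordProj he, inner_coordProj he,
    Set.indicator_union_of_disjoint h]

lemma coordProj_compl (he : Orthonormal 𝕜 e) (M : Set ι) :
    coordProj 𝕜 e Mᶜ = proj (Submodule.span 𝕜 (Set.range e)) - coordProj 𝕜 e M := by
  rw [← coordProj_univ, ← Set.union_compl_self M, coordProj_union he disjoint_compl_right,
    add_sub_cancel_left]

lemma norm_coordProj_mul_mul_mono (he : Orthonormal 𝕜 e) (T : H →L[𝕜] H) (hM : M ⊆ M')
    (hN : N ⊆ N') : ‖coordProj 𝕜 e M * T * coordProj 𝕜 e N‖ ≤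
      ‖coordProj 𝕜 e M' * T * coordProj 𝕜 e N'‖ := by
  have hfactor : coordProj 𝕜 e M * T * coordProj 𝕜 e N =
      coordProj 𝕜 e M * (coordProj 𝕜 e M' * T * coordProj 𝕜 e N') * coordProj 𝕜 e N := by
    conv_lhs => rw [← Set.inter_eq_left.2 hM, ← coordProj_mul_coordProj he,
      ← Set.inter_eq_right.2 hN, ← coordProj_mul_coordProj he]
    simp only [mul_assoc]
  rw [hfactor]
  refine (norm_mul₃_le).trans ?_
  calc _ ≤ 1 * ‖coordProj 𝕜 e M' * T * coordProj 𝕜 e N'‖ * 1 := by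
        gcongr <;> exact norm_proj_le_one _
    _ = _ := by rw [one_mul, mul_one]

theorem exists_weightedShift (he : Orthonormal 𝕜 e) {c : ι → 𝕜} {C : ℝ} (hC : 0 ≤ C)
    (hc : ∀ i, ‖c i‖ ≤ C) {σ : ι → ι} (hσ : Set.InjOn σ {i | c i ≠ 0}) :
    ∃ u ∈ corner (Submodule.span 𝕜 (Set.range e)), (∀ j, u (e j) = c j • e (σ j)) ∧ ‖u‖ ≤ C := by
  let U : ι → H →L[𝕜] H := fun i => c i • InnerProductSpace.rankOne 𝕜 (e (σ i)) (e i)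
  have hU : ∀ i x, U i x = c i • inner 𝕜 (e i) x • e (σ i) := fun i x => rfl
  have horth : Pairwise fun i j => ∀ x y, inner 𝕜 (U i x) (U j y) = 0 := by
    intro i j hij x y
    rw [hU, hU]
    by_cases hi : c i = 0
    · rw [hi, zero_smul, inner_zero_left]
    by_cases hj : c j = 0
    · rw [hj, zero_smul, inner_zero_right]
    simp only [inner_smul_left, inner_smul_right, he.2 fun h => hij (hσ hi hj h), mul_zero]
  have hbound : ∀ v, ∀ s : Finset ι, ∑ i ∈ s, ‖U i v‖ ^ 2 ≤ (C * ‖v‖) ^ 2 := by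
    intro v s
    calc ∑ i ∈ s, ‖U i v‖ ^ 2 ≤ ∑ i ∈ s, C ^ 2 * ‖inner 𝕜 (e i) v‖ ^ 2 := by
          refine Finset.sum_le_sum fun i _ => ?_
          rw [hU, norm_smul, norm_smul, he.1, mul_one, mul_pow]
          gcongr
          exact hc i
      _ ≤ (C * ‖v‖) ^ 2 := by
          rw [← Finset.mul_sum, mul_pow]
          gcongr
          exact he.sum_inner_products_le v
  obtain ⟨u, hu, hnorm⟩ := exists_hasSum_of_orthogonal horth hC hbound
  have hspan : ∀ i, e i ∈ Submodule.span 𝕜 (Set.range e) := fun i => Submodule.subset_span ⟨i, rfl⟩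
  refine ⟨u, ⟨?_, ?_⟩, fun j => (hu (e j)).unique ?_, hnorm⟩
  · ext x
    refine ((hu x).mapL (proj _)).unique ?_
    simpa only [hU, map_smul, proj_eq_self (hspan _)] using hu x
  · ext x
    refine (hu (proj _ x)).unique ?_
    simpa only [hU, ← inner_proj_left, proj_eq_self (hspan _)] using hu x
  · have hsingle : U j (e j) = c j • e (σ j) := by
      rw [hU, inner_self_eq_norm_sq_to_K, he.1]
      simp
    rw [← hsingle]
    exact hasSum_single j fun i hij => by rw [hU, he.2 hij, zero_smul, smul_zero]

lemma exists_partialShift (he : Orthonormal 𝕜 e) {σ : ι → ι} {C : Set ι} (hσ : Set.InjOn σ C) :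
    ∃ u ∈ corner (Submodule.span 𝕜 (Set.range e)),
      ∀ j, u (e j) = C.indicator (fun j => e (σ j)) j := by
  classical
  obtain ⟨u, hu_corner, hu, -⟩ := exists_weightedShift he (c := C.indicator 1) zero_le_one
    (fun i => by rw [Set.indicator_apply]; split_ifs <;> simp)
    (hσ.mono fun i hi => Set.mem_of_indicator_ne_zero hi)
  refine ⟨u, hu_corner, fun j => ?_⟩
  rw [hu, Set.indicator_apply, Set.indicator_apply]
  split_ifs <;> simp

lemma exists_partialShift_inverse (he : Orthonormal 𝕜 e) {σ : ι → ι} {C : Set ι}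
    (hσ : Set.InjOn σ C) :
    ∃ v ∈ corner (Submodule.span 𝕜 (Set.range e)),
      (∀ j ∈ C, v (e (σ j)) = e j) ∧ ∀ k ∉ σ '' C, v (e k) = 0 := by
  rcases isEmpty_or_nonempty ι with hι | hι
  · exact ⟨0, zero_mem _, hι.elim, hι.elim⟩
  have hτ : Set.LeftInvOn (Function.invFunOn σ C) σ C := hσ.leftInvOn_invFunOn
  obtain ⟨v, hv_corner, hv⟩ := exists_partialShift he (σ := Function.invFunOn σ C) (C := σ '' C)
    (by rintro _ ⟨i, hi, rfl⟩ _ ⟨j, hj, rfl⟩ hij; rw [hτ hi, hτ hj] at hij; rw [hij])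
  refine ⟨v, hv_corner, fun j hj => ?_, fun k hk => ?_⟩
  · rw [hv, Set.indicator_of_mem (Set.mem_image_of_mem σ hj), hτ hj]
  · rw [hv, Set.indicator_of_notMem hk]

lemma coordProj_mul_eq_self (he : Orthonormal 𝕜 e)
    (hT : T ∈ corner (Submodule.span 𝕜 (Set.range e))) {M : Set ι}
    (h : ∀ i j, inner 𝕜 (e i) (T (e j)) ≠ 0 → i ∈ M) : coordProj 𝕜 e M * T = T := by
  classical
  refine ext_inner_apply (mul_mem_corner (coordProj_mem_corner e M) hT) hT fun i j => ?_
  rw [mul_apply_eq_comp, inner_coordProj he, Set.indicator_apply_eq_self]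
  exact fun hi => by_contra fun hij => hi (h i j hij)

lemma coordProj_mul_eq_zero (he : Orthonormal 𝕜 e)
    (hT : T ∈ corner (Submodule.span 𝕜 (Set.range e))) {M : Set ι}
    (h : ∀ i j, inner 𝕜 (e i) (T (e j)) ≠ 0 → i ∉ M) : coordProj 𝕜 e M * T = 0 := by
  classical
  refine ext_inner_apply (mul_mem_corner (coordProj_mem_corner e M) hT) (zero_mem _) fun i j => ?_
  rw [mul_apply_eq_comp, inner_coordProj he, zero_apply, inner_zero_right,
    Set.indicator_apply_eq_zero]
  exact fun hi => by_contra fun hij => h i j hij hi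

lemma mul_coordProj_eq_self (he : Orthonormal 𝕜 e)
    (hT : T ∈ corner (Submodule.span 𝕜 (Set.range e))) {M : Set ι}
    (h : ∀ j ∉ M, T (e j) = 0) : T * coordProj 𝕜 e M = T := by
  classical
  refine ext_apply (mul_mem_corner hT (coordProj_mem_corner e M)) hT fun j => ?_
  rw [mul_apply_eq_comp, coordProj_apply he, Set.indicator_apply]
  split_ifs with hj
  · rfl
  · rw [map_zero, h j hj]

lemma mul_coordProj_eq_zero (he : Orthonormal 𝕜 e)
    (hT : T ∈ corner (Submodule.span 𝕜 (Set.range e))) {M : Set ι}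
    (h : ∀ j ∈ M, T (e j) = 0) : T * coordProj 𝕜 e M = 0 := by
  classical
  refine ext_apply (mul_mem_corner hT (coordProj_mem_corner e M)) (zero_mem _) fun j => ?_
  rw [mul_apply_eq_comp, coordProj_apply he, Set.indicator_apply, zero_apply]
  split_ifs with hj
  · exact h j hj
  · exact map_zero T

end CoordinateProjection

/-! ### The atomic part of a nest -/

section AtomicVector

variable {𝕜 H ι : Type*} [RCLike 𝕜] [NormedAddCommGroup H] [InnerProductSpace 𝕜 H]
  {𝒩 : Set (Submodule 𝕜 H)} {e : ι → H} {T : H →L[𝕜] H} {x y z : H}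

/-- A vector lying in an atom of `𝒩`: every subspace in `𝒩` contains it or is orthogonal to it. -/
def IsAtomicVector (𝒩 : Set (Submodule 𝕜 H)) (x : H) : Prop := ∀ N ∈ 𝒩, x ∈ N ∨ x ∈ Nᗮ

/-- The total preorder induced by a nest: the smallest member of `𝒩` that contains `y` also
contains `x`. -/
def Precedes (𝒩 : Set (Submodule 𝕜 H)) (x y : H) : Prop := ∀ N ∈ 𝒩, y ∈ N → x ∈ N

lemma Precedes.trans (hxy : Precedes 𝒩 x y) (hyz : Precedes 𝒩 y z) : Precedes 𝒩 x z :=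
  fun N hN hz => hxy N hN (hyz N hN hz)

lemma Precedes.total (hchain : IsChain (· ≤ ·) 𝒩) (x y : H) :
    Precedes 𝒩 x y ∨ Precedes 𝒩 y x := by
  by_contra! h
  simp only [Precedes, not_forall] at h
  obtain ⟨⟨M, hM, hyM, hxM⟩, N, hN, hxN, hyN⟩ := h
  rcases hchain.total hM hN with hMN | hNM
  · exact hyN (hMN hyM)
  · exact hxM (hNM hxN)

lemma precedes_of_inner_ne_zero (hx : IsAtomicVector 𝒩 x) (hT : T ∈ nestAlgebra 𝒩)
    (h : inner 𝕜 x (T y) ≠ 0) : Precedes 𝒩 x y := fun N hN hy =>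
  (hx N hN).resolve_right fun hx' => h (Submodule.inner_left_of_mem_orthogonal (hT N hN y hy) hx')

variable [CompleteSpace H]

lemma IsAtomicVector.proj_eq_or (hx : IsAtomicVector 𝒩 x) {N : Submodule 𝕜 H} (hN : N ∈ 𝒩) :
    proj N x = x ∨ proj N x = 0 :=
  (hx N hN).imp proj_eq_self proj_eq_zero_iff.2

lemma Reduces.span_of_isAtomicVector {X : Set H} (hX : ∀ x ∈ X, IsAtomicVector 𝒩 x) :
    Reduces 𝒩 (Submodule.span 𝕜 X) := by
  refine Reduces.span fun N hN x hx => ?_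
  rcases (hX x hx).proj_eq_or hN with h | h <;> rw [h]
  · exact Submodule.subset_span hx
  · exact Submodule.zero_mem _

lemma coordProj_mem_nestAlgebra (hclosed : ∀ N ∈ 𝒩, IsClosed (N : Set H))
    (ha : ∀ i, IsAtomicVector 𝒩 (e i)) (M : Set ι) : coordProj 𝕜 e M ∈ nestAlgebra 𝒩 := by
  refine (Reduces.span_of_isAtomicVector ?_).proj_mem_nestAlgebra hclosed
  rintro _ ⟨i, -, rfl⟩
  exact ha i

theorem mem_nestAlgebra_of_precedes (hclosed : ∀ N ∈ 𝒩, IsClosed (N : Set H))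
    (he : Orthonormal 𝕜 e) (ha : ∀ i, IsAtomicVector 𝒩 (e i))
    (hT : T ∈ corner (Submodule.span 𝕜 (Set.range e)))
    (h : ∀ i j, inner 𝕜 (e i) (T (e j)) ≠ 0 → Precedes 𝒩 (e i) (e j)) : T ∈ nestAlgebra 𝒩 := by
  intro N hN x hx
  have hK : Reduces 𝒩 (Submodule.span 𝕜 (Set.range e)) :=
    Reduces.span_of_isAtomicVector (Set.forall_mem_range.2 ha)
  have hcomm : proj (Submodule.span 𝕜 (Set.range e)) * proj N =
      proj N * proj (Submodule.span 𝕜 (Set.range e)) := ContinuousLinearMap.ext (hK.proj_comm hN)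
  have hright : T * proj N ∈ corner (Submodule.span 𝕜 (Set.range e)) :=
    ⟨by rw [← mul_assoc, hT.1], by rw [mul_assoc, ← hcomm, ← mul_assoc, hT.2]⟩
  have hboth : proj N * (T * proj N) ∈ corner (Submodule.span 𝕜 (Set.range e)) :=
    ⟨by rw [← mul_assoc, hcomm, mul_assoc, hright.1], by rw [mul_assoc, hright.2]⟩
  have hinv : proj N * (T * proj N) = T * proj N := by
    refine ext_inner_apply hboth hright fun i j => ?_
    rw [mul_apply_eq_comp, ← inner_proj_left, mul_apply_eq_comp]
    rcases ha j N hN with hj | hj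
    · rw [proj_eq_self hj]
      rcases ha i N hN with hi | hi
      · rw [proj_eq_self hi]
      · rw [proj_eq_zero_iff.2 hi, inner_zero_left, eq_comm]
        by_contra hne
        exact he.ne_zero i (inner_self_eq_zero.1 (hi _ (h i j hne N hN hj)))
    · rw [proj_eq_zero_iff.2 hj, map_zero, inner_zero_right, inner_zero_right]
  have := DFunLike.congr_fun hinv x
  simp only [mul_apply_eq_comp, proj_eq_self hx] at this
  exact (proj_eq_self_iff (hclosed N hN)).1 this

end AtomicVector

namespace idempotentHull

variable {𝕜 H ι : Type*} [RCLike 𝕜] [NormedAddCommGroup H] [InnerProductSpace 𝕜 H]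
  [CompleteSpace H] {𝒩 : Set (Submodule 𝕜 H)} {e : ι → H} {T D X : H →L[𝕜] H}

lemma coordProj_mem (hclosed : ∀ N ∈ 𝒩, IsClosed (N : Set H))
    (ha : ∀ i, IsAtomicVector 𝒩 (e i)) (M : Set ι) :
    coordProj 𝕜 e M ∈ idempotentHull (nestAlgebra 𝒩) :=
  mem_of_isIdempotentElem (coordProj_mem_nestAlgebra hclosed ha M) (isIdempotentElem_coordProj e M)

-- The eigenvalues lie in a compact disc, so `D` is a norm limit of finite linear combinations of
-- coordinate projections.
theorem diagonal_mem (hclosed : ∀ N ∈ 𝒩, IsClosed (N : Set H)) (he : Orthonormal 𝕜 e)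
    (ha : ∀ i, IsAtomicVector 𝒩 (e i)) (hD : D ∈ corner (Submodule.span 𝕜 (Set.range e)))
    {c : ι → 𝕜} (h : ∀ j, D (e j) = c j • e j) : D ∈ idempotentHull (nestAlgebra 𝒩) := by
  classical
  refine mem_of_forall_norm_sub_le fun ε hε => ?_
  have hc : ∀ j, c j ∈ Metric.closedBall (0 : 𝕜) ‖D‖ := by
    intro j
    simpa [h, norm_smul, he.1] using D.le_opNorm (e j)
  obtain ⟨t, ht, hcover⟩ := Metric.totallyBounded_iff.1
    (isCompact_closedBall (0 : 𝕜) ‖D‖).totallyBounded ε hε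
  have hnear : ∀ j, ∃ z ∈ t, dist (c j) z < ε := fun j => by simpa using hcover (hc j)
  choose f hft hf using hnear
  let D' : H →L[𝕜] H := ∑ z ∈ ht.toFinset, z • coordProj 𝕜 e {j | f j = z}
  have hD' : ∀ j, D' (e j) = f j • e j := by
    intro j
    simp only [D', sum_apply, smul_apply, coordProj_apply he]
    rw [Finset.sum_eq_single_of_mem (f j) (ht.mem_toFinset.2 (hft j))]
    · rw [Set.indicator_of_mem (Set.mem_ofPred_eq ▸ rfl)]
    · intro z _ hz
      rw [Set.indicator_of_notMem (fun hj => hz hj.symm), smul_zero]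
  have hD'_corner : D' ∈ corner (Submodule.span 𝕜 (Set.range e)) :=
    sum_mem fun z _ => Submodule.smul_mem _ z (coordProj_mem_corner e _)
  refine ⟨D', sum_mem fun z _ => Subalgebra.smul_mem _ (coordProj_mem hclosed ha _) z, ?_⟩
  obtain ⟨u, hu_corner, hu, hnorm⟩ := exists_weightedShift he (c := fun j => c j - f j) hε.le
    (fun j => by rw [← dist_eq_norm]; exact (hf j).le) (Set.injOn_id _)
  suffices D - D' = u by rwa [this]
  refine ext_apply (sub_mem hD hD'_corner) hu_corner fun j => ?_
  rw [sub_apply, h, hD', hu, sub_smul, id]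

-- With `u` the partial shift `e j ↦ e (σ j)` and `v` its inverse, `X = (X v) u` factors through
-- the coordinates outside `J`.
theorem mem_of_shift (hclosed : ∀ N ∈ 𝒩, IsClosed (N : Set H)) (he : Orthonormal 𝕜 e)
    (ha : ∀ i, IsAtomicVector 𝒩 (e i)) (hX : X ∈ corner (Submodule.span 𝕜 (Set.range e)))
    (J : Set ι) {σ : ι → ι} (hσ : Set.InjOn σ {j | X (e j) ≠ 0})
    (h : ∀ i j, inner 𝕜 (e i) (X (e j)) ≠ 0 → i ∈ J ∧ j ∈ J ∧ σ j ∉ J ∧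
      Precedes 𝒩 (e (σ j)) (e j) ∧ Precedes 𝒩 (e i) (e (σ j))) :
    X ∈ idempotentHull (nestAlgebra 𝒩) := by
  set C : Set ι := {j | X (e j) ≠ 0}
  have hC : ∀ j ∈ C, j ∈ J ∧ σ j ∉ J ∧ Precedes 𝒩 (e (σ j)) (e j) := by
    intro j hj
    by_contra hne
    refine hj (apply_eq_zero_of_forall_inner_eq_zero hX fun i => by_contra fun hij => ?_)
    exact hne ⟨(h i j hij).2.1, (h i j hij).2.2.1, (h i j hij).2.2.2.1⟩
  obtain ⟨u, hu_corner, hu⟩ := exists_partialShift he hσ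
  obtain ⟨v, hv_corner, hvσ, hv⟩ := exists_partialShift_inverse he hσ
  have hu_mem {i j : ι} (hij : inner 𝕜 (e i) (u (e j)) ≠ 0) : j ∈ C ∧ i = σ j := by
    have hj : j ∈ C := by_contra fun hj => hij (by rw [hu, Set.indicator_of_notMem hj,
      inner_zero_right])
    rw [hu, Set.indicator_of_mem hj] at hij
    exact ⟨hj, by_contra fun hne => hij (he.2 hne)⟩
  have hXvu : X * v * u = X := by
    refine ext_apply (mul_mem_corner (mul_mem_corner hX hv_corner) hu_corner) hX fun j => ?_
    by_cases hj : j ∈ C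
    · rw [mul_apply_eq_comp, hu, Set.indicator_of_mem hj, mul_apply_eq_comp, hvσ j hj]
    · rw [mul_apply_eq_comp, hu, Set.indicator_of_notMem hj, map_zero, not_not.1 hj]
  have hXv : X * v ∈ nestAlgebra 𝒩 := by
    refine mem_nestAlgebra_of_precedes hclosed he ha (mul_mem_corner hX hv_corner) fun i k hik => ?_
    obtain ⟨j, hj, rfl⟩ : k ∈ σ '' C := by_contra fun hk => hik (by simp [hv k hk])
    rw [mul_apply_eq_comp, hvσ j hj] at hik
    exact (h i j hik).2.2.2.2
  have hu_nest : u ∈ nestAlgebra 𝒩 := mem_nestAlgebra_of_precedes hclosed he ha hu_corner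
    fun i j hij => by obtain ⟨hj, rfl⟩ := hu_mem hij; exact (hC j hj).2.2
  have hvJ : v * coordProj 𝕜 e Jᶜ = v := mul_coordProj_eq_self he hv_corner fun k hk =>
    hv k (by rintro ⟨j, hj, rfl⟩; exact hk (hC j hj).2.1)
  rw [← hXvu]
  refine mul_mem_of_factor (coordProj_mem_nestAlgebra hclosed ha Jᶜ)
    (isIdempotentElem_coordProj e _) hXv hu_nest ?_ (by rw [mul_assoc, hvJ]) ?_ ?_
  · rw [← mul_assoc, coordProj_mul_eq_zero (M := Jᶜ) he hX fun i j hij =>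
      not_not.2 (h i j hij).1, zero_mul]
  · refine coordProj_mul_eq_self he hu_corner fun i j hij => ?_
    obtain ⟨hj, rfl⟩ := hu_mem hij
    exact (hC j hj).2.1
  · refine mul_coordProj_eq_zero he hu_corner fun j hj => ?_
    rw [hu, Set.indicator_of_notMem fun hjC => hj (hC j hjC).1]

end idempotentHull

section BlockEnumeration

variable {ι : Type*} {r : ι → ι → Prop} {κ : ι → ℕ}

/-- `pos` numbers each fibre of `κ` consecutively from `0`, in an order compatible with the total
preorder `r`. -/
structure IsBlockEnumeration (r : ι → ι → Prop) (κ pos : ι → ℕ) : Prop where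
  eq_of_eq {i j : ι} : κ i = κ j → pos i = pos j → i = j
  rel_of_lt {i j : ι} : κ i = κ j → pos i < pos j → r i j
  exists_eq {j : ι} {m : ℕ} : m < pos j → ∃ i, κ i = κ j ∧ pos i = m

lemma exists_enumeration [Std.Total r] [IsTrans ι r] (F : Finset ι) :
    ∃ pos : ι → ℕ, Set.InjOn pos F ∧ (∀ i ∈ F, ∀ j ∈ F, pos i < pos j → r i j) ∧
      ∀ j ∈ F, ∀ m < pos j, ∃ i ∈ F, pos i = m := by
  classical
  set l : List ι := F.toList.insertionSort r
  have hperm : l.Perm F.toList := List.perm_insertionSort r F.toList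
  have hmem : ∀ {i}, i ∈ l ↔ i ∈ F := fun {i} => hperm.mem_iff.trans Finset.mem_toList
  have hnodup : l.Nodup := hperm.nodup_iff.2 F.nodup_toList
  refine ⟨l.idxOf, fun i hi j _ hij => (List.idxOf_inj (hmem.2 hi)).1 hij,
    fun i hi j hj hij => ?_, fun j hj m hm => ?_⟩
  · have := List.pairwise_iff_getElem.1 (List.pairwise_insertionSort r F.toList) (l.idxOf i)
      (l.idxOf j) (List.idxOf_lt_length_iff.2 (hmem.2 hi)) (List.idxOf_lt_length_iff.2 (hmem.2 hj))
      hij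
    simpa only [l, List.getElem_idxOf] using this
  · have hml : m < l.length := hm.trans (List.idxOf_lt_length_iff.2 (hmem.2 hj))
    exact ⟨l[m], hmem.1 (List.getElem_mem hml), hnodup.idxOf_getElem m hml⟩

lemma exists_isBlockEnumeration [Std.Total r] [IsTrans ι r] (hfin : ∀ n, {i | κ i = n}.Finite) :
    ∃ pos, IsBlockEnumeration r κ pos := by
  choose pos hinj hrel hexists using fun n => exists_enumeration (r := r) (hfin n).toFinset
  simp only [Set.Finite.coe_toFinset, Set.Finite.mem_toFinset, Set.mem_ofPred_eq]
    at hinj hrel hexists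
  refine ⟨fun i => pos (κ i) i, fun {i j} h hij => ?_, fun {i j} h hij => ?_, fun {j m} hm => ?_⟩
  · exact hinj (κ j) h rfl (by simpa only [h] using hij)
  · exact hrel (κ j) i h j rfl (by simpa only [h] using hij)
  · obtain ⟨i, hi, him⟩ := hexists (κ j) j rfl m hm
    exact ⟨i, hi, by rwa [hi]⟩

end BlockEnumeration

namespace idempotentHull

variable {𝕜 H ι : Type*} [RCLike 𝕜] [NormedAddCommGroup H] [InnerProductSpace 𝕜 H]
  [CompleteSpace H] {𝒩 : Set (Submodule 𝕜 H)} {e : ι → H} {T X : H →L[𝕜] H} {κ pos : ι → ℕ}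

lemma mem_of_block_shift (hclosed : ∀ N ∈ 𝒩, IsClosed (N : Set H)) (he : Orthonormal 𝕜 e)
    (ha : ∀ i, IsAtomicVector 𝒩 (e i)) (hX : X ∈ corner (Submodule.span 𝕜 (Set.range e)))
    (hpos : IsBlockEnumeration (fun i j => Precedes 𝒩 (e i) (e j)) κ pos) (q : ℕ) {d : ℤ}
    (hd : Odd d) (h : ∀ i j, inner 𝕜 (e i) (X (e j)) ≠ 0 → pos i % 2 = q ∧ pos j % 2 = q ∧
      ∃ k, κ k = κ j ∧ (pos k : ℤ) = pos j + d ∧ Precedes 𝒩 (e k) (e j) ∧ Precedes 𝒩 (e i) (e k)) :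
    X ∈ idempotentHull (nestAlgebra 𝒩) := by
  have hσ : ∀ j, ∃ k, X (e j) ≠ 0 → κ k = κ j ∧ (pos k : ℤ) = pos j + d := by
    intro j
    by_cases hj : X (e j) = 0
    · exact ⟨j, fun h => absurd hj h⟩
    · obtain ⟨i, hij⟩ : ∃ i, inner 𝕜 (e i) (X (e j)) ≠ 0 := by
        by_contra! hzero
        exact hj (apply_eq_zero_of_forall_inner_eq_zero hX hzero)
      obtain ⟨-, -, k, hk, hkj, -⟩ := h i j hij
      exact ⟨k, fun _ => ⟨hk, hkj⟩⟩
  choose σ hσ using hσ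
  refine mem_of_shift hclosed he ha hX {i | pos i % 2 = q} (σ := σ) ?_ fun i j hij => ?_
  · intro j hj j' hj' hjj'
    obtain ⟨hκ, hp⟩ := hσ j hj
    obtain ⟨hκ', hp'⟩ := hσ j' hj'
    rw [hjj'] at hκ hp
    exact hpos.eq_of_eq (hκ.symm.trans hκ') (by omega)
  · obtain ⟨hi, hj, k, hk, hkj, hrel⟩ := h i j hij
    obtain ⟨hσκ, hσp⟩ := hσ j fun h0 => hij (by rw [h0, inner_zero_right])
    obtain rfl : k = σ j := hpos.eq_of_eq (hk.trans hσκ.symm) (by omega)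
    obtain ⟨c, rfl⟩ := hd
    exact ⟨hi, hj, by simp only [Set.mem_ofPred_eq]; omega, hrel⟩

-- A column is shifted one step forward if its successor is equivalent to it, and one step back
-- otherwise.
lemma mem_of_parity_of_offDiagonal (hclosed : ∀ N ∈ 𝒩, IsClosed (N : Set H))
    (he : Orthonormal 𝕜 e) (ha : ∀ i, IsAtomicVector 𝒩 (e i))
    (hT : T ∈ corner (Submodule.span 𝕜 (Set.range e)))
    (hpos : IsBlockEnumeration (fun i j => Precedes 𝒩 (e i) (e j)) κ pos) (q : ℕ)
    (h : ∀ i j, inner 𝕜 (e i) (T (e j)) ≠ 0 → i ≠ j ∧ κ i = κ j ∧ pos i % 2 = q ∧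
      pos j % 2 = q ∧ Precedes 𝒩 (e i) (e j)) :
    T ∈ idempotentHull (nestAlgebra 𝒩) := by
  let C : Set ι := {j | ∃ k, κ k = κ j ∧ pos k = pos j + 1 ∧ Precedes 𝒩 (e k) (e j)}
  have hforward : T * coordProj 𝕜 e C ∈ idempotentHull (nestAlgebra 𝒩) := by
    refine mem_of_block_shift hclosed he ha (mul_mem_corner hT (coordProj_mem_corner e C)) hpos q
      odd_one fun i j hij => ?_
    obtain ⟨⟨k, hk, hkj, hrel⟩, hij⟩ := Set.indicator_apply_ne_zero.1
      (inner_mul_coordProj_apply he T C (e i) j ▸ hij)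
    obtain ⟨-, -, hi, hj, hprec⟩ := h i j hij
    exact ⟨hi, hj, k, hk, by omega, hrel, hprec.trans (hpos.rel_of_lt hk.symm (by omega))⟩
  have hback : T * coordProj 𝕜 e Cᶜ ∈ idempotentHull (nestAlgebra 𝒩) := by
    refine mem_of_block_shift hclosed he ha (mul_mem_corner hT (coordProj_mem_corner e Cᶜ)) hpos q
      (d := -1) (by decide) fun i j hij => ?_
    obtain ⟨hjC, hij⟩ := Set.indicator_apply_ne_zero.1
      (inner_mul_coordProj_apply he T Cᶜ (e i) j ▸ hij)
    obtain ⟨hne, hκ, hi, hj, hprec⟩ := h i j hij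
    have hlt : pos i < pos j := by
      refine lt_of_not_ge fun hge => ?_
      have hlt : pos j < pos i := lt_of_le_of_ne hge fun heq => hne (hpos.eq_of_eq hκ heq.symm)
      obtain ⟨k, hk, hki⟩ := hpos.exists_eq (show pos j + 1 < pos i by omega)
      exact hjC ⟨k, hk.trans hκ, hki, (hpos.rel_of_lt hk (by omega)).trans hprec⟩
    obtain ⟨k, hk, hkj⟩ := hpos.exists_eq (show pos j - 1 < pos j by omega)
    exact ⟨hi, hj, k, hk, by omega, hpos.rel_of_lt hk (by omega),
      hpos.rel_of_lt (hκ.trans hk.symm) (by omega)⟩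
  have hsplit : T = T * coordProj 𝕜 e C + T * coordProj 𝕜 e Cᶜ := by
    rw [← mul_add, coordProj_compl he, add_sub_cancel, hT.2]
  rw [hsplit]
  exact add_mem hforward hback

theorem mem_of_parity (hclosed : ∀ N ∈ 𝒩, IsClosed (N : Set H)) (he : Orthonormal 𝕜 e)
    (ha : ∀ i, IsAtomicVector 𝒩 (e i)) (hT : T ∈ corner (Submodule.span 𝕜 (Set.range e)))
    (hpos : IsBlockEnumeration (fun i j => Precedes 𝒩 (e i) (e j)) κ pos) (q : ℕ)
    (h : ∀ i j, inner 𝕜 (e i) (T (e j)) ≠ 0 → κ i = κ j ∧ pos i % 2 = q ∧ pos j % 2 = q ∧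
      Precedes 𝒩 (e i) (e j)) :
    T ∈ idempotentHull (nestAlgebra 𝒩) := by
  have hbound (j : ι) : ‖inner 𝕜 (e j) (T (e j))‖ ≤ ‖T‖ := by
    simpa [he.1] using (norm_inner_le_norm (𝕜 := 𝕜) (e j) _).trans
      (by simpa [he.1] using T.le_opNorm (e j))
  obtain ⟨D, hD_corner, hD, -⟩ := exists_weightedShift he (norm_nonneg T) hbound (Set.injOn_id _)
  rw [← add_sub_cancel D T]
  refine add_mem (diagonal_mem hclosed he ha hD_corner hD) (mem_of_parity_of_offDiagonal hclosed
    he ha (sub_mem hT hD_corner) hpos q fun i j hij => ?_)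
  rw [sub_apply, inner_sub_right, hD, inner_smul_right, id] at hij
  rcases eq_or_ne i j with rfl | hne
  · simp [he.1, inner_self_eq_norm_sq_to_K] at hij
  · exact ⟨hne, h i j (by rwa [he.2 hne, mul_zero, sub_zero] at hij)⟩

lemma mem_of_coordProj_corners (hclosed : ∀ N ∈ 𝒩, IsClosed (N : Set H)) (he : Orthonormal 𝕜 e)
    (ha : ∀ i, IsAtomicVector 𝒩 (e i)) (hT : T ∈ nestAlgebra 𝒩)
    (hTK : T ∈ corner (Submodule.span 𝕜 (Set.range e))) (M : Set ι)
    (hM : coordProj 𝕜 e M * T * coordProj 𝕜 e M ∈ idempotentHull (nestAlgebra 𝒩))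
    (hMc : coordProj 𝕜 e Mᶜ * T * coordProj 𝕜 e Mᶜ ∈ idempotentHull (nestAlgebra 𝒩)) :
    T ∈ idempotentHull (nestAlgebra 𝒩) := by
  refine mem_of_diagonal_corners (coordProj_mem_nestAlgebra hclosed ha M)
    (isIdempotentElem_coordProj e M) hT hM ?_
  convert hMc using 1
  have hPT : coordProj 𝕜 e M * T * proj (Submodule.span 𝕜 (Set.range e)) = coordProj 𝕜 e M * T := by
    rw [mul_assoc, hTK.2]
  simp only [coordProj_compl he, sub_mul, mul_sub, one_mul, mul_one, hTK.1, hTK.2, hPT]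

theorem mem_of_blockDiagonal (hclosed : ∀ N ∈ 𝒩, IsClosed (N : Set H))
    (hchain : IsChain (· ≤ ·) 𝒩) (he : Orthonormal 𝕜 e) (ha : ∀ i, IsAtomicVector 𝒩 (e i))
    (hT : T ∈ nestAlgebra 𝒩) (hTK : T ∈ corner (Submodule.span 𝕜 (Set.range e)))
    (hfin : ∀ n, {i | κ i = n}.Finite) (h : ∀ i j, inner 𝕜 (e i) (T (e j)) ≠ 0 → κ i = κ j) :
    T ∈ idempotentHull (nestAlgebra 𝒩) := by
  have : Std.Total fun i j => Precedes 𝒩 (e i) (e j) := ⟨fun i j => Precedes.total hchain _ _⟩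
  have : IsTrans ι fun i j => Precedes 𝒩 (e i) (e j) := ⟨fun i j k => Precedes.trans⟩
  obtain ⟨pos, hpos⟩ :=
    exists_isBlockEnumeration (r := fun i j => Precedes 𝒩 (e i) (e j)) hfin
  have hparity (M : Set ι) (q : ℕ) (hM : ∀ i ∈ M, pos i % 2 = q) :
      coordProj 𝕜 e M * T * coordProj 𝕜 e M ∈ idempotentHull (nestAlgebra 𝒩) := by
    refine mem_of_parity hclosed he ha (coordProj_mul_mul_mem_corner hTK M M) hpos q
      fun i j hij => ?_
    rw [inner_coordProj_mul_mul_apply he] at hij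
    obtain ⟨hi, hij⟩ := Set.indicator_apply_ne_zero.1 hij
    obtain ⟨hj, hij⟩ := Set.indicator_apply_ne_zero.1 hij
    exact ⟨h i j hij, hM i hi, hM j hj, precedes_of_inner_ne_zero (ha i) hT hij⟩
  exact mem_of_coordProj_corners hclosed he ha hT hTK {i | pos i % 2 = 0}
    (hparity _ 0 fun i hi => hi) (hparity _ 1 fun i (hi : pos i % 2 ≠ 0) => by omega)

theorem mem_of_blockTridiagonal (hclosed : ∀ N ∈ 𝒩, IsClosed (N : Set H))
    (hchain : IsChain (· ≤ ·) 𝒩) (he : Orthonormal 𝕜 e) (ha : ∀ i, IsAtomicVector 𝒩 (e i))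
    (hT : T ∈ nestAlgebra 𝒩) (hTK : T ∈ corner (Submodule.span 𝕜 (Set.range e)))
    (hfin : ∀ n, {i | κ i = n}.Finite)
    (h : ∀ i j, inner 𝕜 (e i) (T (e j)) ≠ 0 → κ i ≤ κ j + 1 ∧ κ j ≤ κ i + 1) :
    T ∈ idempotentHull (nestAlgebra 𝒩) := by
  have hblock (M : Set ι) (q : ℕ) (hM : ∀ i ∈ M, κ i % 2 = q) :
      coordProj 𝕜 e M * T * coordProj 𝕜 e M ∈ idempotentHull (nestAlgebra 𝒩) := by
    have hP : coordProj 𝕜 e M ∈ nestAlgebra 𝒩 := coordProj_mem_nestAlgebra hclosed ha M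
    refine mem_of_blockDiagonal hclosed hchain he ha (mul_mem (mul_mem hP hT) hP)
      (coordProj_mul_mul_mem_corner hTK M M) hfin fun i j hij => ?_
    rw [inner_coordProj_mul_mul_apply he] at hij
    obtain ⟨hi, hij⟩ := Set.indicator_apply_ne_zero.1 hij
    obtain ⟨hj, hij⟩ := Set.indicator_apply_ne_zero.1 hij
    have := h i j hij
    have := hM i hi
    have := hM j hj
    omega
  exact mem_of_coordProj_corners hclosed he ha hT hTK {i | κ i % 2 = 0}
    (hblock _ 0 fun i hi => hi) (hblock _ 1 fun i (hi : κ i % 2 ≠ 0) => by omega)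

end idempotentHull

lemma exists_seq_tendsto_atTop_of_eventually {α : Type*} [Preorder α] [IsDirectedOrder α]
    [Nonempty α] [(Filter.atTop : Filter α).IsCountablyGenerated] {p : ℕ → α → α → Prop}
    (h : ∀ n a, ∀ᶠ b in Filter.atTop, p n a b) :
    ∃ F : ℕ → α, Monotone F ∧ Filter.Tendsto F Filter.atTop Filter.atTop ∧
      ∀ n, p n (F n) (F (n + 1)) := by
  obtain ⟨u, hu⟩ := Filter.exists_seq_tendsto (Filter.atTop : Filter α)
  choose next hnext using fun n a => ((h n a).and
    ((Filter.eventually_ge_atTop a).and (Filter.eventually_ge_atTop (u n)))).exists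
  let F : ℕ → α := fun n => Nat.rec (Classical.arbitrary α) next n
  refine ⟨F, monotone_nat_of_le_succ fun n => (hnext n (F n)).2.1, ?_, fun n => (hnext n (F n)).1⟩
  exact (Filter.tendsto_add_atTop_iff_nat 1).1
    (Filter.tendsto_atTop_mono (fun n => (hnext n (F n)).2.2) hu)

section FiniteTruncation

variable {𝕜 H ι : Type*} [RCLike 𝕜] [NormedAddCommGroup H] [InnerProductSpace 𝕜 H]
  [CompleteSpace H] {e : ι → H} {T : H →L[𝕜] H}

lemma tendsto_proj_iSup {κ : Type*} [Preorder κ] {U : κ → Submodule 𝕜 H} (hU : Monotone U)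
    (x : H) : Filter.Tendsto (fun k => proj (U k) x) Filter.atTop (𝓝 (proj (⨆ k, U k) x)) := by
  have hclosure : (⨆ k, (U k).topologicalClosure).topologicalClosure =
      (⨆ k, U k).topologicalClosure :=
    le_antisymm (Submodule.topologicalClosure_minimal _
      (iSup_le fun k => Submodule.topologicalClosure_mono (le_iSup U k))
      (Submodule.isClosed_topologicalClosure _))
      (Submodule.topologicalClosure_mono (iSup_mono fun k => Submodule.le_topologicalClosure _))
  have := Submodule.starProjection_tendsto_closure_iSup (fun k => (U k).topologicalClosure)
    (fun k l hkl => Submodule.topologicalClosure_mono (hU hkl)) x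
  simpa only [proj, hclosure] using this

lemma star_proj (K : Submodule 𝕜 H) : star (proj K) = proj K := isSelfAdjoint_starProjection _

lemma star_mem_corner {K : Submodule 𝕜 H} (hT : T ∈ corner K) : star T ∈ corner K :=
  ⟨by rw [← star_proj, ← star_mul, hT.2], by rw [← star_proj, ← star_mul, hT.1]⟩

lemma tendsto_coordProj_compl_apply (he : Orthonormal 𝕜 e)
    (hT : T ∈ corner (Submodule.span 𝕜 (Set.range e))) (x : H) :
    Filter.Tendsto (fun F : Finset ι => coordProj 𝕜 e (F : Set ι)ᶜ (T x)) Filter.atTop (𝓝 0) := by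
  have hsup : ⨆ F : Finset ι, Submodule.span 𝕜 (e '' F) = Submodule.span 𝕜 (Set.range e) := by
    rw [← Submodule.span_iUnion, ← Set.image_iUnion, ← Set.image_univ]
    congr 2
    exact Set.iUnion_eq_univ_iff.2 fun i => ⟨{i}, by simp⟩
  have hmono : Monotone fun F : Finset ι => Submodule.span 𝕜 (e '' F) :=
    fun F G hFG => Submodule.span_mono (Set.image_mono (Finset.coe_subset.2 hFG))
  have hTx : proj (Submodule.span 𝕜 (Set.range e)) (T x) = T x := DFunLike.congr_fun hT.1 x
  have hlim := (tendsto_proj_iSup hmono (T x)).const_sub (T x)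
  simp only [hsup, hTx, sub_self] at hlim
  refine hlim.congr fun F => ?_
  rw [coordProj_compl he, sub_apply, hTx, coordProj]

lemma norm_mul_coordProj_le (he : Orthonormal 𝕜 e) (T : H →L[𝕜] H) (F : Finset ι) :
    ‖T * coordProj 𝕜 e F‖ ≤ ∑ j ∈ F, ‖T (e j)‖ := by
  classical
  have hrank : coordProj 𝕜 e F = ∑ j ∈ F, InnerProductSpace.rankOne 𝕜 (e j) (e j) := by
    refine ContinuousLinearMap.ext fun x => proj_eq_of_mem ?_ ?_
    · rw [sum_apply]
      refine Submodule.le_topologicalClosure _ (sum_mem fun j hj => ?_)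
      exact Submodule.smul_mem _ _ (Submodule.subset_span ⟨j, hj, rfl⟩)
    · refine mem_orthogonal_span_iff.2 ?_
      rintro _ ⟨i, hi, rfl⟩
      simp only [inner_sub_right, sum_apply, inner_sum, InnerProductSpace.rankOne_apply,
        inner_smul_right, orthonormal_iff_ite.1 he, mul_ite, mul_one, mul_zero]
      rw [Finset.sum_ite_eq, if_pos (Finset.mem_coe.1 hi), sub_self]
  rw [hrank, Finset.mul_sum]
  refine (norm_sum_le _ _).trans (Finset.sum_le_sum fun j _ => ?_)
  rw [ContinuousLinearMap.mul_def, InnerProductSpace.comp_rankOne, InnerProductSpace.norm_rankOne,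
    he.1, mul_one]

lemma eventually_norm_coordProj_compl_mul_mul_le (he : Orthonormal 𝕜 e)
    (hT : T ∈ corner (Submodule.span 𝕜 (Set.range e))) (F : Finset ι) {δ : ℝ} (hδ : 0 < δ) :
    ∀ᶠ G : Finset ι in Filter.atTop,
      ‖coordProj 𝕜 e (G : Set ι)ᶜ * T * coordProj 𝕜 e F‖ ≤ δ := by
  have hlim : Filter.Tendsto (fun G : Finset ι => ∑ j ∈ F, ‖coordProj 𝕜 e (G : Set ι)ᶜ (T (e j))‖)
      Filter.atTop (𝓝 0) := by
    simpa using tendsto_finsetSum F fun j _ => (tendsto_coordProj_compl_apply he hT (e j)).norm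
  filter_upwards [hlim.eventually_lt_const hδ] with G hG
  exact (norm_mul_coordProj_le he _ F).trans hG.le

lemma eventually_norm_coordProj_mul_mul_compl_le (he : Orthonormal 𝕜 e)
    (hT : T ∈ corner (Submodule.span 𝕜 (Set.range e))) (F : Finset ι) {δ : ℝ} (hδ : 0 < δ) :
    ∀ᶠ G : Finset ι in Filter.atTop,
      ‖coordProj 𝕜 e F * T * coordProj 𝕜 e (G : Set ι)ᶜ‖ ≤ δ := by
  filter_upwards [eventually_norm_coordProj_compl_mul_mul_le he (star_mem_corner hT) F hδ]
    with G hG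
  have hstar : star (coordProj 𝕜 e F * T * coordProj 𝕜 e (G : Set ι)ᶜ) =
      coordProj 𝕜 e (G : Set ι)ᶜ * star T * coordProj 𝕜 e F := by
    rw [star_mul, star_mul, coordProj, coordProj, star_proj, star_proj, mul_assoc]
  rwa [← norm_star, hstar]

end FiniteTruncation

section BlockTridiagonal

variable {𝕜 H ι : Type*} [RCLike 𝕜] [NormedAddCommGroup H] [InnerProductSpace 𝕜 H]
  [CompleteSpace H] {𝒩 : Set (Submodule 𝕜 H)} {e : ι → H} {T : H →L[𝕜] H}

lemma exists_blocks_norm_le [Countable ι] (he : Orthonormal 𝕜 e)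
    (hT : T ∈ corner (Submodule.span 𝕜 (Set.range e))) {δ : ℕ → ℝ} (hδ : ∀ n, 0 < δ n) :
    ∃ κ : ι → ℕ, (∀ n, {i | κ i = n}.Finite) ∧ ∀ n,
      ‖coordProj 𝕜 e {i | n + 2 ≤ κ i} * T * coordProj 𝕜 e {i | κ i = n}‖ ≤ δ n ∧
      ‖coordProj 𝕜 e {i | κ i = n} * T * coordProj 𝕜 e {i | n + 2 ≤ κ i}‖ ≤ δ n := by
  classical
  obtain ⟨F, -, hF, hFδ⟩ := exists_seq_tendsto_atTop_of_eventually (α := Finset ι)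
    fun n F => (eventually_norm_coordProj_compl_mul_mul_le he hT F (hδ n)).and
      (eventually_norm_coordProj_mul_mul_compl_le he hT F (hδ n))
  have hmem (i : ι) : ∃ n, i ∈ F n :=
    (hF.eventually_ge_atTop {i}).exists.imp fun n => Finset.singleton_subset_iff.1
  have hblock (n : ℕ) : {i | Nat.find (hmem i) = n} ⊆ F n := by
    rintro i rfl
    exact Nat.find_spec (hmem i)
  have hfar (n : ℕ) : {i | n + 2 ≤ Nat.find (hmem i)} ⊆ (F (n + 1) : Set ι)ᶜ :=
    fun i hi => Nat.find_min (hmem i) hi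
  exact ⟨fun i => Nat.find (hmem i), fun n => (F n).finite_toSet.subset (hblock n), fun n =>
    ⟨(norm_coordProj_mul_mul_mono he T (hfar n) (hblock n)).trans (hFδ n).1,
      (norm_coordProj_mul_mul_mono he T (hblock n) (hfar n)).trans (hFδ n).2⟩⟩

/-- The part of the matrix of `T` with one index in the `n`-th fibre of `κ` and the other one in a
fibre with number at least `n + 2`. -/
noncomputable def farPart (e : ι → H) (κ : ι → ℕ) (T : H →L[𝕜] H) (n : ℕ) : H →L[𝕜] H :=
  coordProj 𝕜 e {i | n + 2 ≤ κ i} * T * coordProj 𝕜 e {i | κ i = n} +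
    coordProj 𝕜 e {i | κ i = n} * T * coordProj 𝕜 e {i | n + 2 ≤ κ i}

open Classical in
lemma inner_farPart_apply (he : Orthonormal 𝕜 e) (κ : ι → ℕ) (T : H →L[𝕜] H) (n : ℕ) (i j : ι) :
    inner 𝕜 (e i) (farPart e κ T n (e j)) =
      if n + 2 ≤ κ i ∧ κ j = n ∨ κ i = n ∧ n + 2 ≤ κ j then inner 𝕜 (e i) (T (e j)) else 0 := by
  rw [farPart, add_apply, inner_add_right, inner_coordProj_mul_mul_apply he,
    inner_coordProj_mul_mul_apply he]
  simp only [Set.indicator_apply, Set.mem_ofPred_eq]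
  split_ifs <;> first | omega | simp

theorem exists_blockTridiagonal_norm_sub_le [Countable ι]
    (hclosed : ∀ N ∈ 𝒩, IsClosed (N : Set H)) (he : Orthonormal 𝕜 e)
    (ha : ∀ i, IsAtomicVector 𝒩 (e i)) (hT : T ∈ nestAlgebra 𝒩)
    (hTK : T ∈ corner (Submodule.span 𝕜 (Set.range e))) {ε : ℝ} (hε : 0 < ε) :
    ∃ S ∈ nestAlgebra 𝒩, S ∈ corner (Submodule.span 𝕜 (Set.range e)) ∧ ‖T - S‖ ≤ ε ∧
      ∃ κ : ι → ℕ, (∀ n, {i | κ i = n}.Finite) ∧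
        ∀ i j, inner 𝕜 (e i) (S (e j)) ≠ 0 → κ i ≤ κ j + 1 ∧ κ j ≤ κ i + 1 := by
  classical
  obtain ⟨κ, hfin, hκ⟩ := exists_blocks_norm_le he hTK
    (δ := fun n => ε / 2 / 2 / 2 ^ n) fun n => by positivity
  have hnorm (n : ℕ) : ‖farPart e κ T n‖ ≤ ε / 2 / 2 ^ n :=
    (norm_add_le_of_le (hκ n).1 (hκ n).2).trans_eq (by ring)
  obtain ⟨Q, hQ⟩ : Summable (farPart e κ T) := (summable_geometric_two' ε).of_norm_bounded hnorm
  have hQK : Q ∈ corner (Submodule.span 𝕜 (Set.range e)) :=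
    (isClosed_corner _).mem_of_tendsto hQ <| Filter.Eventually.of_forall fun s =>
      sum_mem fun n _ => add_mem (coordProj_mul_mul_mem_corner hTK _ _)
        (coordProj_mul_mul_mem_corner hTK _ _)
  have hP (M : Set ι) : coordProj 𝕜 e M ∈ nestAlgebra 𝒩 := coordProj_mem_nestAlgebra hclosed ha M
  have hQmem : Q ∈ nestAlgebra 𝒩 :=
    mem_nestAlgebra_of_hasSum hclosed
      (fun n => add_mem (mul_mem (mul_mem (hP _) hT) (hP _)) (mul_mem (mul_mem (hP _) hT) (hP _)))
      fun v => hQ.mapL (ContinuousLinearMap.apply 𝕜 H v)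
  refine ⟨T - Q, sub_mem hT hQmem, sub_mem hTK hQK, ?_, κ, hfin, fun i j hij => ?_⟩
  · rw [sub_sub_cancel, ← hQ.tsum_eq]
    exact tsum_of_norm_bounded (hasSum_geometric_two' ε) hnorm
  · have hentry : HasSum (fun n => inner 𝕜 (e i) (farPart e κ T n (e j)))
        (inner 𝕜 (e i) (Q (e j))) :=
      (hQ.mapL (ContinuousLinearMap.apply 𝕜 H (e j))).mapL (innerSL 𝕜 (e i))
    by_contra! hfar
    refine hij ?_
    rw [sub_apply, inner_sub_right, sub_eq_zero]
    refine HasSum.unique ?_ hentry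
    convert hasSum_single (min (κ i) (κ j)) fun n hn => ?_ using 1
    · rw [inner_farPart_apply he, if_pos (by omega)]
    · rw [inner_farPart_apply he, if_neg (by omega)]

theorem idempotentHull.mem_of_mem_corner_of_isAtomicVector [Countable ι]
    (hclosed : ∀ N ∈ 𝒩, IsClosed (N : Set H)) (hchain : IsChain (· ≤ ·) 𝒩)
    (he : Orthonormal 𝕜 e) (ha : ∀ i, IsAtomicVector 𝒩 (e i)) (hT : T ∈ nestAlgebra 𝒩)
    (hTK : T ∈ corner (Submodule.span 𝕜 (Set.range e))) :
    T ∈ idempotentHull (nestAlgebra 𝒩) := by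
  refine mem_of_forall_norm_sub_le fun ε hε => ?_
  obtain ⟨S, hS, hSK, hTS, κ, hfin, hκ⟩ :=
    exists_blockTridiagonal_norm_sub_le hclosed he ha hT hTK hε
  exact ⟨S, mem_of_blockTridiagonal hclosed hchain he ha hS hSK hfin hκ, hTS⟩

end BlockTridiagonal

/-! ### Nonatomic subspaces -/

section ProjLattice

variable {𝕜 H : Type*} [RCLike 𝕜] [NormedAddCommGroup H] [InnerProductSpace 𝕜 H]
  [CompleteSpace H] {F : Set (Submodule 𝕜 H)} {C J K L : Submodule 𝕜 H} {v : H} {a : ℝ}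

lemma norm_proj_sSup_le (hne : F.Nonempty) (hF : IsChain (· ≤ ·) F)
    (h : ∀ N ∈ F, ‖proj N v‖ ≤ a) : ‖proj (sSup F) v‖ ≤ a := by
  have := hne.to_subtype
  have := hF.directedOn.isDirectedOrder
  rw [sSup_eq_iSup']
  exact le_of_tendsto (tendsto_proj_iSup (U := ((↑) : F → Submodule 𝕜 H)) (fun _ _ h => h) v).norm
    (Filter.Eventually.of_forall fun N => h N N.2)

lemma tendsto_proj_iInf {κ : Type*} [Preorder κ] {U : κ → Submodule 𝕜 H}
    (hclosed : ∀ k, IsClosed (U k : Set H)) (hU : Antitone U) (x : H) :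
    Filter.Tendsto (fun k => proj (U k) x) Filter.atTop (𝓝 (proj (⨅ k, U k) x)) := by
  have hinf : (⨆ k, (U k)ᗮ)ᗮ = ⨅ k, U k := by
    rw [← Submodule.iInf_orthogonal]
    refine iInf_congr fun k => ?_
    rw [Submodule.orthogonal_orthogonal_eq_closure, (hclosed k).submodule_topologicalClosure_eq]
  have := (tendsto_proj_iSup (U := fun k => (U k)ᗮ)
    (fun k l h => Submodule.orthogonal_le (hU h)) x).const_sub x
  simpa only [← hinf, proj_orthogonal, sub_apply, one_apply_eq_self, sub_sub_cancel]
    using this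

lemma le_norm_proj_sInf (hne : F.Nonempty) (hclosed : ∀ N ∈ F, IsClosed (N : Set H))
    (hF : IsChain (· ≤ ·) F) (h : ∀ N ∈ F, a ≤ ‖proj N v‖) : a ≤ ‖proj (sInf F) v‖ := by
  have := hne.to_subtype
  have : IsCodirectedOrder F :=
    ⟨fun M N => (hF.total M.2 N.2).elim (fun h => ⟨M, le_rfl, h⟩) fun h => ⟨N, h, le_rfl⟩⟩
  have hlim := tendsto_proj_iInf (U := fun N : Fᵒᵈ => ((OrderDual.ofDual N : F) : Submodule 𝕜 H))
    (fun N => hclosed _ (OrderDual.ofDual N).2) (fun _ _ h => h) v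
  rw [sInf_eq_iInf']
  exact ge_of_tendsto hlim.norm (Filter.Eventually.of_forall fun N => h _ (OrderDual.ofDual N).2)

lemma Reduces.singleton_symm (hK : IsClosed (K : Set H)) (h : Reduces {K} L) : Reduces {L} K := by
  rintro _ rfl x hx
  rw [← proj_eq_self_iff hK, ← h.proj_comm rfl, proj_eq_self hx]

lemma Reduces.singleton_iSup {ι : Sort*} {J : ι → Submodule 𝕜 H}
    (hJ : ∀ i, IsClosed (J i : Set H)) (hL : IsClosed (L : Set H)) (h : ∀ i, Reduces {J i} L) :
    Reduces {⨆ i, J i} L := by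
  have hsup : Reduces {L} (⨆ i, J i) := Reduces.iSup fun i => (h i).singleton_symm (hJ i)
  rintro _ rfl
  rw [← proj_topologicalClosure]
  exact hsup.topologicalClosure.singleton_symm hL _ rfl

lemma Reduces.proj_sup (h : Reduces {L} K) (x : H) :
    proj (K ⊔ L) x = proj L x + (proj K x - proj L (proj K x)) := by
  refine proj_eq_of_mem (add_mem ?_ (sub_mem ?_ ?_)) ?_
  · exact Submodule.topologicalClosure_mono le_sup_right (proj_mem_topologicalClosure L x)
  · exact Submodule.topologicalClosure_mono le_sup_left (proj_mem_topologicalClosure K x)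
  · exact Submodule.topologicalClosure_mono le_sup_right (proj_mem_topologicalClosure L _)
  · have hsplit : x - (proj L x + (proj K x - proj L (proj K x))) =
        (x - proj K x) - proj L (x - proj K x) := by rw [map_sub]; abel
    rw [hsplit, ← Submodule.inf_orthogonal]
    exact ⟨sub_mem (sub_proj_mem_orthogonal K x) (h.orthogonal L rfl _
      (sub_proj_mem_orthogonal K x)), sub_proj_mem_orthogonal L _⟩

lemma Reduces.norm_proj_sup_le (h : Reduces {L} K) (x : H) :
    ‖proj (K ⊔ L) x‖ ≤ ‖proj K x‖ + ‖proj L x‖ := by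
  rw [h.proj_sup, add_comm ‖proj K x‖]
  refine (norm_add_le _ _).trans (add_le_add_right ?_ _)
  have hcompl : proj K x - proj L (proj K x) = proj Lᗮ (proj K x) := by
    rw [proj_orthogonal]; rfl
  rw [hcompl]
  exact norm_proj_apply_le _ _

lemma norm_proj_iSup_le_of_hasSum {L : ℕ → Submodule 𝕜 H} (hL : ∀ m n, Reduces {L m} (L n))
    {b : ℕ → ℝ} (hb : HasSum b a) (h : ∀ n, ‖proj (L n) v‖ ≤ b n) :
    ‖proj (⨆ n, L n) v‖ ≤ a := by
  have hb0 : ∀ n, 0 ≤ b n := fun n => (norm_nonneg _).trans (h n)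
  have hpartial : ∀ n, (∀ m, Reduces {L m} (partialSups L n)) ∧
      ‖proj (partialSups L n) v‖ ≤ ∑ i ∈ Finset.range (n + 1), b i := by
    intro n
    induction n with
    | zero => simpa using ⟨fun m => hL m 0, h 0⟩
    | succ n ih =>
      rw [partialSups_add_one, Finset.sum_range_succ]
      exact ⟨fun m => (ih.1 m).sup (hL m _),
        ((ih.1 _).norm_proj_sup_le v).trans (add_le_add ih.2 (h _))⟩
  rw [← iSup_partialSups_eq]
  exact le_of_tendsto (tendsto_proj_iSup (partialSups L).monotone v).norm
    (Filter.Eventually.of_forall fun n =>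
      (hpartial n).2.trans (sum_le_hasSum _ (fun i _ => hb0 i) hb))

lemma proj_sub_proj_mem_orthogonal (h : K ≤ L) (x : H) : proj L x - proj K x ∈ Kᗮ := by
  rw [← proj_proj_of_le h]
  exact sub_proj_mem_orthogonal K _

lemma proj_inf_orthogonal (hK : IsClosed (K : Set H)) (hL : IsClosed (L : Set H)) (h : K ≤ L)
    (x : H) : proj (L ⊓ Kᗮ) x = proj L x - proj K x := by
  refine proj_eq_of_mem (Submodule.le_topologicalClosure _
    ⟨sub_mem (proj_mem hL x) (h (proj_mem hK x)), proj_sub_proj_mem_orthogonal h x⟩) ?_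
  rw [← sub_add]
  exact add_mem (Submodule.orthogonal_le inf_le_left (sub_proj_mem_orthogonal L x))
    (Submodule.orthogonal_le inf_le_right (Submodule.le_orthogonal_orthogonal K (proj_mem hK x)))

end ProjLattice

section Nonatomic

variable {𝕜 H : Type*} [RCLike 𝕜] [NormedAddCommGroup H] [InnerProductSpace 𝕜 H]
  {𝒩 : Set (Submodule 𝕜 H)} {C I K M N : Submodule 𝕜 H} {v : H} {a : ℝ}

/-- `C` is nonatomic for `𝒩` if it contains no nonzero atomic vector. -/
def IsNonatomic (𝒩 : Set (Submodule 𝕜 H)) (C : Submodule 𝕜 H) : Prop :=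
  ∀ v ∈ C, IsAtomicVector 𝒩 v → v = 0

lemma IsNonatomic.mono (hC : IsNonatomic 𝒩 C) (hK : K ≤ C) : IsNonatomic 𝒩 K :=
  fun v hv => hC v (hK hv)

/-- The intervals of `𝒩`: the differences of two of its members. -/
def intervals (𝒩 : Set (Submodule 𝕜 H)) : Set (Submodule 𝕜 H) :=
  {I | ∃ M ∈ 𝒩, ∃ N ∈ 𝒩, M ≤ N ∧ I = N ⊓ Mᗮ}

/-- `K` meets nontrivially every interval that `C` meets nontrivially. -/
def HasRoom (𝒩 : Set (Submodule 𝕜 H)) (C K : Submodule 𝕜 H) : Prop :=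
  ∀ I ∈ intervals 𝒩, C ⊓ I ≠ ⊥ → K ⊓ I ≠ ⊥

lemma IsNest.isClosed_of_mem_intervals (h𝒩 : IsNest 𝒩) (hI : I ∈ intervals 𝒩) :
    IsClosed (I : Set H) := by
  obtain ⟨M, -, N, hN, -, rfl⟩ := hI
  exact (h𝒩.isClosed N hN).inter (Submodule.isClosed_orthogonal M)

variable [CompleteSpace H]

lemma IsNest.reduces_of_mem_intervals (h𝒩 : IsNest 𝒩) (hI : I ∈ intervals 𝒩) : Reduces 𝒩 I := by
  obtain ⟨M, hM, N, hN, -, rfl⟩ := hI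
  exact (Reduces.of_mem h𝒩 hN).inf (Reduces.of_mem h𝒩 hM).orthogonal

lemma Reduces.intervals (h𝒩 : IsNest 𝒩) (hK : Reduces 𝒩 K) : Reduces (intervals 𝒩) K := by
  rintro _ ⟨M, hM, N, hN, hMN, rfl⟩ x hx
  rw [proj_inf_orthogonal (h𝒩.isClosed M hM) (h𝒩.isClosed N hN) hMN]
  exact sub_mem (hK N hN x hx) (hK M hM x hx)

lemma Reduces.singleton_of_mem {𝒥 : Set (Submodule 𝕜 H)} (hK : Reduces 𝒥 K) (hI : I ∈ 𝒥) :
    Reduces {I} K := by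
  rintro _ rfl
  exact hK _ hI

lemma IsNest.le_of_norm_proj_lt (h𝒩 : IsNest 𝒩) (hM : M ∈ 𝒩) (hN : N ∈ 𝒩)
    (h : ‖proj M v‖ < ‖proj N v‖) : M ≤ N :=
  (h𝒩.isChain.total hM hN).resolve_right fun hNM => h.not_ge (norm_proj_apply_mono hNM v)

lemma Reduces.inf_interval_ne_bot (h𝒩 : IsNest 𝒩) (hC : Reduces 𝒩 C) (hM : M ∈ 𝒩) (hN : N ∈ 𝒩)
    (hv : v ∈ C) (h : ‖proj M v‖ < ‖proj N v‖) : C ⊓ (N ⊓ Mᗮ) ≠ ⊥ := by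
  have hMN := h𝒩.le_of_norm_proj_lt hM hN h
  refine (Submodule.ne_bot_iff _).2 ⟨proj N v - proj M v,
    ⟨sub_mem (hC N hN v hv) (hC M hM v hv), sub_mem (proj_mem (h𝒩.isClosed N hN) v)
      (hMN (proj_mem (h𝒩.isClosed M hM) v)), proj_sub_proj_mem_orthogonal hMN v⟩, fun h0 => ?_⟩
  rw [sub_eq_zero.1 h0] at h
  exact lt_irrefl _ h

theorem IsNonatomic.exists_norm_proj_eq (h𝒩 : IsNest 𝒩) (hC : Reduces 𝒩 C)
    (hna : IsNonatomic 𝒩 C) (hv : v ∈ C) (h0 : 0 ≤ a) (ha : a ≤ ‖v‖) :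
    ∃ N ∈ 𝒩, ‖proj N v‖ = a := by
  let A : Set (Submodule 𝕜 H) := {N | N ∈ 𝒩 ∧ ‖proj N v‖ ≤ a}
  let B : Set (Submodule 𝕜 H) := {N | N ∈ 𝒩 ∧ a ≤ ‖proj N v‖}
  have hA : A ⊆ 𝒩 := fun N hN => hN.1
  have hB : B ⊆ 𝒩 := fun N hN => hN.1
  have hAne : A.Nonempty := ⟨⊥, h𝒩.bot_mem, by rwa [proj_eq_zero_iff.2 (by simp), norm_zero]⟩
  have hBne : B.Nonempty := ⟨⊤, h𝒩.top_mem, by rwa [proj_eq_self Submodule.mem_top]⟩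
  set N₀ := (sSup A).topologicalClosure with hN₀
  set N₁ := sInf B
  have hN₀mem : N₀ ∈ 𝒩 := h𝒩.closure_sSup_mem A hA hAne
  have hN₁mem : N₁ ∈ 𝒩 := h𝒩.sInf_mem B hB hBne
  have hle : ‖proj N₀ v‖ ≤ a := by
    rw [hN₀, proj_topologicalClosure]
    exact norm_proj_sSup_le hAne (h𝒩.isChain.mono hA) fun N hN => hN.2
  have hge : a ≤ ‖proj N₁ v‖ := le_norm_proj_sInf hBne (fun N hN => h𝒩.isClosed N (hB hN))
    (h𝒩.isChain.mono hB) fun N hN => hN.2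
  refine ⟨N₀, hN₀mem, le_antisymm hle (hge.trans ?_)⟩
  rcases h𝒩.isChain.total hN₁mem hN₀mem with h | h
  · exact norm_proj_apply_mono h v
  have hatomic : IsAtomicVector 𝒩 (proj N₁ v - proj N₀ v) := by
    intro N hN
    rcases le_total ‖proj N v‖ a with hNa | hNa
    · have hNN₀ : N ≤ N₀ := (le_sSup (show N ∈ A from ⟨hN, hNa⟩)).trans
        (Submodule.le_topologicalClosure _)
      exact .inr (Submodule.orthogonal_le hNN₀ (proj_sub_proj_mem_orthogonal h v))
    · have hN₁N : N₁ ≤ N := sInf_le (show N ∈ B from ⟨hN, hNa⟩)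
      exact .inl (sub_mem (hN₁N (proj_mem (h𝒩.isClosed _ hN₁mem) v))
        (hN₁N (h (proj_mem (h𝒩.isClosed _ hN₀mem) v))))
  have hzero := hna _ (sub_mem (hC _ hN₁mem v hv) (hC _ hN₀mem v hv)) hatomic
  rw [sub_eq_zero.1 hzero]

lemma IsNonatomic.exists_monotone_cut (h𝒩 : IsNest 𝒩) (hC : Reduces 𝒩 C)
    (hna : IsNonatomic 𝒩 C) (hv : v ∈ C) :
    ∃ R : ℝ → Submodule 𝕜 H, Monotone R ∧ (∀ a, R a ∈ 𝒩) ∧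
      ∀ a ∈ Set.Icc 0 ‖v‖, ‖proj (R a) v‖ = a := by
  choose R hR hnorm using fun a : Set.Icc 0 ‖v‖ =>
    hna.exists_norm_proj_eq h𝒩 hC hv a.2.1 a.2.2
  have hmono : Monotone R := fun a b hab => by
    rcases hab.eq_or_lt with rfl | hlt
    · exact le_rfl
    · exact h𝒩.le_of_norm_proj_lt (v := v) (hR a) (hR b) (by rwa [hnorm, hnorm])
  refine ⟨fun a => R (Set.projIcc 0 ‖v‖ (norm_nonneg v) a),
    hmono.comp (Set.monotone_projIcc _), fun a => hR _, fun a ha => ?_⟩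
  rw [hnorm, Set.projIcc_of_mem _ ha]

lemma IsNonatomic.exists_interval_norm_proj_le (h𝒩 : IsNest 𝒩) (hC : Reduces 𝒩 C)
    (hna : IsNonatomic 𝒩 C) (hI : I ∈ intervals 𝒩) (hCI : C ⊓ I ≠ ⊥) (F : Finset H) {δ : ℝ}
    (hδ : 0 < δ) :
    ∃ J ∈ intervals 𝒩, J ≤ I ∧ C ⊓ J ≠ ⊥ ∧ ∀ z ∈ F, ‖proj J z‖ ≤ δ := by
  obtain ⟨M, hM, N, hN, -, rfl⟩ := hI
  obtain ⟨v, ⟨hvC, hvN, hvM⟩, hv0⟩ := (Submodule.ne_bot_iff _).1 hCI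
  obtain ⟨u, hu, huIoo, -⟩ := exists_seq_strictMono_tendsto' (norm_pos_iff.2 hv0)
  obtain ⟨R, hRmono, hR, hRnorm⟩ := hna.exists_monotone_cut h𝒩 hC hvC
  let U : ℕ → Submodule 𝕜 H := fun n => R (u n)
  have hU : ∀ n, U n ∈ 𝒩 := fun n => hR _
  have hUu : ∀ n, ‖proj (U n) v‖ = u n := fun n =>
    hRnorm _ (Set.Ioo_subset_Icc_self (huIoo n))
  have hlt : ∀ n, ‖proj (U n) v‖ < ‖proj (U (n + 1)) v‖ := fun n => by
    rw [hUu, hUu]; exact hu n.lt_succ_self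
  have hmono : Monotone U := hRmono.comp hu.monotone
  have hproj : ∀ n z, proj (U (n + 1) ⊓ (U n)ᗮ) z = proj (U (n + 1)) z - proj (U n) z :=
    fun n => proj_inf_orthogonal (h𝒩.isClosed _ (hU _)) (h𝒩.isClosed _ (hU _)) (hmono n.le_succ)
  have hsmall : ∀ z, Filter.Tendsto (fun n => ‖proj (U (n + 1) ⊓ (U n)ᗮ) z‖) Filter.atTop
      (𝓝 0) := by
    intro z
    have hlim := tendsto_proj_iSup hmono z
    simpa only [hproj, sub_self, norm_zero] using
      (((Filter.tendsto_add_atTop_iff_nat 1).2 hlim).sub hlim).norm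
  obtain ⟨n, hn⟩ := ((Filter.eventually_all_finset F).2 fun z _ =>
    (hsmall z).eventually_le_const hδ).exists
  refine ⟨U (n + 1) ⊓ (U n)ᗮ, ⟨_, hU _, _, hU _, hmono n.le_succ, rfl⟩, ?_,
    hC.inf_interval_ne_bot h𝒩 (hU _) (hU _) hvC (hlt n), hn⟩
  refine inf_le_inf (h𝒩.le_of_norm_proj_lt (v := v) (hU _) hN ?_)
    (Submodule.orthogonal_le (h𝒩.le_of_norm_proj_lt (v := v) hM (hU _) ?_))
  · rw [hUu, proj_eq_self hvN]
    exact (huIoo _).2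
  · rw [hUu, proj_eq_zero_iff.2 hvM, norm_zero]
    exact (huIoo _).1

lemma IsNest.norm_proj_lt_norm_proj_of_dist_lt (h𝒩 : IsNest 𝒩) (hM : M ∈ 𝒩) (hN : N ∈ 𝒩)
    (hMN : M ≤ N) (hvC : v ∈ C) (hvI : v ∈ N ⊓ Mᗮ) {x : H} (hx : dist v x < ‖v‖) :
    ‖proj M (proj C x)‖ < ‖proj N (proj C x)‖ := by
  have hne : proj N (proj C x) - proj M (proj C x) ≠ 0 := by
    intro h
    have hv : proj (N ⊓ Mᗮ) (proj C (v - x)) = v := by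
      rw [map_sub, map_sub, proj_eq_self hvC, proj_eq_self hvI,
        proj_inf_orthogonal (h𝒩.isClosed M hM) (h𝒩.isClosed N hN) hMN, h, sub_zero]
    have := (norm_proj_apply_le (N ⊓ Mᗮ) _).trans (norm_proj_apply_le C (v - x))
    rw [hv, ← dist_eq_norm] at this
    exact this.not_gt hx
  have hpos : 0 < ‖proj N (proj C x) - proj M (proj C x)‖ ^ 2 :=
    pow_pos (norm_pos_iff.2 hne) 2
  rw [norm_sq_proj_sub_proj hMN, sub_pos] at hpos
  exact lt_of_pow_lt_pow_left₀ 2 (norm_nonneg _) hpos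

theorem IsNonatomic.exists_countable_intervals [TopologicalSpace.SeparableSpace H] (h𝒩 : IsNest 𝒩)
    (hCclosed : IsClosed (C : Set H)) (hC : Reduces 𝒩 C) (hna : IsNonatomic 𝒩 C) :
    ∃ ℬ ⊆ intervals 𝒩, ℬ.Countable ∧ (∀ B ∈ ℬ, C ⊓ B ≠ ⊥) ∧
      ∀ I ∈ intervals 𝒩, C ⊓ I ≠ ⊥ → ∃ B ∈ ℬ, B ≤ I := by
  let c : ℕ → H := fun n => proj C (TopologicalSpace.denseSeq H n)
  have hc : ∀ n, c n ∈ C := fun n => proj_mem hCclosed _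
  choose R hRmono hR hRnorm using fun n => hna.exists_monotone_cut h𝒩 hC (hc n)
  let piece : ℕ × ℚ × ℚ → Submodule 𝕜 H := fun t => R t.1 t.2.2 ⊓ (R t.1 t.2.1)ᗮ
  refine ⟨{B | B ∈ intervals 𝒩 ∧ C ⊓ B ≠ ⊥} ∩ Set.range piece, fun B hB => hB.1.1,
    (Set.countable_range piece).mono Set.inter_subset_right, fun B hB => hB.1.2, ?_⟩
  rintro _ ⟨M, hM, N, hN, hMN, rfl⟩ hCI
  obtain ⟨v, ⟨hvC, hvI⟩, hv0⟩ := (Submodule.ne_bot_iff _).1 hCI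
  obtain ⟨n, hn⟩ :=
    (TopologicalSpace.denseRange_denseSeq H).exists_dist_lt v (norm_pos_iff.2 hv0)
  have hlt := h𝒩.norm_proj_lt_norm_proj_of_dist_lt hM hN hMN hvC hvI hn
  obtain ⟨q, hMq, hqN⟩ := exists_rat_btwn hlt
  obtain ⟨r, hqr, hrN⟩ := exists_rat_btwn hqN
  have hq0 : 0 ≤ (q : ℝ) := (norm_nonneg _).trans hMq.le
  have hrc : (r : ℝ) ≤ ‖c n‖ := hrN.le.trans (norm_proj_apply_le _ _)
  have hq := hRnorm n q ⟨hq0, hqr.le.trans hrc⟩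
  have hr := hRnorm n r ⟨hq0.trans hqr.le, hrc⟩
  have hRlt : ‖proj (R n q) (c n)‖ < ‖proj (R n r) (c n)‖ := by rwa [hq, hr]
  refine ⟨R n r ⊓ (R n q)ᗮ, ⟨⟨⟨_, hR _ _, _, hR _ _, ?_, rfl⟩, ?_⟩, (n, q, r), rfl⟩, ?_⟩
  · exact hRmono n hqr.le
  · exact hC.inf_interval_ne_bot h𝒩 (hR _ _) (hR _ _) (hc n) hRlt
  · exact inf_le_inf (h𝒩.le_of_norm_proj_lt (v := c n) (hR _ _) hN (by rwa [hr]))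
      (Submodule.orthogonal_le (h𝒩.le_of_norm_proj_lt (v := c n) hM (hR _ _) (by rwa [hq])))

end Nonatomic

lemma exists_seq_of_forall_finset {α : Type*} {p : ℕ → α → Prop} {r : ℕ → α → α → Prop}
    (h : ∀ n (s : Finset α), ∃ y, p n y ∧ ∀ x ∈ s, r n x y) :
    ∃ f : ℕ → α, (∀ n, p n (f n)) ∧ ∀ m n, m < n → r n (f m) (f n) := by
  classical
  choose next hp hr using h
  let history : ℕ → Finset α := fun n => Nat.rec ∅ (fun n s => insert (next n s) s) n
  have hmono : Monotone history := monotone_nat_of_le_succ fun n => Finset.subset_insert _ _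
  refine ⟨fun n => next n (history n), fun n => hp n _, fun m n hmn => hr n _ _ ?_⟩
  exact hmono (Nat.succ_le_of_lt hmn) (Finset.mem_insert_self _ _)

section Splitting

variable {𝕜 H : Type*} [RCLike 𝕜] [NormedAddCommGroup H] [InnerProductSpace 𝕜 H]
  {𝒩 : Set (Submodule 𝕜 H)} {C : Submodule 𝕜 H}

lemma exists_norm_eq_one_of_ne_bot {K : Submodule 𝕜 H} (hK : K ≠ ⊥) : ∃ x ∈ K, ‖x‖ = 1 := by
  obtain ⟨x, hx, hx0⟩ := (Submodule.ne_bot_iff K).1 hK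
  exact ⟨((‖x‖⁻¹ : ℝ) : 𝕜) • x, K.smul_mem _ hx, by simp [norm_smul, hx0]⟩

variable [CompleteSpace H]

lemma IsNonatomic.exists_almost_orthogonal_subintervals (h𝒩 : IsNest 𝒩) (hC : Reduces 𝒩 C)
    (hna : IsNonatomic 𝒩 C) {B : ℕ → Submodule 𝕜 H} (hB : ∀ n, B n ∈ intervals 𝒩)
    (hCB : ∀ n, C ⊓ B n ≠ ⊥) {δ : ℕ → ℝ} (hδ : ∀ n, 0 < δ n) :
    ∃ (D : ℕ → Submodule 𝕜 H) (d : ℕ → H), (∀ n, D n ∈ intervals 𝒩 ∧ D n ≤ B n ∧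
      d n ∈ C ⊓ D n ∧ ‖d n‖ = 1) ∧ ∀ m n, m < n → ‖proj (D n) (d m)‖ ≤ δ n := by
  classical
  obtain ⟨f, hf, hf'⟩ := exists_seq_of_forall_finset
    (p := fun n (y : Submodule 𝕜 H × H) => y.1 ∈ intervals 𝒩 ∧ y.1 ≤ B n ∧ y.2 ∈ C ⊓ y.1 ∧
      ‖y.2‖ = 1) (r := fun n x y => ‖proj y.1 x.2‖ ≤ δ n) fun n s => by
      obtain ⟨J, hJ, hJB, hCJ, hsmall⟩ :=
        hna.exists_interval_norm_proj_le h𝒩 hC (hB n) (hCB n) (s.image Prod.snd) (hδ n)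
      obtain ⟨w, hw, hw1⟩ := exists_norm_eq_one_of_ne_bot hCJ
      exact ⟨(J, w), ⟨hJ, hJB, hw, hw1⟩, fun x hx => hsmall _ (Finset.mem_image_of_mem _ hx)⟩
  exact ⟨fun n => (f n).1, fun n => (f n).2, hf, hf'⟩

lemma IsNonatomic.exists_orthogonal_reducing (h𝒩 : IsNest 𝒩) (hCclosed : IsClosed (C : Set H))
    (hC : Reduces 𝒩 C) (hna : IsNonatomic 𝒩 C) {B : ℕ → Submodule 𝕜 H}
    (hB : ∀ n, B n ∈ intervals 𝒩) (hCB : ∀ n, C ⊓ B n ≠ ⊥) :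
    ∃ G : ℕ → Submodule 𝕜 H, (∀ n, Reduces 𝒩 (G n) ∧ G n ≤ C ⊓ B n ∧ G n ≠ ⊥) ∧
      Pairwise fun m n => G m ⟂ G n := by
  obtain ⟨D, d, hD, hsmall⟩ := hna.exists_almost_orthogonal_subintervals h𝒩 hC hB hCB
    (δ := fun n => 1 / 2 / 2 / 2 ^ n) fun n => by positivity
  let tail : ℕ → Submodule 𝕜 H := fun n => ⨆ m, D (n + 1 + m)
  have hle_tail : ∀ {m n}, m < n → D n ≤ tail m := fun {m n} hmn => by
    obtain ⟨k, rfl⟩ := Nat.exists_eq_add_of_le (Nat.succ_le_of_lt hmn)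
    exact le_iSup (fun k => D (m + 1 + k)) k
  have hDred : ∀ n, Reduces 𝒩 (D n) := fun n => h𝒩.reduces_of_mem_intervals (hD n).1
  have hDclosed : ∀ n, IsClosed (D n : Set H) := fun n => h𝒩.isClosed_of_mem_intervals (hD n).1
  have hcomm : ∀ {K : Submodule 𝕜 H}, Reduces 𝒩 K → ∀ n, Reduces {D n} K :=
    fun hK n => (hK.intervals h𝒩).singleton_of_mem (hD n).1
  let G : ℕ → Submodule 𝕜 H := fun n => C ⊓ D n ⊓ (tail n)ᗮ
  have hG : ∀ n, G n ≠ ⊥ := by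
    intro n
    have htail : ‖proj (tail n) (d n)‖ ≤ 1 / 2 :=
      norm_proj_iSup_le_of_hasSum (fun k m => hcomm (hDred _) _) (hasSum_geometric_two' (1 / 2))
        fun m => (hsmall n _ (by omega)).trans (by gcongr <;> norm_num)
    refine (Submodule.ne_bot_iff _).2 ⟨d n - proj (tail n) (d n),
      ⟨sub_mem (hD n).2.2.1 ?_, sub_proj_mem_orthogonal _ _⟩, fun h0 => ?_⟩
    · exact Reduces.singleton_iSup (fun m => hDclosed _) (hCclosed.inter (hDclosed n))
        (fun m => hcomm (hC.inf (hDred n)) _) _ rfl _ (hD n).2.2.1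
    · rw [← sub_eq_zero.1 h0, (hD n).2.2.2] at htail
      norm_num at htail
  have hortho : ∀ m n, m < n → G m ⟂ G n := fun m n hmn =>
    ((Submodule.isOrtho_orthogonal_right (tail m)).symm.mono_left inf_le_right).mono_right
      ((inf_le_left.trans inf_le_right).trans (hle_tail hmn))
  refine ⟨G, fun n => ⟨?_, ?_, hG n⟩, fun m n hmn => ?_⟩
  · exact (hC.inf (hDred n)).inf (Reduces.iSup fun m => hDred _).orthogonal
  · exact inf_le_left.trans (inf_le_inf_left C (hD n).2.1)
  · exact hmn.lt_or_gt.elim (hortho m n) fun h => (hortho n m h).symm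

theorem IsNonatomic.exists_hasRoom [TopologicalSpace.SeparableSpace H] (h𝒩 : IsNest 𝒩)
    (hCclosed : IsClosed (C : Set H)) (hC : Reduces 𝒩 C) (hna : IsNonatomic 𝒩 C) :
    ∃ E : Submodule 𝕜 H, IsClosed (E : Set H) ∧ Reduces 𝒩 E ∧ E ≤ C ∧ HasRoom 𝒩 C E ∧
      HasRoom 𝒩 C (C ⊓ Eᗮ) := by
  obtain ⟨ℬ, hℬ, hcount, hCℬ, hcover⟩ := hna.exists_countable_intervals h𝒩 hCclosed hC
  rcases ℬ.eq_empty_or_nonempty with rfl | hne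
  · have hroom : ∀ K, HasRoom 𝒩 C K := fun K I hI hCI => by
      obtain ⟨B, hB, -⟩ := hcover I hI hCI
      exact hB.elim
    exact ⟨⊥, isClosed_singleton, Reduces.of_mem h𝒩 h𝒩.bot_mem, bot_le, hroom _, hroom _⟩
  obtain ⟨B, rfl⟩ := hcount.exists_eq_range hne
  obtain ⟨G, hG, hortho⟩ := hna.exists_orthogonal_reducing h𝒩 hCclosed hC (B := fun n => B (n / 2))
    (fun n => hℬ ⟨_, rfl⟩) fun n => hCℬ _ ⟨_, rfl⟩
  have hroom : ∀ {K : Submodule 𝕜 H}, (∀ n, ∃ m, m / 2 = n ∧ G m ≤ K) → HasRoom 𝒩 C K := by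
    intro K hK I hI hCI
    obtain ⟨_, ⟨n, rfl⟩, hn⟩ := hcover I hI hCI
    obtain ⟨m, rfl, hm⟩ := hK n
    exact ne_bot_of_le_ne_bot (hG m).2.2 (le_inf hm (((hG m).2.1.trans inf_le_right).trans hn))
  refine ⟨(⨆ n, G (2 * n)).topologicalClosure, Submodule.isClosed_topologicalClosure _,
    (Reduces.iSup fun n => (hG _).1).topologicalClosure, ?_, hroom fun n => ⟨2 * n, by omega, ?_⟩,
    hroom fun n => ⟨2 * n + 1, by omega, le_inf ((hG _).2.1.trans inf_le_left) ?_⟩⟩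
  · exact Submodule.topologicalClosure_minimal _
      (iSup_le fun n => (hG _).2.1.trans inf_le_left) hCclosed
  · exact (le_iSup (fun n => G (2 * n)) n).trans (Submodule.le_topologicalClosure _)
  · rw [Submodule.orthogonal_closure, ← Submodule.iInf_orthogonal]
    exact le_iInf fun k => hortho (by omega : 2 * n + 1 ≠ 2 * k)

end Splitting

/-! ### Approximate factorizations of the identity -/

section Transfer

variable {𝕜 H ι : Type*} [RCLike 𝕜] [NormedAddCommGroup H] [InnerProductSpace 𝕜 H] [Fintype ι]
  {e f g : ι → H}

variable (𝕜) in
/-- The operator that carries each member of the orthonormal family `f` to the member of `e` with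
the same index and vanishes on the orthogonal complement of `f`. -/
noncomputable def transfer (e f : ι → H) : H →L[𝕜] H :=
  ∑ i, InnerProductSpace.rankOne 𝕜 (e i) (f i)

lemma transfer_apply (e f : ι → H) (x : H) :
    transfer 𝕜 e f x = ∑ i, inner 𝕜 (f i) x • e i := by
  simp only [transfer, sum_apply, InnerProductSpace.rankOne_apply]

lemma norm_transfer_le_one (he : Orthonormal 𝕜 e) (hf : Orthonormal 𝕜 f) :
    ‖transfer 𝕜 e f‖ ≤ 1 := by
  refine ContinuousLinearMap.opNorm_le_bound _ zero_le_one fun x => ?_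
  rw [one_mul, transfer_apply]
  refine le_of_sq_le_sq ?_ (norm_nonneg _)
  have hnorm : ‖∑ i, inner 𝕜 (f i) x • e i‖ ^ 2 = ∑ i, ‖inner 𝕜 (f i) x‖ ^ 2 := by
    have hinner := he.inner_sum (fun i => inner 𝕜 (f i) x) (fun i => inner 𝕜 (f i) x) Finset.univ
    simp only [inner_self_eq_norm_sq_to_K, RCLike.conj_mul] at hinner
    exact_mod_cast hinner
  rw [hnorm]
  exact hf.sum_inner_products_le x

lemma transfer_transfer (hf : Orthonormal 𝕜 f) (x : H) :
    transfer 𝕜 e f (transfer 𝕜 f g x) = transfer 𝕜 e g x := by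
  rw [transfer_apply e f, transfer_apply e g]
  refine Finset.sum_congr rfl fun i _ => ?_
  rw [transfer_apply, hf.inner_right_fintype]

lemma transfer_mem_nestAlgebra {𝒩 : Set (Submodule 𝕜 H)} (hchain : IsChain (· ≤ ·) 𝒩)
    {N : ι → Submodule 𝕜 H} (hN : ∀ i, N i ∈ 𝒩) (he : ∀ i, e i ∈ N i) (hf : ∀ i, f i ∈ (N i)ᗮ) :
    transfer 𝕜 e f ∈ nestAlgebra 𝒩 :=
  sum_mem fun i _ => rankOne_mem_nestAlgebra hchain (hN i) (he i) (hf i)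

lemma orthonormal_of_mem_steps {n : ℕ} {N : ℕ → Submodule 𝕜 H} (hN : Monotone N)
    {u : Fin n → H} (hu : ∀ i, ‖u i‖ = 1) (hstep : ∀ i : Fin n, u i ∈ N (i + 1) ⊓ (N i)ᗮ) :
    Orthonormal 𝕜 u := by
  have hlt : ∀ {i j : Fin n}, i < j → inner 𝕜 (u i) (u j) = 0 := fun {i j} hij =>
    Submodule.inner_right_of_mem_orthogonal (hN (Nat.succ_le_of_lt hij) (hstep i).1) (hstep j).2
  exact ⟨hu, fun i j hij => hij.lt_or_gt.elim hlt fun h => inner_eq_zero_symm.1 (hlt h)⟩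

variable [CompleteSpace H] {K : Submodule 𝕜 H}

lemma proj_mul_transfer (he : ∀ i, e i ∈ K) : proj K * transfer 𝕜 e f = transfer 𝕜 e f := by
  ext x
  rw [mul_apply_eq_comp, transfer_apply]
  exact proj_eq_self (K.sum_mem fun i _ => K.smul_mem _ (he i))

lemma transfer_mul_proj (hf : ∀ i, f i ∈ K) : transfer 𝕜 e f * proj K = transfer 𝕜 e f := by
  ext x
  simp only [mul_apply_eq_comp, transfer_apply, ← inner_proj_left, proj_eq_self (hf _)]

end Transfer

section Equipartition

variable {𝕜 H : Type*} [RCLike 𝕜] [NormedAddCommGroup H] [InnerProductSpace 𝕜 H]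
  [CompleteSpace H] {𝒩 : Set (Submodule 𝕜 H)} {C K M : Submodule 𝕜 H} {N : ℕ → Submodule 𝕜 H}
  {w : H} {s : ℝ} {n : ℕ}

lemma IsNest.norm_sq_proj_sub_proj (h𝒩 : IsNest 𝒩) {M N : Submodule 𝕜 H} (hM : M ∈ 𝒩)
    (hN : N ∈ 𝒩) (x : H) : ‖proj M x - proj N x‖ ^ 2 = |‖proj M x‖ ^ 2 - ‖proj N x‖ ^ 2| := by
  rcases h𝒩.isChain.total hM hN with h | h
  · rw [norm_sub_rev, abs_sub_comm, ← _root_.norm_sq_proj_sub_proj h, abs_of_nonneg (sq_nonneg _)]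
  · rw [← _root_.norm_sq_proj_sub_proj h, abs_of_nonneg (sq_nonneg _)]

/-- `N` cuts `w` into `n` pieces of norm `s`. -/
structure IsEquipartition (N : ℕ → Submodule 𝕜 H) (w : H) (n : ℕ) (s : ℝ) : Prop where
  isClosed : ∀ i, IsClosed (N i : Set H)
  monotone : Monotone N
  norm_sq_proj : ∀ i ≤ n, ‖proj (N i) w‖ ^ 2 = i * s ^ 2

lemma IsNonatomic.exists_isEquipartition (h𝒩 : IsNest 𝒩) (hC : Reduces 𝒩 C)
    (hna : IsNonatomic 𝒩 C) (hw : w ∈ C) (hs : 0 ≤ s) (hn : n * s ^ 2 ≤ ‖w‖ ^ 2) :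
    ∃ N : ℕ → Submodule 𝕜 H, (∀ i, N i ∈ 𝒩) ∧ IsEquipartition N w n s := by
  obtain ⟨R, hRmono, hR, hRnorm⟩ := hna.exists_monotone_cut h𝒩 hC hw
  refine ⟨fun i => R (√i * s), fun i => hR _, fun i => h𝒩.isClosed _ (hR _),
    fun i j hij => hRmono (by gcongr), fun i hi => ?_⟩
  have hsq : (√i * s) ^ 2 = i * s ^ 2 := by rw [mul_pow, Real.sq_sqrt (Nat.cast_nonneg i)]
  have hle : (√i * s) ^ 2 ≤ ‖w‖ ^ 2 := by
    rw [hsq]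
    exact hn.trans' (by gcongr)
  rw [hRnorm _ ⟨by positivity, le_of_sq_le_sq hle (norm_nonneg w)⟩, hsq]

/-- The `i`-th piece into which `N` cuts `w`, normalized by the common norm `s` of the pieces. -/
noncomputable def piece (N : ℕ → Submodule 𝕜 H) (w : H) (s : ℝ) (i : ℕ) : H :=
  ((s⁻¹ : ℝ) : 𝕜) • proj (N (i + 1) ⊓ (N i)ᗮ) w

namespace IsEquipartition

lemma proj_step (hN : IsEquipartition N w n s) (i : ℕ) :
    proj (N (i + 1) ⊓ (N i)ᗮ) w = proj (N (i + 1)) w - proj (N i) w :=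
  proj_inf_orthogonal (hN.isClosed i) (hN.isClosed _) (hN.monotone i.le_succ) w

lemma piece_mem_step (hN : IsEquipartition N w n s) (i : ℕ) : piece N w s i ∈ N (i + 1) ⊓ (N i)ᗮ :=
  Submodule.smul_mem _ _
    (proj_mem ((hN.isClosed _).inter (Submodule.isClosed_orthogonal _)) w)

lemma piece_mem (hN : IsEquipartition N w n s) (hK : ∀ i, proj (N i) w ∈ K) (i : ℕ) :
    piece N w s i ∈ K := by
  rw [piece, hN.proj_step]
  exact K.smul_mem _ (sub_mem (hK _) (hK _))

lemma norm_sq_proj_step (hN : IsEquipartition N w n s) {i : ℕ} (hi : i < n) :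
    ‖proj (N (i + 1) ⊓ (N i)ᗮ) w‖ ^ 2 = s ^ 2 := by
  rw [hN.proj_step, norm_sq_proj_sub_proj (hN.monotone i.le_succ), hN.norm_sq_proj _ hi,
    hN.norm_sq_proj i hi.le]
  push_cast
  ring

lemma norm_piece (hN : IsEquipartition N w n s) (hs : 0 < s) {i : ℕ} (hi : i < n) :
    ‖piece N w s i‖ = 1 := by
  have hstep : ‖proj (N (i + 1) ⊓ (N i)ᗮ) w‖ = s :=
    (pow_left_inj₀ (norm_nonneg _) hs.le two_ne_zero).1 (hN.norm_sq_proj_step hi)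
  rw [piece, norm_smul, hstep, RCLike.norm_ofReal, abs_of_pos (inv_pos.2 hs),
    inv_mul_cancel₀ hs.ne']

lemma inner_piece (hN : IsEquipartition N w n s) (hs : 0 < s) {i j : ℕ} (hi : i < n) :
    inner 𝕜 (piece N w s i) (proj (N j) w) = if i < j then (s : 𝕜) else 0 := by
  split_ifs with hij
  · rw [← inner_proj_left, proj_eq_self (hN.monotone hij (hN.piece_mem_step i).1), piece,
      inner_smul_left, inner_proj_left, inner_self_proj,
      hN.norm_sq_proj_step hi, RCLike.conj_ofReal]
    norm_cast
    field_simp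
  · exact Submodule.inner_left_of_mem_orthogonal
      (hN.monotone (not_lt.1 hij) (proj_mem (hN.isClosed j) w)) (hN.piece_mem_step i).2

lemma exists_norm_sub_proj_le (hN : IsEquipartition N w n s) (h𝒩 : IsNest 𝒩)
    (hNmem : ∀ i, N i ∈ 𝒩) (hs : 0 < s) (hn : n * s ^ 2 = ‖w‖ ^ 2) (hM : M ∈ 𝒩) :
    ∃ j ≤ n, ‖proj M w - proj (N j) w‖ ≤ s := by
  have hs2 : 0 < s ^ 2 := pow_pos hs 2
  set j := ⌊‖proj M w‖ ^ 2 / s ^ 2⌋₊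
  have hlo : j * s ^ 2 ≤ ‖proj M w‖ ^ 2 := (le_div_iff₀ hs2).1 (Nat.floor_le (by positivity))
  have hhi : ‖proj M w‖ ^ 2 < (j + 1) * s ^ 2 := (div_lt_iff₀ hs2).1 (Nat.lt_floor_add_one _)
  have hjn : j ≤ n := Nat.floor_le_of_le <| (div_le_iff₀ hs2).2 <| hn ▸ by
    gcongr
    exact norm_proj_apply_le M w
  refine ⟨j, hjn, le_of_sq_le_sq ?_ hs.le⟩
  rw [h𝒩.norm_sq_proj_sub_proj hM (hNmem j), hN.norm_sq_proj j hjn,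
    abs_of_nonneg (sub_nonneg.2 hlo)]
  linarith

end IsEquipartition

lemma IsEquipartition.transfer_piece_proj (hN : IsEquipartition N w (n + 2) s) (hs : 0 < s)
    {j : ℕ} (hj : j ≤ n + 2) :
    transfer 𝕜 (fun i : Fin n => piece N w s i) (fun i : Fin n => piece N w s (i + 2))
      (proj (N j) w) = proj (N (j - 2)) w := by
  have hbot : proj (N 0) w = 0 := by simpa using hN.norm_sq_proj 0 (Nat.zero_le _)
  have hterm : ∀ i : Fin n, inner 𝕜 (piece N w s (i + 2)) (proj (N j) w) • piece N w s i =
      if (i : ℕ) + 2 < j then proj (N (i + 1)) w - proj (N i) w else 0 := fun i => by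
    rw [hN.inner_piece hs (by omega), ite_smul, zero_smul, piece, smul_smul, ← RCLike.ofReal_mul,
      mul_inv_cancel₀ hs.ne', RCLike.ofReal_one, one_smul, hN.proj_step]
  have hfilter : (Finset.range n).filter (· + 2 < j) = Finset.range (j - 2) := by
    ext i
    simp only [Finset.mem_filter, Finset.mem_range]
    omega
  rw [transfer_apply, Finset.sum_congr rfl fun i _ => hterm i,
    Fin.sum_univ_eq_sum_range (fun i => if i + 2 < j then proj (N (i + 1)) w - proj (N i) w else 0),
    ← Finset.sum_filter, hfilter, Finset.sum_range_sub (fun i => proj (N i) w), hbot, sub_zero]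

lemma IsEquipartition.norm_transfer_proj_sub_le (hN : IsEquipartition N w (n + 2) s)
    (h𝒩 : IsNest 𝒩) (hNmem : ∀ i, N i ∈ 𝒩) (hs : 0 < s)
    (hn : ((n + 2 : ℕ) : ℝ) * s ^ 2 = ‖w‖ ^ 2) (hM : M ∈ 𝒩) {T : H →L[𝕜] H} (hT : ‖T‖ ≤ 1)
    (hTN : ∀ j ≤ n + 2, T (proj (N j) w) = proj (N (j - 2)) w) :
    ‖T (proj M w) - proj M w‖ ≤ 4 * s := by
  obtain ⟨j, hj, hMj⟩ := hN.exists_norm_sub_proj_le h𝒩 hNmem hs hn hM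
  have hshift : ‖proj (N (j - 2)) w - proj (N j) w‖ ≤ 2 * s := by
    refine le_of_sq_le_sq ?_ (by positivity)
    have hj2 : (j : ℝ) ≤ (j - 2 : ℕ) + 2 := by norm_cast; omega
    rw [norm_sub_rev, _root_.norm_sq_proj_sub_proj (hN.monotone (Nat.sub_le j 2)),
      hN.norm_sq_proj j hj, hN.norm_sq_proj _ ((Nat.sub_le j 2).trans hj)]
    nlinarith [sq_nonneg s]
  have hsplit : T (proj M w) - proj M w = T (proj M w - proj (N j) w) +
      (proj (N (j - 2)) w - proj (N j) w) - (proj M w - proj (N j) w) := by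
    rw [map_sub, hTN j hj]
    abel
  calc ‖T (proj M w) - proj M w‖
      ≤ ‖T (proj M w - proj (N j) w)‖ + ‖proj (N (j - 2)) w - proj (N j) w‖ +
          ‖proj M w - proj (N j) w‖ := by
        rw [hsplit]
        exact (norm_sub_le _ _).trans (add_le_add_left (norm_add_le _ _) _)
    _ ≤ s + 2 * s + s := by
        gcongr
        exact (T.le_of_opNorm_le_of_le hT hMj).trans_eq (one_mul s)
    _ = 4 * s := by ring

end Equipartition

section Room

variable {𝕜 H : Type*} [RCLike 𝕜] [NormedAddCommGroup H] [InnerProductSpace 𝕜 H]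
  {𝒩 : Set (Submodule 𝕜 H)} {C I K : Submodule 𝕜 H}

lemma exists_norm_eq_one_mem_orthogonal (hK : ¬ FiniteDimensional 𝕜 K) (W : Submodule 𝕜 H)
    [FiniteDimensional 𝕜 W] : ∃ y ∈ K ⊓ Wᗮ, ‖y‖ = 1 := by
  refine exists_norm_eq_one_of_ne_bot fun hbot => hK ?_
  refine FiniteDimensional.of_injective (W.orthogonalProjectionOnto.toLinearMap ∘ₗ K.subtype)
    (LinearMap.ker_eq_bot.1 ((Submodule.eq_bot_iff _).2 fun x hx => Subtype.ext ?_))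
  exact (Submodule.eq_bot_iff _).1 hbot x
    ⟨x.2, Submodule.orthogonalProjectionOnto_eq_zero_iff.1 hx⟩

variable [CompleteSpace H]

lemma IsNonatomic.not_finiteDimensional_inf (h𝒩 : IsNest 𝒩) (hKclosed : IsClosed (K : Set H))
    (hK : Reduces 𝒩 K) (hna : IsNonatomic 𝒩 K) (hI : I ∈ intervals 𝒩) (hKI : K ⊓ I ≠ ⊥) :
    ¬ FiniteDimensional 𝕜 ↥(K ⊓ I) := by
  intro hfin
  obtain ⟨G, hG, hortho⟩ := hna.exists_orthogonal_reducing h𝒩 hKclosed hK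
    (B := fun _ => I) (fun _ => hI) fun _ => hKI
  choose g hg hg1 using fun n => exists_norm_eq_one_of_ne_bot (hG n).2.2
  have hgon : Orthonormal 𝕜 fun n => (⟨g n, (hG n).2.1 (hg n)⟩ : ↥(K ⊓ I)) :=
    ⟨hg1, fun m n hmn => (hortho hmn).inner_eq (hg m) (hg n)⟩
  have := hgon.linearIndependent.finite
  exact not_finite ℕ

lemma HasRoom.exists_norm_eq_one (h𝒩 : IsNest 𝒩) (hKclosed : IsClosed (K : Set H))
    (hK : Reduces 𝒩 K) (hna : IsNonatomic 𝒩 K) (hroom : HasRoom 𝒩 C K) (hI : I ∈ intervals 𝒩)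
    (hCI : C ⊓ I ≠ ⊥) (W : Submodule 𝕜 H) [FiniteDimensional 𝕜 W] :
    ∃ y ∈ K ⊓ I ⊓ Wᗮ, ‖y‖ = 1 :=
  exists_norm_eq_one_mem_orthogonal
    (hna.not_finiteDimensional_inf h𝒩 hKclosed hK hI (hroom I hI hCI)) W

end Room

section CyclicSubspace

variable {𝕜 H : Type*} [RCLike 𝕜] [NormedAddCommGroup H] [InnerProductSpace 𝕜 H]
  [CompleteSpace H] {𝒩 : Set (Submodule 𝕜 H)} {K N : Submodule 𝕜 H} {w : H}

/-- The smallest closed subspace that contains `w` and reduces the nest `𝒩`. -/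
noncomputable def cyclicSubspace (𝒩 : Set (Submodule 𝕜 H)) (w : H) : Submodule 𝕜 H :=
  (Submodule.span 𝕜 ((proj · w) '' 𝒩)).topologicalClosure

lemma isClosed_cyclicSubspace (𝒩 : Set (Submodule 𝕜 H)) (w : H) :
    IsClosed (cyclicSubspace 𝒩 w : Set H) :=
  Submodule.isClosed_topologicalClosure _

lemma proj_mem_cyclicSubspace (hN : N ∈ 𝒩) (w : H) : proj N w ∈ cyclicSubspace 𝒩 w :=
  Submodule.le_topologicalClosure _ (Submodule.subset_span ⟨N, hN, rfl⟩)

lemma IsNest.mem_cyclicSubspace (h𝒩 : IsNest 𝒩) (w : H) : w ∈ cyclicSubspace 𝒩 w := by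
  simpa only [proj_eq_self (Submodule.mem_top (x := w))] using
    proj_mem_cyclicSubspace h𝒩.top_mem w

lemma Reduces.cyclicSubspace_le (hKclosed : IsClosed (K : Set H)) (hK : Reduces 𝒩 K)
    (hw : w ∈ K) : cyclicSubspace 𝒩 w ≤ K := by
  refine Submodule.topologicalClosure_minimal _ (Submodule.span_le.2 ?_) hKclosed
  rintro _ ⟨N, hN, rfl⟩
  exact hK N hN w hw

lemma IsNest.reduces_cyclicSubspace (h𝒩 : IsNest 𝒩) (w : H) :
    Reduces 𝒩 (cyclicSubspace 𝒩 w) := by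
  refine (Reduces.span ?_).topologicalClosure
  rintro M hM _ ⟨N, hN, rfl⟩
  refine Submodule.subset_span ?_
  rcases h𝒩.isChain.total hM hN with h | h
  · exact ⟨M, hM, (proj_proj_of_le h w).symm⟩
  · exact ⟨N, hN, (proj_proj_of_ge h w).symm⟩

end CyclicSubspace

section StrongConvergence

variable {𝕜 H : Type*} [RCLike 𝕜] [NormedAddCommGroup H] [InnerProductSpace 𝕜 H]

lemma tendsto_apply_of_mem_closure_span {T : ℕ → H →L[𝕜] H} (hT : ∀ k, ‖T k‖ ≤ 1) {X : Set H}
    (hX : ∀ x ∈ X, Filter.Tendsto (fun k => T k x) Filter.atTop (𝓝 x)) {v : H}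
    (hv : v ∈ (Submodule.span 𝕜 X).topologicalClosure) :
    Filter.Tendsto (fun k => T k v) Filter.atTop (𝓝 v) := by
  have hequi : Equicontinuous fun k x => T k x :=
    (LipschitzWith.uniformEquicontinuous _ 1 fun k =>
      (T k).lipschitz.weaken (by exact_mod_cast hT k)).equicontinuous
  have hspan : ∀ x ∈ Submodule.span 𝕜 X, Filter.Tendsto (fun k => T k x) Filter.atTop (𝓝 x) := by
    intro x hx
    induction hx using Submodule.span_induction with
    | mem x hx => exact hX x hx
    | zero => simp
    | add x y _ _ hx hy => simpa using hx.add hy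
    | smul c x _ hx => simpa using hx.const_smul c
  exact closure_minimal hspan
    (hequi.isClosed_setOfPred_tendsto (l := Filter.atTop) continuous_id) hv

lemma norm_map_sub_le_of_orthonormalBasis {ι : Type*} [Fintype ι] {E : Submodule 𝕜 H}
    (b : OrthonormalBasis ι 𝕜 E) {T : H →L[𝕜] H} {ε : ℝ} (hT : ∀ i, ‖T (b i) - b i‖ ≤ ε)
    {u : H} (hu : u ∈ E) : ‖T u - u‖ ≤ Fintype.card ι * ε * ‖u‖ := by
  have hsum : T u - u = ∑ i, inner 𝕜 (b i : H) u • (T (b i) - b i) := by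
    have hrepr : ∑ i, inner 𝕜 (b i : H) u • (b i : H) = u := by
      simpa using congrArg Subtype.val (b.sum_repr' ⟨u, hu⟩)
    conv_lhs => rw [← hrepr]
    simp only [map_sum, map_smul, smul_sub, Finset.sum_sub_distrib]
  calc ‖T u - u‖ ≤ ∑ _i : ι, ‖u‖ * ε := by
        rw [hsum]
        refine norm_sum_le_of_le _ fun i _ => ?_
        rw [norm_smul]
        refine mul_le_mul ?_ (hT i) (norm_nonneg _) (norm_nonneg _)
        exact (norm_inner_le_norm _ _).trans_eq <| by
          rw [← Submodule.coe_norm, b.norm_eq_one, one_mul]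
    _ = Fintype.card ι * ε * ‖u‖ := by
        rw [Finset.sum_const, Finset.card_univ, nsmul_eq_mul]
        ring

end StrongConvergence

section ApproxFactors

variable {𝕜 H : Type*} [RCLike 𝕜] [NormedAddCommGroup H] [InnerProductSpace 𝕜 H]
  [CompleteSpace H] {𝒩 : Set (Submodule 𝕜 H)} {C J K L J₁ J₂ K₁ K₂ : Submodule 𝕜 H}
  {S T : H →L[𝕜] H} {w : H}

/-- `T` is a contraction from `J` into `K` that leaves every subspace in `𝒩` invariant, extended
by zero to the orthogonal complement of `J`. -/
structure IsNestContraction (𝒩 : Set (Submodule 𝕜 H)) (J K : Submodule 𝕜 H) (T : H →L[𝕜] H) :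
    Prop where
  mem : T ∈ nestAlgebra 𝒩
  norm_le_one : ‖T‖ ≤ 1
  proj_mul : proj K * T = T
  mul_proj : T * proj J = T

namespace IsNestContraction

lemma zero (J K : Submodule 𝕜 H) : IsNestContraction 𝒩 J K 0 :=
  ⟨zero_mem _, by simp, mul_zero _, zero_mul _⟩

lemma mono (hT : IsNestContraction 𝒩 J₁ K₁ T) (hJ : J₁ ≤ J₂) (hK : K₁ ≤ K₂) :
    IsNestContraction 𝒩 J₂ K₂ T where
  mem := hT.mem
  norm_le_one := hT.norm_le_one
  proj_mul := by rw [← hT.proj_mul, ← mul_assoc, proj_mul_proj_of_ge hK]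
  mul_proj := by rw [← hT.mul_proj, mul_assoc, proj_mul_proj_of_le hJ]

lemma norm_apply_le (hT : IsNestContraction 𝒩 J K T) (x : H) : ‖T x‖ ≤ ‖proj J x‖ := by
  rw [← hT.mul_proj, mul_apply_eq_comp]
  exact (T.le_of_opNorm_le hT.norm_le_one _).trans_eq (one_mul _)

lemma mul_eq_zero (hS : IsNestContraction 𝒩 J K S) (hT : IsNestContraction 𝒩 J₁ K₁ T)
    (h : J ⟂ K₁) : S * T = 0 := by
  rw [← hS.mul_proj, ← hT.proj_mul, mul_assoc, ← mul_assoc (proj J), proj_mul_proj_of_isOrtho h,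
    zero_mul, mul_zero]

lemma add (hS : IsNestContraction 𝒩 J₁ K₁ S) (hT : IsNestContraction 𝒩 J₂ K₂ T) (hJ : J₁ ⟂ J₂)
    (hK : K₁ ⟂ K₂) : IsNestContraction 𝒩 (J₁ ⊔ J₂) (K₁ ⊔ K₂) (S + T) where
  mem := add_mem hS.mem hT.mem
  norm_le_one := by
    refine ContinuousLinearMap.opNorm_le_bound _ zero_le_one fun x => ?_
    rw [one_mul]
    refine le_of_sq_le_sq ?_ (norm_nonneg _)
    have hinner : inner 𝕜 (S x) (T x) = 0 := by
      rw [← hS.proj_mul, ← hT.proj_mul, mul_apply_eq_comp, mul_apply_eq_comp, inner_proj_left,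
        ← mul_apply_eq_comp, proj_mul_proj_of_isOrtho hK, zero_apply, inner_zero_right]
    calc ‖(S + T) x‖ ^ 2 = ‖S x‖ ^ 2 + ‖T x‖ ^ 2 := by
          rw [add_apply, sq, sq, sq]
          exact norm_add_sq_eq_norm_sq_add_norm_sq_of_inner_eq_zero _ _ hinner
      _ ≤ ‖proj J₁ x‖ ^ 2 + ‖proj J₂ x‖ ^ 2 := by
          gcongr
          exacts [hS.norm_apply_le x, hT.norm_apply_le x]
      _ ≤ ‖x‖ ^ 2 := norm_sq_proj_add_norm_sq_proj_le hJ x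
  proj_mul := by rw [mul_add, (hS.mono le_rfl le_sup_left).proj_mul,
    (hT.mono le_rfl le_sup_right).proj_mul]
  mul_proj := by rw [add_mul, (hS.mono le_sup_left le_rfl).mul_proj,
    (hT.mono le_sup_right le_rfl).mul_proj]

lemma transfer {ι : Type*} [Fintype ι] {e f : ι → H}
    {N : ι → Submodule 𝕜 H} (h𝒩 : IsNest 𝒩) (hN : ∀ i, N i ∈ 𝒩) (he : Orthonormal 𝕜 e)
    (hf : Orthonormal 𝕜 f) (heN : ∀ i, e i ∈ N i) (hfN : ∀ i, f i ∈ (N i)ᗮ)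
    (heK : ∀ i, e i ∈ K) (hfJ : ∀ i, f i ∈ J) : IsNestContraction 𝒩 J K (transfer 𝕜 e f) where
  mem := transfer_mem_nestAlgebra h𝒩.isChain hN heN hfN
  norm_le_one := norm_transfer_le_one he hf
  proj_mul := proj_mul_transfer heK
  mul_proj := transfer_mul_proj hfJ

end IsNestContraction

/-- The identity of `K` is approximated, on finite sets, by products of contractions in the nest
algebra that factor through finite-dimensional subspaces of `L`, which can be chosen orthogonal to
any given finite-dimensional subspace. -/
def ApproxFactors (𝒩 : Set (Submodule 𝕜 H)) (L K : Submodule 𝕜 H) : Prop :=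
  ∀ (W : Submodule 𝕜 H) [FiniteDimensional 𝕜 W] (X : Finset H), (X : Set H) ⊆ K → ∀ ε > 0,
    ∃ V ≤ L ⊓ Wᗮ, FiniteDimensional 𝕜 V ∧ ∃ α β, IsNestContraction 𝒩 V K α ∧
      IsNestContraction 𝒩 K V β ∧ ∀ x ∈ X, ‖α (β x) - x‖ ≤ ε

lemma exists_nat_mul_sq_eq {r δ : ℝ} (hr : 0 < r) (hδ : 0 < δ) :
    ∃ (n : ℕ) (s : ℝ), 0 < s ∧ s ≤ δ ∧ ((n + 2 : ℕ) : ℝ) * s ^ 2 = r ^ 2 := by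
  obtain ⟨n, hn⟩ := exists_nat_ge ((r / δ) ^ 2)
  have hn2 : (0 : ℝ) < (n + 2 : ℕ) := by positivity
  refine ⟨n, r / √(n + 2 : ℕ), by positivity, ?_, ?_⟩
  · rw [div_le_comm₀ (Real.sqrt_pos.2 hn2) hδ]
    refine Real.le_sqrt_of_sq_le (hn.trans ?_)
    exact_mod_cast Nat.le_add_right n 2
  · rw [div_pow, Real.sq_sqrt hn2.le, mul_div_cancel₀ _ hn2.ne']

/- The pieces of `w` are shifted down by two steps through orthonormal vectors `f i` of `L`, which
have to lie in the steps in between for both factors to be in the nest algebra. -/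
lemma IsEquipartition.exists_factorization {N : ℕ → Submodule 𝕜 H} {s : ℝ} {n : ℕ}
    (hN : IsEquipartition N w (n + 2) s) (h𝒩 : IsNest 𝒩) (hNmem : ∀ i, N i ∈ 𝒩) (hs : 0 < s)
    (hn : ((n + 2 : ℕ) : ℝ) * s ^ 2 = ‖w‖ ^ 2) {f : Fin n → H} (hf1 : ∀ i, ‖f i‖ = 1)
    (hf : ∀ i : Fin n, f i ∈ N ((i : ℕ) + 1 + 1) ⊓ (N ((i : ℕ) + 1))ᗮ) (hfL : ∀ i, f i ∈ L) :
    ∃ α β, IsNestContraction 𝒩 L (cyclicSubspace 𝒩 w) α ∧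
      IsNestContraction 𝒩 (cyclicSubspace 𝒩 w) L β ∧
      ∀ M ∈ 𝒩, ‖α (β (proj M w)) - proj M w‖ ≤ 4 * s := by
  set e : Fin n → H := fun i => piece N w s i
  set g : Fin n → H := fun i => piece N w s (i + 2)
  have hpiece : ∀ i, piece N w s i ∈ cyclicSubspace 𝒩 w :=
    hN.piece_mem fun i => proj_mem_cyclicSubspace (hNmem i) w
  have hstep : ∀ i, piece N w s i ∈ N (i + 1) ⊓ (N i)ᗮ := hN.piece_mem_step
  have he : Orthonormal 𝕜 e :=
    orthonormal_of_mem_steps hN.monotone (fun i => hN.norm_piece hs (by omega)) fun i => hstep i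
  have hforth : Orthonormal 𝕜 f :=
    orthonormal_of_mem_steps (N := fun i => N (i + 1)) (fun i j h => hN.monotone (by omega)) hf1 hf
  have hg : Orthonormal 𝕜 g :=
    orthonormal_of_mem_steps (N := fun i => N (i + 2)) (fun i j h => hN.monotone (by omega))
      (fun i => hN.norm_piece hs (by omega)) fun i => hN.piece_mem_step (i + 2)
  have hα : IsNestContraction 𝒩 L (cyclicSubspace 𝒩 w) (transfer 𝕜 e f) :=
    .transfer h𝒩 (fun i => hNmem (i + 1)) he hforth (fun i => (hstep i).1) (fun i => (hf i).2)
      (fun i => hpiece i) hfL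
  have hβ : IsNestContraction 𝒩 (cyclicSubspace 𝒩 w) L (transfer 𝕜 f g) :=
    .transfer h𝒩 (fun i => hNmem (i + 2)) hforth hg (fun i => (hf i).1)
      (fun i => (hstep (i + 2)).2) hfL fun i => hpiece (i + 2)
  refine ⟨_, _, hα, hβ, fun M hM => ?_⟩
  rw [transfer_transfer hforth]
  exact hN.norm_transfer_proj_sub_le h𝒩 hNmem hs hn hM (norm_transfer_le_one he hg) fun j hj =>
    hN.transfer_piece_proj hs hj

lemma HasRoom.exists_factorization_cyclicSubspace (h𝒩 : IsNest 𝒩) (hC : Reduces 𝒩 C)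
    (hna : IsNonatomic 𝒩 C) (hLclosed : IsClosed (L : Set H)) (hL : Reduces 𝒩 L) (hLC : L ≤ C)
    (hroom : HasRoom 𝒩 C L) (hw : w ∈ C) (W : Submodule 𝕜 H) [FiniteDimensional 𝕜 W] {δ : ℝ}
    (hδ : 0 < δ) :
    ∃ V ≤ L ⊓ Wᗮ, FiniteDimensional 𝕜 V ∧ ∃ α β, IsNestContraction 𝒩 V (cyclicSubspace 𝒩 w) α ∧
      IsNestContraction 𝒩 (cyclicSubspace 𝒩 w) V β ∧
      ∀ N ∈ 𝒩, ‖α (β (proj N w)) - proj N w‖ ≤ δ := by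
  rcases eq_or_ne w 0 with rfl | hw0
  · exact ⟨⊥, bot_le, inferInstance, 0, 0, .zero _ _, .zero _ _, fun N _ => by simpa using hδ.le⟩
  obtain ⟨n, s, hs, hsδ, hn⟩ := exists_nat_mul_sq_eq (norm_pos_iff.2 hw0) (div_pos hδ four_pos)
  obtain ⟨N, hNmem, hN⟩ := hna.exists_isEquipartition h𝒩 hC hw hs.le hn.le
  have hpiece : ∀ i, piece N w s i ∈ C := hN.piece_mem fun j => hC _ (hNmem j) w hw
  have hmid : ∀ i : Fin n,
      ∃ y ∈ L ⊓ (N ((i : ℕ) + 1 + 1) ⊓ (N ((i : ℕ) + 1))ᗮ) ⊓ Wᗮ, ‖y‖ = 1 := fun i => by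
    have hne : piece N w s (i + 1) ≠ 0 := norm_ne_zero_iff.1 <| by
      rw [hN.norm_piece hs (by omega)]
      exact one_ne_zero
    exact hroom.exists_norm_eq_one h𝒩 hLclosed hL (hna.mono hLC)
      ⟨_, hNmem _, _, hNmem _, hN.monotone (Nat.le_succ _), rfl⟩
      ((Submodule.ne_bot_iff _).2 ⟨_, ⟨hpiece _, hN.piece_mem_step _⟩, hne⟩) W
  choose f hf hf1 using hmid
  have hspan : Submodule.span 𝕜 (Set.range f) ≤ L ⊓ Wᗮ :=
    Submodule.span_le.2 (Set.range_subset_iff.2 fun i => ⟨(hf i).1.1, (hf i).2⟩)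
  obtain ⟨α, β, hα, hβ, hαβ⟩ := hN.exists_factorization h𝒩 hNmem hs hn hf1 (fun i => (hf i).1.2)
    fun i => Submodule.subset_span (Set.mem_range_self i)
  exact ⟨_, hspan, FiniteDimensional.span_of_finite 𝕜 (Set.finite_range f), α, β, hα, hβ,
    fun M hM => (hαβ M hM).trans (by linarith)⟩

namespace ApproxFactors

lemma cyclicSubspace (h𝒩 : IsNest 𝒩) (hC : Reduces 𝒩 C) (hna : IsNonatomic 𝒩 C)
    (hLclosed : IsClosed (L : Set H)) (hL : Reduces 𝒩 L) (hLC : L ≤ C) (hroom : HasRoom 𝒩 C L)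
    (hw : w ∈ C) : ApproxFactors 𝒩 L (cyclicSubspace 𝒩 w) := by
  intro W _ X hX ε hε
  choose V hV hVfin α β hα hβ hαβ using fun k : ℕ =>
    hroom.exists_factorization_cyclicSubspace h𝒩 hC hna hLclosed hL hLC hw W
      (δ := 1 / ((k : ℝ) + 1)) (by positivity)
  have hnorm : ∀ k, ‖α k * β k‖ ≤ 1 := fun k =>
    (norm_mul_le _ _).trans (mul_le_one₀ (hα k).norm_le_one (norm_nonneg _) (hβ k).norm_le_one)
  have hlim : ∀ x ∈ X, Filter.Tendsto (fun k => (α k * β k) x) Filter.atTop (𝓝 x) := by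
    refine fun x hx => tendsto_apply_of_mem_closure_span hnorm ?_ (hX hx)
    rintro _ ⟨N, hN, rfl⟩
    rw [tendsto_iff_norm_sub_tendsto_zero]
    exact squeeze_zero (fun _ => norm_nonneg _) (fun k => hαβ k N hN)
      tendsto_one_div_add_atTop_nhds_zero_nat
  have hev : ∀ᶠ k in Filter.atTop, ∀ x ∈ X, ‖(α k * β k) x - x‖ < ε :=
    (Filter.eventually_all_finset X).2 fun x hx =>
      (tendsto_iff_norm_sub_tendsto_zero.1 (hlim x hx)).eventually_lt_const hε
  obtain ⟨k, hk⟩ := hev.exists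
  exact ⟨V k, hV k, hVfin k, α k, β k, hα k, hβ k, fun x hx => (hk x hx).le⟩

lemma bot (𝒩 : Set (Submodule 𝕜 H)) (L : Submodule 𝕜 H) : ApproxFactors 𝒩 L ⊥ := by
  intro W _ X hX ε hε
  refine ⟨⊥, bot_le, inferInstance, 0, 0, .zero _ _, .zero _ _, fun x hx => ?_⟩
  obtain rfl : x = 0 := hX hx
  simpa using hε.le

lemma sup (h₁ : ApproxFactors 𝒩 L K₁) (h₂ : ApproxFactors 𝒩 L K₂) (hK₁ : IsClosed (K₁ : Set H))
    (hK₂ : IsClosed (K₂ : Set H)) (hK : K₁ ⟂ K₂) :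
    ApproxFactors 𝒩 L (K₁ ⊔ K₂).topologicalClosure := by
  classical
  intro W _ X hX ε hε
  have himage : ∀ {K : Submodule 𝕜 H}, IsClosed (K : Set H) → (X.image (proj K) : Set H) ⊆ K := by
    intro K hKcl
    rw [Finset.coe_image, Set.image_subset_iff]
    exact fun x _ => proj_mem hKcl x
  obtain ⟨V₁, hV₁, _, α₁, β₁, hα₁, hβ₁, h₁⟩ := h₁ W _ (himage hK₁) (ε / 2) (half_pos hε)
  obtain ⟨V₂, hV₂, _, α₂, β₂, hα₂, hβ₂, h₂⟩ := h₂ (W ⊔ V₁) _ (himage hK₂) (ε / 2) (half_pos hε)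
  have hV₂W : V₂ ≤ Wᗮ ⊓ V₁ᗮ := by
    rw [Submodule.inf_orthogonal]
    exact hV₂.trans inf_le_right
  have hV : V₁ ⟂ V₂ := Submodule.IsOrtho.symm (hV₂W.trans inf_le_right)
  have hcl := Submodule.le_topologicalClosure (K₁ ⊔ K₂)
  refine ⟨V₁ ⊔ V₂, sup_le hV₁ (le_inf (hV₂.trans inf_le_left) (hV₂W.trans inf_le_left)),
    inferInstance, α₁ + α₂, β₁ + β₂, (hα₁.add hα₂ hV hK).mono le_rfl hcl,
    (hβ₁.add hβ₂ hK hV).mono hcl le_rfl, fun x hx => ?_⟩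
  have hx_eq : x = proj K₁ x + proj K₂ x := by
    rw [← add_apply, ← proj_sup_of_isOrtho hK, ← proj_topologicalClosure,
      proj_eq_self (hX hx)]
  have hprod : (α₁ + α₂) * (β₁ + β₂) = α₁ * β₁ * proj K₁ + α₂ * β₂ * proj K₂ := by
    rw [mul_assoc, hβ₁.mul_proj, mul_assoc, hβ₂.mul_proj, add_mul, mul_add, mul_add,
      hα₁.mul_eq_zero hβ₂ hV, hα₂.mul_eq_zero hβ₁ hV.symm, add_zero, zero_add]
  have hdiff : (α₁ + α₂) ((β₁ + β₂) x) - x =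
      (α₁ (β₁ (proj K₁ x)) - proj K₁ x) + (α₂ (β₂ (proj K₂ x)) - proj K₂ x) := by
    calc (α₁ + α₂) ((β₁ + β₂) x) - x
        = (α₁ * β₁ * proj K₁ + α₂ * β₂ * proj K₂) x - (proj K₁ x + proj K₂ x) := by
          rw [← hprod, ← hx_eq, mul_apply_eq_comp]
      _ = _ := add_sub_add_comm _ _ _ _
  rw [hdiff]
  exact (norm_add_le_of_le (h₁ _ (Finset.mem_image_of_mem _ hx))
    (h₂ _ (Finset.mem_image_of_mem _ hx))).trans_eq (add_halves ε)

end ApproxFactors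

lemma HasRoom.exists_reducing_approxFactors (h𝒩 : IsNest 𝒩) (hC : Reduces 𝒩 C)
    (hna : IsNonatomic 𝒩 C) (hLclosed : IsClosed (L : Set H)) (hL : Reduces 𝒩 L) (hLC : L ≤ C)
    (hroom : HasRoom 𝒩 C L) (hKclosed : IsClosed (K : Set H)) (hK : Reduces 𝒩 K) (hKC : K ≤ C)
    (X : Finset H) (hX : (X : Set H) ⊆ K) :
    ∃ J ≤ K, (X : Set H) ⊆ J ∧ IsClosed (J : Set H) ∧ Reduces 𝒩 J ∧ ApproxFactors 𝒩 L J := by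
  classical
  induction X using Finset.induction_on with
  | empty => exact ⟨⊥, bot_le, by simp, isClosed_singleton, .of_mem h𝒩 h𝒩.bot_mem, .bot 𝒩 L⟩
  | insert v X _ ih =>
    rw [Finset.coe_insert, Set.insert_subset_iff] at hX
    obtain ⟨J, hJK, hXJ, hJclosed, hJ, hfactors⟩ := ih hX.2
    set w := v - proj J v
    have hwK : w ∈ K := K.sub_mem hX.1 (hJK (proj_mem hJclosed v))
    have hortho : J ⟂ cyclicSubspace 𝒩 w := Submodule.IsOrtho.symm <|
      hJ.orthogonal.cyclicSubspace_le (Submodule.isClosed_orthogonal J)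
        (sub_proj_mem_orthogonal J v)
    have hv : v ∈ J ⊔ cyclicSubspace 𝒩 w := by
      rw [← add_sub_cancel (proj J v) v]
      exact Submodule.add_mem_sup (proj_mem hJclosed v) (h𝒩.mem_cyclicSubspace w)
    refine ⟨(J ⊔ cyclicSubspace 𝒩 w).topologicalClosure, ?_, ?_,
      Submodule.isClosed_topologicalClosure _,
      (hJ.sup (h𝒩.reduces_cyclicSubspace w)).topologicalClosure, ?_⟩
    · exact Submodule.topologicalClosure_minimal _
        (sup_le hJK (hK.cyclicSubspace_le hKclosed hwK)) hKclosed
    · rw [Finset.coe_insert, Set.insert_subset_iff]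
      exact ⟨Submodule.le_topologicalClosure _ hv,
        hXJ.trans fun x hx => Submodule.le_topologicalClosure _ (Submodule.mem_sup_left hx)⟩
    · exact hfactors.sup (.cyclicSubspace h𝒩 hC hna hLclosed hL hLC hroom (hKC hwK)) hJclosed
        (isClosed_cyclicSubspace 𝒩 w) hortho

lemma HasRoom.approxFactors (h𝒩 : IsNest 𝒩) (hC : Reduces 𝒩 C)
    (hna : IsNonatomic 𝒩 C) (hLclosed : IsClosed (L : Set H)) (hL : Reduces 𝒩 L) (hLC : L ≤ C)
    (hroom : HasRoom 𝒩 C L) (hKclosed : IsClosed (K : Set H)) (hK : Reduces 𝒩 K) (hKC : K ≤ C) :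
    ApproxFactors 𝒩 L K := by
  intro W _ X hX ε hε
  obtain ⟨J, hJK, hXJ, -, -, hfactors⟩ :=
    hroom.exists_reducing_approxFactors h𝒩 hC hna hLclosed hL hLC hKclosed hK hKC X hX
  obtain ⟨V, hV, hVfin, α, β, hα, hβ, hαβ⟩ := hfactors W X hXJ ε hε
  exact ⟨V, hV, hVfin, α, β, hα.mono le_rfl hJK, hβ.mono hJK le_rfl, hαβ⟩

lemma ApproxFactors.exists_finiteDimensional (h : ApproxFactors 𝒩 L K) (W E : Submodule 𝕜 H)
    [FiniteDimensional 𝕜 W] [FiniteDimensional 𝕜 E] (hE : E ≤ K) {δ : ℝ} (hδ : 0 < δ) :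
    ∃ V ≤ L ⊓ Wᗮ, FiniteDimensional 𝕜 V ∧ ∃ α β, IsNestContraction 𝒩 V K α ∧
      IsNestContraction 𝒩 K V β ∧ ∀ u ∈ E, ‖α (β u) - u‖ ≤ δ * ‖u‖ := by
  classical
  set b := stdOrthonormalBasis 𝕜 E
  set n : ℝ := (Fintype.card (Fin (Module.finrank 𝕜 E)) : ℝ)
  obtain ⟨V, hV, hVfin, α, β, hα, hβ, hαβ⟩ := h W (Finset.univ.image fun i => (b i : H))
    (by simpa [Set.range_subset_iff] using fun i => hE (b i).2) (δ / (n + 1)) (by positivity)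
  refine ⟨V, hV, hVfin, α, β, hα, hβ, fun u hu => ?_⟩
  calc ‖α (β u) - u‖ ≤ n * (δ / (n + 1)) * ‖u‖ :=
        norm_map_sub_le_of_orthonormalBasis (T := α * β) b
          (fun i => hαβ _ (Finset.mem_image_of_mem _ (Finset.mem_univ i))) hu
    _ ≤ δ * ‖u‖ := by
        gcongr
        rw [← mul_div_assoc, div_le_iff₀ (by positivity)]
        nlinarith

end ApproxFactors

section Adjoint

variable {𝕜 H : Type*} [RCLike 𝕜] [NormedAddCommGroup H] [InnerProductSpace 𝕜 H]
  {𝒩 : Set (Submodule 𝕜 H)} {R S : H →L[𝕜] H} {ι : Type*} {T : ι → H →L[𝕜] H}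

lemma mul_eq_of_hasSum (hS : ∀ v, HasSum (fun i => T i v) (S v)) (hT : ∀ i, R * T i = T i) :
    R * S = S := by
  ext v
  refine (R.hasSum (hS v)).unique ?_
  simpa only [← mul_apply_eq_comp, hT] using hS v

lemma eq_mul_of_hasSum (hS : ∀ v, HasSum (fun i => T i v) (S v)) (hT : ∀ i, T i * R = T i) :
    S * R = S := by
  ext v
  refine (hS (R v)).unique ?_
  simpa only [← mul_apply_eq_comp, hT] using hS v

variable [CompleteSpace H]

lemma inner_star_apply (S : H →L[𝕜] H) (x y : H) : inner 𝕜 (star S x) y = inner 𝕜 x (S y) :=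
  S.adjoint_inner_left y x

/- A contraction that nearly fixes `u` nearly attains its norm there, so its adjoint nearly fixes
`u` as well. -/
lemma norm_star_apply_sub_le (hS : ‖S‖ ≤ 1) {u : H} {δ : ℝ} (hδ : 0 ≤ δ)
    (hu : ‖S u - u‖ ≤ δ ^ 2 / 2 * ‖u‖) : ‖star S u - u‖ ≤ δ * ‖u‖ := by
  refine le_of_sq_le_sq ?_ (by positivity)
  have hstar : ‖star S u‖ ^ 2 ≤ ‖u‖ ^ 2 := by
    gcongr
    simpa using (star S).le_of_opNorm_le ((norm_star S).trans_le hS) u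
  have hre : RCLike.re (inner 𝕜 (star S u) u) =
      ‖u‖ ^ 2 + RCLike.re (inner 𝕜 u (S u - u)) := by
    rw [inner_star_apply, inner_sub_right, map_sub, inner_self_eq_norm_sq]
    ring
  have hinner : |RCLike.re (inner 𝕜 u (S u - u))| ≤ δ ^ 2 / 2 * ‖u‖ ^ 2 :=
    calc |RCLike.re (inner 𝕜 u (S u - u))| ≤ ‖u‖ * ‖S u - u‖ :=
          (RCLike.abs_re_le_norm _).trans (norm_inner_le_norm _ _)
      _ ≤ ‖u‖ * (δ ^ 2 / 2 * ‖u‖) := by gcongr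
      _ = δ ^ 2 / 2 * ‖u‖ ^ 2 := by ring
  rw [norm_sub_sq (𝕜 := 𝕜), hre]
  linarith [(abs_le.1 hinner).1]

lemma IsNest.mem_nestAlgebra_of_hasSum_star (h𝒩 : IsNest 𝒩) (hT : ∀ i, T i ∈ nestAlgebra 𝒩)
    (hS : ∀ v, HasSum (fun i => star (T i) v) (star S v)) : S ∈ nestAlgebra 𝒩 := by
  intro N hN x hx
  have hNN : Nᗮᗮ = N := by
    rw [Submodule.orthogonal_orthogonal_eq_closure,
      (h𝒩.isClosed N hN).submodule_topologicalClosure_eq]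
  rw [← hNN]
  refine fun y hy => (inner_star_apply S y x).symm.trans ?_
  refine Submodule.inner_left_of_mem_orthogonal hx ?_
  refine (Submodule.isClosed_orthogonal N).mem_of_tendsto (hS y)
    (Filter.Eventually.of_forall fun s => Nᗮ.sum_mem fun i _ z hz => ?_)
  rw [← inner_conj_symm, inner_star_apply, inner_conj_symm]
  exact Submodule.inner_right_of_mem_orthogonal (hT i N hN z hz) hy

lemma exists_hasSum_mul_of_isOrtho {V : ι → Submodule 𝕜 H} (hV : Pairwise fun i j => V i ⟂ V j)
    {P Q : ι → H →L[𝕜] H} (hP : ∀ i, P i * proj (V i) = P i) (hQ : ∀ i, proj (V i) * Q i = Q i)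
    {C : ℝ} (hC : 0 ≤ C) (hPC : ∀ v, ∀ s : Finset ι, ∑ i ∈ s, ‖star (P i) v‖ ^ 2 ≤ (C * ‖v‖) ^ 2)
    (hQC : ∀ v, ∀ s : Finset ι, ∑ i ∈ s, ‖Q i v‖ ^ 2 ≤ (C * ‖v‖) ^ 2) :
    ∃ Y Z : H →L[𝕜] H, (∀ v, HasSum (fun i => star (P i) v) (star Y v)) ∧
      (∀ v, HasSum (fun i => Q i v) (Z v)) ∧ ∀ v, HasSum (fun i => P i (Q i v)) (Y (Z v)) := by
  have hstar : ∀ i, proj (V i) * star (P i) = star (P i) := fun i => by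
    rw [← star_proj, ← star_mul, hP]
  have hortho : ∀ {A B : H →L[𝕜] H} {i j}, i ≠ j → proj (V i) * A = A → proj (V j) * B = B →
      ∀ x y, inner 𝕜 (A x) (B y) = 0 := by
    intro A B i j hij hA hB x y
    rw [← hA, ← hB, mul_apply_eq_comp, mul_apply_eq_comp, inner_proj_left, ← mul_apply_eq_comp,
      proj_mul_proj_of_isOrtho (hV hij), zero_apply, inner_zero_right]
  obtain ⟨Y, hY, -⟩ := exists_hasSum_of_orthogonal (T := fun i => star (P i))
    (fun i j hij => hortho hij (hstar i) (hstar j)) hC hPC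
  obtain ⟨Z, hZ, -⟩ := exists_hasSum_of_orthogonal (fun i j hij => hortho hij (hQ i) (hQ j)) hC hQC
  have hYQ : ∀ i, star Y * Q i = P i * Q i := by
    intro i
    ext v
    refine ext_inner_right 𝕜 fun y => ?_
    have hsum := (innerSL 𝕜 (Q i v)).hasSum (hY y)
    have hsingle := hasSum_single (f := fun j => inner 𝕜 (Q i v) (star (P j) y)) i
      fun j hj => hortho hj.symm (hQ i) (hstar j) v y
    rw [mul_apply_eq_comp, mul_apply_eq_comp, inner_star_apply, ← star_star (P i),
      inner_star_apply]
    exact hsum.unique hsingle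
  refine ⟨star Y, Z, by simpa only [star_star] using hY, hZ, fun v => ?_⟩
  simpa only [← mul_apply_eq_comp, hYQ] using (star Y).hasSum (hZ v)

end Adjoint

section ApproxIdentity

variable {𝕜 H : Type*} [RCLike 𝕜] [NormedAddCommGroup H] [InnerProductSpace 𝕜 H]
  [CompleteSpace H] {E : ℕ → Submodule 𝕜 H} {S : ℕ → H →L[𝕜] H} {K : Submodule 𝕜 H}

lemma sum_sub_le_of_monotone {a : ℕ → ℝ} (ha : Monotone a) (ha₀ : ∀ k, 0 ≤ a k) {B : ℝ}
    (haB : ∀ k, a k ≤ B) (j : ℕ) (s : Finset ℕ) : ∑ k ∈ s, (a (k + j) - a k) ≤ j * B := by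
  obtain ⟨n, hn⟩ := s.exists_nat_subset_range
  refine (Finset.sum_le_sum_of_subset_of_nonneg hn fun k _ _ =>
    sub_nonneg.2 (ha (Nat.le_add_right k j))).trans ?_
  induction j with
  | zero => simp
  | succ j ih =>
    calc ∑ k ∈ Finset.range n, (a (k + (j + 1)) - a k)
        = ∑ k ∈ Finset.range n, (a (k + 1 + j) - a (k + j)) +
            ∑ k ∈ Finset.range n, (a (k + j) - a k) := by
          rw [← Finset.sum_add_distrib]
          refine Finset.sum_congr rfl fun k _ => ?_
          rw [sub_add_sub_cancel, add_assoc k, add_comm 1 j]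
      _ ≤ B + j * B := by
          rw [Finset.sum_range_sub fun k => a (k + j)]
          exact add_le_add (by linarith [haB (n + j), ha₀ (0 + j)]) ih
      _ = (j + 1 : ℕ) * B := by push_cast; ring

lemma sum_norm_sq_proj_sub_le (hE : Monotone E) (v : H) (j : ℕ) (s : Finset ℕ) :
    ∑ k ∈ s, ‖proj (E (k + j)) v - proj (E k) v‖ ^ 2 ≤ j * ‖v‖ ^ 2 := by
  simp only [norm_sq_proj_sub_proj (hE (Nat.le_add_right _ j))]
  refine sum_sub_le_of_monotone (a := fun k => ‖proj (E k) v‖ ^ 2) ?_ (fun _ => sq_nonneg _) ?_ j s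
  · exact fun k l hkl => by
      dsimp only
      gcongr
      exact norm_proj_apply_mono (hE hkl) v
  · exact fun k => by
      gcongr
      exact norm_proj_apply_le _ v

/-- The contractions `S k` vanish on the complement of `E (k + 1)` and are close to the identity on
`E k`, with a summable error. -/
structure IsApproxIdentity (E : ℕ → Submodule 𝕜 H) (S : ℕ → H →L[𝕜] H) : Prop where
  isClosed : ∀ k, IsClosed (E k : Set H)
  monotone : Monotone E
  norm_le_one : ∀ k, ‖S k‖ ≤ 1
  mul_proj : ∀ k, S k * proj (E (k + 1)) = S k
  norm_sub_le : ∀ k, ∀ u ∈ E k, ‖S k u - u‖ ≤ (1 / 2) ^ k / 64 * ‖u‖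

namespace IsApproxIdentity

lemma norm_apply_le (hS : IsApproxIdentity E S) (k : ℕ) (v : H) : ‖S k v‖ ≤ ‖v‖ :=
  ((S k).le_of_opNorm_le (hS.norm_le_one k) v).trans_eq (one_mul _)

lemma norm_sub_proj_le (hS : IsApproxIdentity E S) (k : ℕ) (v : H) :
    ‖S k v - proj (E k) v‖ ≤
      ‖proj (E (k + 1)) v - proj (E k) v‖ + (1 / 2) ^ k / 64 * ‖v‖ := by
  have hsplit : S k v - proj (E k) v =
      S k (proj (E (k + 1)) v - proj (E k) v) + (S k (proj (E k) v) - proj (E k) v) := by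
    rw [map_sub, ← mul_apply_eq_comp, hS.mul_proj]
    abel
  rw [hsplit]
  refine norm_add_le_of_le (hS.norm_apply_le k _)
    ((hS.norm_sub_le k _ (proj_mem (hS.isClosed k) v)).trans ?_)
  gcongr
  exact norm_proj_apply_le _ v

lemma sum_norm_sq_sub_proj_le (hS : IsApproxIdentity E S) (v : H) (s : Finset ℕ) :
    ∑ k ∈ s, ‖S k v - proj (E k) v‖ ^ 2 ≤ 3 * ‖v‖ ^ 2 := by
  have hterm : ∀ k, ‖S k v - proj (E k) v‖ ^ 2 ≤
      2 * ‖proj (E (k + 1)) v - proj (E k) v‖ ^ 2 + (1 / 2) ^ k * (‖v‖ ^ 2 / 2) := fun k => by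
    have hpow : ((1 / 2 : ℝ) ^ k) ^ 2 ≤ (1 / 2) ^ k :=
      pow_le_of_le_one (by positivity) (pow_le_one₀ (by norm_num) (by norm_num)) two_ne_zero
    calc ‖S k v - proj (E k) v‖ ^ 2
        ≤ (‖proj (E (k + 1)) v - proj (E k) v‖ + (1 / 2) ^ k / 64 * ‖v‖) ^ 2 := by
          gcongr
          exact hS.norm_sub_proj_le k v
      _ ≤ 2 * (‖proj (E (k + 1)) v - proj (E k) v‖ ^ 2 + ((1 / 2) ^ k / 64 * ‖v‖) ^ 2) :=
          add_sq_le
      _ ≤ 2 * ‖proj (E (k + 1)) v - proj (E k) v‖ ^ 2 + (1 / 2) ^ k * (‖v‖ ^ 2 / 2) := by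
          nlinarith [mul_le_mul_of_nonneg_right hpow (sq_nonneg ‖v‖), sq_nonneg ‖v‖,
            mul_nonneg (pow_nonneg one_half_pos.le k : (0 : ℝ) ≤ (1 / 2) ^ k) (sq_nonneg ‖v‖)]
  have hgeom : ∑ k ∈ s, (1 / 2 : ℝ) ^ k ≤ 2 :=
    (summable_geometric_two.sum_le_tsum s fun _ _ => by positivity).trans_eq tsum_geometric_two
  calc ∑ k ∈ s, ‖S k v - proj (E k) v‖ ^ 2
      ≤ 2 * ∑ k ∈ s, ‖proj (E (k + 1)) v - proj (E k) v‖ ^ 2 +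
          (∑ k ∈ s, (1 / 2 : ℝ) ^ k) * (‖v‖ ^ 2 / 2) := by
        rw [Finset.mul_sum, Finset.sum_mul, ← Finset.sum_add_distrib]
        exact Finset.sum_le_sum fun k _ => hterm k
    _ ≤ 2 * ((1 : ℕ) * ‖v‖ ^ 2) + 2 * (‖v‖ ^ 2 / 2) := by
        gcongr
        exact sum_norm_sq_proj_sub_le hS.monotone v 1 s
    _ = 3 * ‖v‖ ^ 2 := by push_cast; ring

lemma sum_norm_sq_sub_le (hS : IsApproxIdentity E S) (v : H) (j : ℕ) (s : Finset ℕ) :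
    ∑ k ∈ s, ‖S (k + j) v - S k v‖ ^ 2 ≤ 3 * (6 + j) * ‖v‖ ^ 2 := by
  have hterm : ∀ k, ‖S (k + j) v - S k v‖ ^ 2 ≤ 3 * (‖S (k + j) v - proj (E (k + j)) v‖ ^ 2 +
      ‖proj (E (k + j)) v - proj (E k) v‖ ^ 2 + ‖S k v - proj (E k) v‖ ^ 2) := fun k => by
    have hsplit : S (k + j) v - S k v = (S (k + j) v - proj (E (k + j)) v) +
        (proj (E (k + j)) v - proj (E k) v) - (S k v - proj (E k) v) := by abel
    generalize S (k + j) v - proj (E (k + j)) v = a at *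
    generalize proj (E (k + j)) v - proj (E k) v = b at *
    generalize S k v - proj (E k) v = c at *
    have hnorm : ‖a + b - c‖ ≤ ‖a‖ + ‖b‖ + ‖c‖ :=
      (_root_.norm_sub_le _ _).trans (add_le_add_left (norm_add_le _ _) _)
    rw [hsplit]
    nlinarith [pow_le_pow_left₀ (norm_nonneg _) hnorm 2, sq_nonneg (‖a‖ - ‖b‖),
      sq_nonneg (‖a‖ - ‖c‖), sq_nonneg (‖b‖ - ‖c‖)]
  have hshift : ∑ k ∈ s, ‖S (k + j) v - proj (E (k + j)) v‖ ^ 2 ≤ 3 * ‖v‖ ^ 2 := by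
    simpa only [Finset.sum_map, addRightEmbedding_apply] using
      hS.sum_norm_sq_sub_proj_le v (s.map (addRightEmbedding j))
  calc ∑ k ∈ s, ‖S (k + j) v - S k v‖ ^ 2
      ≤ 3 * (∑ k ∈ s, ‖S (k + j) v - proj (E (k + j)) v‖ ^ 2 +
          ∑ k ∈ s, ‖proj (E (k + j)) v - proj (E k) v‖ ^ 2 +
          ∑ k ∈ s, ‖S k v - proj (E k) v‖ ^ 2) := by
        rw [← Finset.sum_add_distrib, ← Finset.sum_add_distrib, Finset.mul_sum]
        exact Finset.sum_le_sum fun k _ => hterm k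
    _ ≤ 3 * (3 * ‖v‖ ^ 2 + j * ‖v‖ ^ 2 + 3 * ‖v‖ ^ 2) := by
        gcongr
        exacts [sum_norm_sq_proj_sub_le hS.monotone v j s, hS.sum_norm_sq_sub_proj_le v s]
    _ = 3 * (6 + j) * ‖v‖ ^ 2 := by ring

lemma tendsto_apply (hS : IsApproxIdentity E S) {v : H}
    (hv : v ∈ (⨆ k, E k).topologicalClosure) :
    Filter.Tendsto (fun k => S k v) Filter.atTop (𝓝 v) := by
  rw [Submodule.iSup_eq_span] at hv
  refine tendsto_apply_of_mem_closure_span hS.norm_le_one (fun u hu => ?_) hv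
  obtain ⟨m, hm⟩ := Set.mem_iUnion.1 hu
  have hrate : Filter.Tendsto (fun k : ℕ => (1 / 2 : ℝ) ^ k / 64 * ‖u‖) Filter.atTop (𝓝 0) := by
    simpa using ((tendsto_pow_atTop_nhds_zero_of_lt_one (r := (1 / 2 : ℝ)) (by norm_num)
      (by norm_num)).div_const 64).mul_const ‖u‖
  refine tendsto_iff_norm_sub_tendsto_zero.2 (squeeze_zero'
    (Filter.Eventually.of_forall fun _ => norm_nonneg _) ?_ hrate)
  filter_upwards [Filter.eventually_ge_atTop m] with k hk
  exact hS.norm_sub_le k u (hS.monotone hk hm)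

lemma apply_mem_of_star (hS' : IsApproxIdentity E fun k => star (S k)) {i j : ℕ} (hij : i < j)
    (v : H) : S i v ∈ E j := by
  have hmul : proj (E (i + 1)) * S i = S i := by
    simpa only [star_mul, star_star, star_proj] using congrArg star (hS'.mul_proj i)
  rw [← hmul, mul_apply_eq_comp]
  exact hS'.monotone hij (proj_mem (hS'.isClosed _) _)

lemma norm_apply_apply_sub_le (hS : IsApproxIdentity E S)
    (hS' : IsApproxIdentity E fun k => star (S k)) {i j : ℕ} (hij : i < j) (v : H) :
    ‖S i (S j v) - S i v‖ ≤ (1 / 2) ^ j / 64 * ‖v‖ := by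
  have hstar : ‖star (S i * S j - S i)‖ ≤ (1 / 2) ^ j / 64 := by
    refine ContinuousLinearMap.opNorm_le_bound _ (by positivity) fun x => ?_
    have hmem : star (S i) x ∈ E j :=
      apply_mem_of_star (S := fun k => star (S k)) (by simpa only [star_star] using hS) hij x
    rw [star_sub, star_mul, sub_apply, mul_apply_eq_comp]
    refine (hS'.norm_sub_le j _ hmem).trans ?_
    gcongr
    exact hS'.norm_apply_le i x
  exact (S i * S j - S i).le_of_opNorm_le ((norm_star _).symm.trans_le hstar) v

/- On the range of `S (k + 2) - S (k + 1)`, the operator `S (k + 3)` is nearly the identity and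
`S k` nearly vanishes. -/
lemma norm_telescope_sub_le (hS : IsApproxIdentity E S)
    (hS' : IsApproxIdentity E fun k => star (S k)) (k : ℕ) (v : H) :
    ‖(S (k + 3) - S k) (S (k + 3) (S (k + 2) v - S (k + 1) v)) - (S (k + 2) v - S (k + 1) v)‖ ≤
      (1 / 2) ^ k / 8 * ‖v‖ := by
  have hrate : ∀ j, (1 / 2 : ℝ) ^ (k + j) / 64 ≤ (1 / 2) ^ k / 64 := fun j => by
    gcongr ?_ / _
    exact pow_le_pow_of_le_one (by norm_num) (by norm_num) (Nat.le_add_right k j)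
  set a := S (k + 2) v - S (k + 1) v with ha
  set b := S (k + 3) a - a
  have ha_norm : ‖a‖ ≤ 2 * ‖v‖ :=
    (norm_sub_le_of_le (hS.norm_apply_le _ v) (hS.norm_apply_le _ v)).trans_eq (two_mul _).symm
  have hb : ‖b‖ ≤ (1 / 2) ^ k / 64 * (2 * ‖v‖) :=
    calc ‖b‖ ≤ (1 / 2) ^ (k + 3) / 64 * ‖a‖ := hS.norm_sub_le _ a <|
          sub_mem (hS'.apply_mem_of_star (by omega) v) (hS'.apply_mem_of_star (by omega) v)
      _ ≤ (1 / 2) ^ k / 64 * (2 * ‖v‖) := by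
          gcongr ?_ * ?_
          exact hrate 3
  have hSa : ‖S k a‖ ≤ (1 / 2) ^ k / 64 * ‖v‖ + (1 / 2) ^ k / 64 * ‖v‖ := by
    have hsub : S k a = (S k (S (k + 2) v) - S k v) - (S k (S (k + 1) v) - S k v) := by
      rw [ha, map_sub, sub_sub_sub_cancel_right]
    rw [hsub]
    exact norm_sub_le_of_le
      ((hS.norm_apply_apply_sub_le hS' (by omega) v).trans (by gcongr ?_ * _; exact hrate 2))
      ((hS.norm_apply_apply_sub_le hS' (by omega) v).trans (by gcongr ?_ * _; exact hrate 1))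
  have hsplit : (S (k + 3) - S k) (S (k + 3) a) - a = S (k + 3) b + b - S k b - S k a := by
    simp only [b, sub_apply, map_sub]
    abel
  calc ‖(S (k + 3) - S k) (S (k + 3) a) - a‖ ≤ ‖b‖ + ‖b‖ + ‖b‖ + ‖S k a‖ := by
        rw [hsplit]
        exact norm_sub_le_of_le (norm_sub_le_of_le (norm_add_le_of_le (hS.norm_apply_le _ b) le_rfl)
          (hS.norm_apply_le _ b)) le_rfl
    _ ≤ (1 / 2) ^ k / 8 * ‖v‖ := by linarith

end IsApproxIdentity

end ApproxIdentity

section FiniteFactorization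

variable {𝕜 H : Type*} [RCLike 𝕜] [NormedAddCommGroup H] [InnerProductSpace 𝕜 H]
  [CompleteSpace H] {𝒩 : Set (Submodule 𝕜 H)} {K L V : Submodule 𝕜 H} {T : H →L[𝕜] H}

lemma proj_mul_eq_self_iff (hV : IsClosed (V : Set H)) : proj V * T = T ↔ ∀ v, T v ∈ V := by
  simp only [ContinuousLinearMap.ext_iff, mul_apply_eq_comp, proj_eq_self_iff hV]

lemma mul_proj_eq_self_iff : T * proj V = T ↔ proj V * star T = star T := by
  rw [← star_inj, star_mul, star_proj]

lemma apply_mem_map_of_mul_proj (hV : IsClosed (V : Set H)) (hT : T * proj V = T) (v : H) :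
    T v ∈ V.map (T : H →ₗ[𝕜] H) :=
  ⟨proj V v, proj_mem hV v, DFunLike.congr_fun hT v⟩

lemma map_le_of_proj_mul (hK : IsClosed (K : Set H)) (hT : proj K * T = T) :
    V.map (T : H →ₗ[𝕜] H) ≤ K :=
  Submodule.map_le_iff_le_comap.2 fun v _ => (proj_mul_eq_self_iff hK).1 hT v

/-- Contractions `K → mid ≤ L → K` in the nest algebra whose composition is meant to approximate the
identity on the finite-dimensional space `domain ≤ K`. The space `used` records the directions of
`L` which later factorizations have to avoid. -/
structure FiniteFactorization (𝒩 : Set (Submodule 𝕜 H)) (L K : Submodule 𝕜 H) where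
  left : H →L[𝕜] H
  right : H →L[𝕜] H
  domain : Submodule 𝕜 H
  mid : Submodule 𝕜 H
  used : Submodule 𝕜 H
  finiteDimensional_domain : FiniteDimensional 𝕜 domain
  finiteDimensional_used : FiniteDimensional 𝕜 used
  domain_le : domain ≤ K
  mid_le : mid ≤ L
  mid_le_used : mid ≤ used
  isNestContraction_left : IsNestContraction 𝒩 mid K left
  isNestContraction_right : IsNestContraction 𝒩 K mid right

namespace FiniteFactorization

instance : Zero (FiniteFactorization 𝒩 L K) where
  zero :=
    { left := 0
      right := 0
      domain := ⊥
      mid := ⊥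
      used := ⊥
      finiteDimensional_domain := inferInstance
      finiteDimensional_used := inferInstance
      domain_le := bot_le
      mid_le := bot_le
      mid_le_used := le_rfl
      isNestContraction_left := .zero _ _
      isNestContraction_right := .zero _ _ }

/-- The composition of the two factors. -/
def comp (z : FiniteFactorization 𝒩 L K) : H →L[𝕜] H := z.left * z.right

/-- The relation between consecutive terms of a sequence of factorizations: the domains increase
and absorb the images of `left` and `star right`, while the middle spaces are orthogonal. -/
structure Extends (z' z : FiniteFactorization 𝒩 L K) : Prop where
  domain_le : z.domain ≤ z'.domain
  used_le : z.used ≤ z'.used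
  mid_le : z'.mid ≤ z.usedᗮ
  left_mem : ∀ v, z.left v ∈ z'.domain
  star_right_mem : ∀ v, star z.right v ∈ z'.domain

variable {f : ℕ → FiniteFactorization 𝒩 L K} {z z' : FiniteFactorization 𝒩 L K}

lemma isClosed_domain (z : FiniteFactorization 𝒩 L K) : IsClosed (z.domain : Set H) :=
  have := z.finiteDimensional_domain
  z.domain.closed_of_finiteDimensional

lemma isClosed_mid (z : FiniteFactorization 𝒩 L K) : IsClosed (z.mid : Set H) :=
  have := z.finiteDimensional_used
  have := Submodule.finiteDimensional_of_le z.mid_le_used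
  z.mid.closed_of_finiteDimensional

lemma norm_comp_le_one (z : FiniteFactorization 𝒩 L K) : ‖z.comp‖ ≤ 1 :=
  (norm_mul_le _ _).trans (mul_le_one₀ z.isNestContraction_left.norm_le_one (norm_nonneg _)
    z.isNestContraction_right.norm_le_one)

lemma comp_mem (z : FiniteFactorization 𝒩 L K) : z.comp ∈ nestAlgebra 𝒩 :=
  mul_mem z.isNestContraction_left.mem z.isNestContraction_right.mem

lemma proj_mul_comp (z : FiniteFactorization 𝒩 L K) : proj K * z.comp = z.comp := by
  rw [comp, ← mul_assoc, z.isNestContraction_left.proj_mul]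

lemma comp_mul_proj (z : FiniteFactorization 𝒩 L K) : z.comp * proj K = z.comp := by
  rw [comp, mul_assoc, z.isNestContraction_right.mul_proj]

lemma Extends.zero : Extends (0 : FiniteFactorization 𝒩 L K) 0 where
  domain_le := le_rfl
  used_le := le_rfl
  mid_le := bot_le
  left_mem _ := zero_mem _
  star_right_mem v := by
    change star (0 : H →L[𝕜] H) v ∈ _
    rw [star_zero]
    exact zero_mem _

lemma exists_extends (h : ApproxFactors 𝒩 L K) (hK : IsClosed (K : Set H))
    (z : FiniteFactorization 𝒩 L K) {x : H} (hx : x ∈ K) {δ : ℝ} (hδ : 0 < δ) :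
    ∃ z' : FiniteFactorization 𝒩 L K, z'.Extends z ∧ x ∈ z'.domain ∧
      ∀ u ∈ z'.domain, ‖z'.comp u - u‖ ≤ δ * ‖u‖ := by
  have := z.finiteDimensional_domain
  have := z.finiteDimensional_used
  have := Submodule.finiteDimensional_of_le z.mid_le_used
  have hleft := z.isNestContraction_left
  have hright := z.isNestContraction_right
  set E := z.domain ⊔ z.mid.map (z.left : H →ₗ[𝕜] H) ⊔
    z.mid.map ((star z.right : H →L[𝕜] H) : H →ₗ[𝕜] H) ⊔ Submodule.span 𝕜 {x}
  have hEK : E ≤ K := sup_le (sup_le (sup_le z.domain_le (map_le_of_proj_mul hK hleft.proj_mul))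
    (map_le_of_proj_mul hK (mul_proj_eq_self_iff.1 hright.mul_proj)))
    ((Submodule.span_singleton_le_iff_mem x K).2 hx)
  obtain ⟨V, hV, hVfin, α, β, hα, hβ, hαβ⟩ := h.exists_finiteDimensional z.used E hEK hδ
  refine ⟨⟨α, β, E, V, z.used ⊔ V, inferInstance, inferInstance, hEK, hV.trans inf_le_left,
    le_sup_right, hα, hβ⟩, ⟨?_, le_sup_left, hV.trans inf_le_right, fun v => ?_, fun v => ?_⟩,
    ?_, hαβ⟩
  · exact le_sup_left.trans (le_sup_left.trans le_sup_left)
  · exact (le_sup_right.trans (le_sup_left.trans le_sup_left) : _ ≤ E)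
      (apply_mem_map_of_mul_proj z.isClosed_mid hleft.mul_proj v)
  · refine (le_sup_right.trans le_sup_left : _ ≤ E)
      (apply_mem_map_of_mul_proj z.isClosed_mid (mul_proj_eq_self_iff.2 ?_) v)
    rw [star_star, hright.proj_mul]
  · exact (le_sup_right : _ ≤ E) (Submodule.mem_span_singleton_self x)

lemma exists_seq_extends (h : ApproxFactors 𝒩 L K) (hK : IsClosed (K : Set H)) {x : ℕ → H}
    (hx : ∀ n, x n ∈ K) {δ : ℕ → ℝ} (hδ : ∀ n, 0 < δ n) :
    ∃ f : ℕ → FiniteFactorization 𝒩 L K, f 1 = 0 ∧ (∀ n, (f (n + 1)).Extends (f n)) ∧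
      (∀ n, x n ∈ (f (n + 2)).domain) ∧
      ∀ n, ∀ u ∈ (f n).domain, ‖(f n).comp u - u‖ ≤ δ n * ‖u‖ := by
  choose next hnext hmem hclose using
    fun (n : ℕ) (z : FiniteFactorization 𝒩 L K) => exists_extends h hK z (hx n) (hδ (n + 2))
  let g : ℕ → FiniteFactorization 𝒩 L K := fun n => Nat.rec 0 next n
  have hzero : ∀ n, ∀ u ∈ (0 : FiniteFactorization 𝒩 L K).domain,
      ‖(0 : FiniteFactorization 𝒩 L K).comp u - u‖ ≤ δ n * ‖u‖ := by
    rintro n u (rfl : u = 0)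
    simp
  refine ⟨fun n => g (n - 1), rfl, ?_, fun n => hmem n _, ?_⟩
  · rintro (_ | n)
    exacts [.zero, hnext n _]
  · rintro (_ | _ | n)
    exacts [hzero 0, hzero 1, hclose n _]

lemma pairwise_isOrtho_mid (hf : ∀ n, (f (n + 1)).Extends (f n)) :
    Pairwise fun i j => (f i).mid ⟂ (f j).mid := by
  have hused : Monotone fun n => (f n).used := monotone_nat_of_le_succ fun n => (hf n).used_le
  have hlt : ∀ i j, i < j → (f i).mid ⟂ (f j).mid := by
    rintro i (_ | j) hij
    · exact absurd hij (Nat.not_lt_zero i)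
    · exact ((Submodule.isOrtho_iff_le.2 (hf j).mid_le).mono_right
        ((f i).mid_le_used.trans (hused (Nat.le_of_lt_succ hij)))).symm
  intro i j hij
  rcases hij.lt_or_gt with h | h
  exacts [hlt i j h, (hlt j i h).symm]

lemma isApproxIdentity_comp (hf : ∀ n, (f (n + 1)).Extends (f n))
    (hclose : ∀ n, ∀ u ∈ (f n).domain,
      ‖(f n).comp u - u‖ ≤ ((1 / 2) ^ n / 64) ^ 2 / 2 * ‖u‖) :
    IsApproxIdentity (fun n => (f n).domain) (fun n => (f n).comp) where
  isClosed n := (f n).isClosed_domain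
  monotone := monotone_nat_of_le_succ fun n => (hf n).domain_le
  norm_le_one n := (f n).norm_comp_le_one
  mul_proj n := by
    rw [mul_proj_eq_self_iff, proj_mul_eq_self_iff (f (n + 1)).isClosed_domain, comp, star_mul]
    exact fun v => (hf n).star_right_mem _
  norm_sub_le n u hu := by
    have hle : (1 / 2 : ℝ) ^ n / 64 ≤ 1 :=
      (div_le_one₀ (by norm_num)).2 ((pow_le_one₀ (by norm_num) (by norm_num)).trans (by norm_num))
    refine (hclose n u hu).trans (mul_le_mul_of_nonneg_right ?_ (norm_nonneg u))
    have hpos : (0 : ℝ) ≤ (1 / 2) ^ n / 64 := by positivity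
    nlinarith

lemma isApproxIdentity_star_comp (hf : ∀ n, (f (n + 1)).Extends (f n))
    (hclose : ∀ n, ∀ u ∈ (f n).domain,
      ‖(f n).comp u - u‖ ≤ ((1 / 2) ^ n / 64) ^ 2 / 2 * ‖u‖) :
    IsApproxIdentity (fun n => (f n).domain) (fun n => star (f n).comp) where
  isClosed n := (f n).isClosed_domain
  monotone := monotone_nat_of_le_succ fun n => (hf n).domain_le
  norm_le_one n := (norm_star _).trans_le (f n).norm_comp_le_one
  mul_proj n := by
    rw [mul_proj_eq_self_iff, star_star, proj_mul_eq_self_iff (f (n + 1)).isClosed_domain]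
    exact fun v => (hf n).left_mem _
  norm_sub_le n u hu :=
    norm_star_apply_sub_le (f n).norm_comp_le_one (by positivity) (hclose n u hu)

lemma sum_norm_sq_star_left_le (hS' : IsApproxIdentity (fun n => (f n).domain)
    (fun n => star (f n).comp)) (v : H) (s : Finset ℕ) :
    ∑ k ∈ s, ‖star (((f (k + 3)).comp - (f k).comp) * (f (k + 3)).left) v‖ ^ 2 ≤
      (6 * ‖v‖) ^ 2 := by
  refine (Finset.sum_le_sum fun k _ => ?_).trans ((hS'.sum_norm_sq_sub_le v 3 s).trans ?_)
  · rw [star_mul, star_sub, mul_apply_eq_comp, ← sub_apply]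
    gcongr
    exact (ContinuousLinearMap.le_of_opNorm_le _ ((norm_star _).trans_le
      (f (k + 3)).isNestContraction_left.norm_le_one) _).trans_eq (one_mul _)
  · push_cast
    nlinarith [sq_nonneg ‖v‖]

lemma sum_norm_sq_right_le (hS : IsApproxIdentity (fun n => (f n).domain) (fun n => (f n).comp))
    (v : H) (s : Finset ℕ) :
    ∑ k ∈ s, ‖((f (k + 3)).right * ((f (k + 2)).comp - (f (k + 1)).comp)) v‖ ^ 2 ≤
      (6 * ‖v‖) ^ 2 := by
  have hsum := hS.sum_norm_sq_sub_le v 1 (s.map (addRightEmbedding 1))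
  simp only [Finset.sum_map, addRightEmbedding_apply] at hsum
  refine (Finset.sum_le_sum fun k _ => ?_).trans (hsum.trans ?_)
  · rw [mul_apply_eq_comp, ← sub_apply]
    gcongr
    exact ((f (k + 3)).right.le_of_opNorm_le
      (f (k + 3)).isNestContraction_right.norm_le_one _).trans_eq (one_mul _)
  · push_cast
    nlinarith [sq_nonneg ‖v‖]

/- The middle spaces being orthogonal, the products in `Y * Z` of terms with different indices
vanish. -/
lemma exists_hasSum_mul (h𝒩 : IsNest 𝒩) (hf : ∀ n, (f (n + 1)).Extends (f n))
    (hS : IsApproxIdentity (fun n => (f n).domain) (fun n => (f n).comp))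
    (hS' : IsApproxIdentity (fun n => (f n).domain) (fun n => star (f n).comp)) :
    ∃ Y ∈ nestAlgebra 𝒩, ∃ Z ∈ nestAlgebra 𝒩, proj K * Y = Y ∧ Y * proj L = Y ∧ proj L * Z = Z ∧
      ∀ v, HasSum (fun k => ((f (k + 3)).comp - (f k).comp)
        ((f (k + 3)).comp ((f (k + 2)).comp v - (f (k + 1)).comp v))) (Y (Z v)) := by
  set P := fun k => ((f (k + 3)).comp - (f k).comp) * (f (k + 3)).left with hP
  set Q := fun k => (f (k + 3)).right * ((f (k + 2)).comp - (f (k + 1)).comp) with hQ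
  have hleft := fun k => (f k).isNestContraction_left
  have hright := fun k => (f k).isNestContraction_right
  obtain ⟨Y, Z, hY, hZ, hYZ⟩ := exists_hasSum_mul_of_isOrtho (P := P) (Q := Q)
    ((pairwise_isOrtho_mid hf).comp_of_injective (add_left_injective 3))
    (fun k => by rw [hP, mul_assoc, (hleft _).mul_proj])
    (fun k => by rw [hQ, ← mul_assoc, (hright _).proj_mul])
    (by norm_num) (sum_norm_sq_star_left_le hS') (sum_norm_sq_right_le hS)
  refine ⟨Y, h𝒩.mem_nestAlgebra_of_hasSum_star (fun k => ?_) hY, Z,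
    mem_nestAlgebra_of_hasSum h𝒩.isClosed (fun k => ?_) hZ, ?_, ?_, ?_, hYZ⟩
  · exact mul_mem (sub_mem (comp_mem _) (comp_mem _)) (hleft _).mem
  · exact mul_mem (hright _).mem (sub_mem (comp_mem _) (comp_mem _))
  · rw [← star_inj, star_mul, star_proj]
    refine eq_mul_of_hasSum hY fun k => ?_
    rw [← star_proj K, ← star_mul, hP, ← mul_assoc, mul_sub, proj_mul_comp, proj_mul_comp]
  · rw [mul_proj_eq_self_iff]
    refine mul_eq_of_hasSum hY fun k => ?_
    rw [← mul_proj_eq_self_iff, hP, mul_assoc, ((hleft _).mono (f (k + 3)).mid_le le_rfl).mul_proj]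
  · refine mul_eq_of_hasSum hZ fun k => ?_
    rw [hQ, ← mul_assoc, ((hright _).mono le_rfl (f (k + 3)).mid_le).proj_mul]

end FiniteFactorization

lemma IsApproxIdentity.norm_sub_le_of_hasSum {E : ℕ → Submodule 𝕜 H} {S : ℕ → H →L[𝕜] H}
    {A R : H →L[𝕜] H} (hS : IsApproxIdentity E S) (hS' : IsApproxIdentity E fun k => star (S k))
    (hS₁ : S 1 = 0) (hR : ∀ v, Filter.Tendsto (fun k => S k v) Filter.atTop (𝓝 (R v)))
    (hA : ∀ v, HasSum (fun k => (S (k + 3) - S k) (S (k + 3) (S (k + 2) v - S (k + 1) v))) (A v)) :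
    ‖R - A‖ ≤ 1 / 4 := by
  refine ContinuousLinearMap.opNorm_le_bound _ (by norm_num) fun v => ?_
  refine le_of_tendsto (((Filter.tendsto_add_atTop_iff_nat 1).2 (hR v)).sub
    (hA v).tendsto_sum_nat).norm (Filter.Eventually.of_forall fun n => ?_)
  have htelescope : S (n + 1) v = ∑ k ∈ Finset.range n, (S (k + 2) v - S (k + 1) v) := by
    rw [Finset.sum_range_sub fun k => S (k + 1) v, zero_add, hS₁, zero_apply, sub_zero]
  rw [htelescope, ← Finset.sum_sub_distrib]
  calc _ ≤ ∑ k ∈ Finset.range n, (1 / 2) ^ k / 8 * ‖v‖ := by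
        refine norm_sum_le_of_le _ fun k _ => ?_
        rw [norm_sub_rev]
        exact hS.norm_telescope_sub_le hS' k v
    _ = (∑ k ∈ Finset.range n, (1 / 2 : ℝ) ^ k) / 8 * ‖v‖ := by
        rw [Finset.sum_div, Finset.sum_mul]
    _ ≤ 2 / 8 * ‖v‖ := by
        gcongr
        exact sum_geometric_two_le n
    _ = 1 / 4 * ‖v‖ := by norm_num

lemma ApproxFactors.exists_norm_proj_sub_mul_le [TopologicalSpace.SeparableSpace H]
    (h : ApproxFactors 𝒩 L K) (h𝒩 : IsNest 𝒩) (hK : IsClosed (K : Set H)) :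
    ∃ Y ∈ nestAlgebra 𝒩, ∃ Z ∈ nestAlgebra 𝒩, proj K * Y = Y ∧ Y * proj L = Y ∧
      proj L * Z = Z ∧ ‖proj K - Y * Z‖ ≤ 1 / 4 := by
  set x := fun n => proj K (TopologicalSpace.denseSeq H n)
  obtain ⟨f, hf₁, hf, hmem, hclose⟩ := FiniteFactorization.exists_seq_extends h hK (x := x)
    (fun n => proj_mem hK _) (δ := fun n => ((1 / 2) ^ n / 64) ^ 2 / 2) (fun n => by positivity)
  have hS := FiniteFactorization.isApproxIdentity_comp hf hclose
  have hS' := FiniteFactorization.isApproxIdentity_star_comp hf hclose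
  have hlim : ∀ v, Filter.Tendsto (fun k => (f k).comp v) Filter.atTop (𝓝 (proj K v)) := by
    intro v
    have hdense : proj K v ∈ closure (Set.range x) :=
      map_mem_closure (proj K).continuous (TopologicalSpace.denseRange_denseSeq H v)
        (by rintro _ ⟨n, rfl⟩; exact ⟨n, rfl⟩)
    have hrange : Set.range x ⊆ (⨆ k, (f k).domain : Submodule 𝕜 H) := by
      rintro _ ⟨n, rfl⟩
      exact Submodule.mem_iSup_of_mem (n + 2) (hmem n)
    have hcomp : ∀ k, (f k).comp v = (f k).comp (proj K v) := fun k => by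
      rw [← mul_apply_eq_comp, (f k).comp_mul_proj]
    simpa only [hcomp] using hS.tendsto_apply (closure_mono hrange hdense)
  obtain ⟨Y, hY, Z, hZ, hKY, hYL, hLZ, hYZ⟩ := FiniteFactorization.exists_hasSum_mul h𝒩 hf hS hS'
  have hS₁ : (f 1).comp = 0 := by
    rw [hf₁]
    exact zero_mul _
  exact ⟨Y, hY, Z, hZ, hKY, hYL, hLZ, hS.norm_sub_le_of_hasSum hS' hS₁ hlim hYZ⟩

end FiniteFactorization

section OrthonormalSets

variable {𝕜 H : Type*} [RCLike 𝕜] [NormedAddCommGroup H] [InnerProductSpace 𝕜 H] {X : Set H} {v : H}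

lemma countable_of_orthonormal [TopologicalSpace.SeparableSpace H]
    (hX : Orthonormal 𝕜 (Subtype.val : X → H)) : X.Countable := by
  refine Set.PairwiseDisjoint.countable_of_isOpen (s := fun x => Metric.ball x (1 / 2)) ?_
    (fun _ _ => Metric.isOpen_ball) (fun x _ => ⟨x, Metric.mem_ball_self (by norm_num)⟩)
  intro x hx y hy hxy
  refine Metric.ball_disjoint_ball ?_
  have hinner : inner 𝕜 x y = 0 := hX.2 (i := ⟨x, hx⟩) (j := ⟨y, hy⟩) (by simpa using hxy)
  have hsq := norm_sub_sq (𝕜 := 𝕜) x y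
  rw [hinner, hX.1 ⟨x, hx⟩, hX.1 ⟨y, hy⟩, map_zero] at hsq
  rw [dist_eq_norm]
  nlinarith [norm_nonneg (x - y)]

lemma orthonormal_insert (hX : Orthonormal 𝕜 (Subtype.val : X → H)) (hv : ‖v‖ = 1)
    (hvX : v ∈ (Submodule.span 𝕜 X)ᗮ) :
    Orthonormal 𝕜 (Subtype.val : ↥(insert v X) → H) := by
  have hinner := mem_orthogonal_span_iff.1 hvX
  refine ⟨?_, ?_⟩
  · rintro ⟨x, rfl | hx⟩
    exacts [hv, hX.1 ⟨x, hx⟩]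
  · rintro ⟨x, rfl | hx⟩ ⟨y, rfl | hy⟩ hxy
    · exact absurd rfl hxy
    · exact inner_eq_zero_symm.1 (hinner y hy)
    · exact hinner x hx
    · exact hX.2 (i := ⟨x, hx⟩) (j := ⟨y, hy⟩) (by rintro ⟨⟩; exact hxy rfl)

end OrthonormalSets

/-! ### Splitting off the atomic part -/

section Decomposition

variable {𝕜 H : Type*} [RCLike 𝕜] [NormedAddCommGroup H] [InnerProductSpace 𝕜 H]
  {𝒩 : Set (Submodule 𝕜 H)} {C K L : Submodule 𝕜 H} {T : H →L[𝕜] H}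

lemma isClosed_nestAlgebra (hclosed : ∀ N ∈ 𝒩, IsClosed (N : Set H)) :
    IsClosed (nestAlgebra 𝒩 : Set (H →L[𝕜] H)) := by
  have : (nestAlgebra 𝒩 : Set (H →L[𝕜] H)) = ⋂ N ∈ 𝒩, ⋂ x ∈ N, (fun T => T x) ⁻¹' N := by
    ext T
    simp [mem_nestAlgebra]
  rw [this]
  exact isClosed_biInter fun N hN => isClosed_biInter fun x _ =>
    (hclosed N hN).preimage (ContinuousLinearMap.apply 𝕜 H x).continuous

lemma exists_orthonormal_isAtomicVector_isNonatomic (𝒩 : Set (Submodule 𝕜 H)) :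
    ∃ X : Set H, Orthonormal 𝕜 (Subtype.val : X → H) ∧ (∀ x ∈ X, IsAtomicVector 𝒩 x) ∧
      IsNonatomic 𝒩 (Submodule.span 𝕜 X)ᗮ := by
  obtain ⟨X, hX⟩ := zorn_subset
    {X : Set H | Orthonormal 𝕜 (Subtype.val : X → H) ∧ ∀ x ∈ X, IsAtomicVector 𝒩 x} <| by
      refine fun c hc hchain => ⟨⋃₀ c, ⟨?_, ?_⟩, fun s => Set.subset_sUnion_of_mem⟩
      · exact orthonormal_sUnion_of_directed hchain.directedOn fun s hs => (hc hs).1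
      · rintro x ⟨s, hs, hx⟩
        exact (hc hs).2 x hx
  refine ⟨X, hX.prop.1, hX.prop.2, fun v hv hva => by_contra fun hv0 => hv0 ?_⟩
  set w : H := ((‖v‖⁻¹ : ℝ) : 𝕜) • v with hw
  have hw1 : ‖w‖ = 1 := by simp [hw, norm_smul, hv0]
  have hwX : w ∈ (Submodule.span 𝕜 X)ᗮ := Submodule.smul_mem _ _ hv
  have hwa : IsAtomicVector 𝒩 w := fun N hN =>
    (hva N hN).imp (N.smul_mem _) (Nᗮ.smul_mem _)
  have hmem : w ∈ X := hX.le_of_ge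
    ⟨orthonormal_insert hX.prop.1 hw1 hwX, Set.forall_mem_insert.2 ⟨hwa, hX.prop.2⟩⟩
    (Set.subset_insert w X) (Set.mem_insert w X)
  have hw0 : w = 0 := inner_self_eq_zero.1 (mem_orthogonal_span_iff.1 hwX w hmem)
  rw [hw0, norm_zero] at hw1
  exact absurd hw1 zero_ne_one

variable [CompleteSpace H]

lemma proj_mul_mul_proj_mem_corner (K : Submodule 𝕜 H) (T : H →L[𝕜] H) :
    proj K * T * proj K ∈ corner K :=
  ⟨by rw [← mul_assoc, ← mul_assoc, (isIdempotentElem_proj K).eq],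
    by rw [mul_assoc, (isIdempotentElem_proj K).eq]⟩

lemma proj_mul_mul_proj_mem_nestAlgebra (hclosed : ∀ N ∈ 𝒩, IsClosed (N : Set H))
    (hK : Reduces 𝒩 K) (hT : T ∈ nestAlgebra 𝒩) : proj K * T * proj K ∈ nestAlgebra 𝒩 :=
  mul_mem (mul_mem (hK.proj_mem_nestAlgebra hclosed) hT) (hK.proj_mem_nestAlgebra hclosed)

variable [TopologicalSpace.SeparableSpace H]

lemma ApproxFactors.mem_idempotentHull (h : ApproxFactors 𝒩 L K) (h𝒩 : IsNest 𝒩)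
    (hKclosed : IsClosed (K : Set H)) (hK : Reduces 𝒩 K) (hL : Reduces 𝒩 L) (hKL : K ⟂ L)
    (hT : T ∈ nestAlgebra 𝒩) (hTK : T ∈ corner K) : T ∈ idempotentHull (nestAlgebra 𝒩) := by
  obtain ⟨Y, hY, Z, hZ, hKY, hYL, hLZ, hYZ⟩ := h.exists_norm_proj_sub_mul_le h𝒩 hKclosed
  have hLK : proj L * proj K = 0 := proj_mul_proj_of_isOrtho hKL.symm
  refine idempotentHull.mem_of_norm_sub_mul_lt_one (isClosed_nestAlgebra h𝒩.isClosed)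
    (hL.proj_mem_nestAlgebra h𝒩.isClosed) (isIdempotentElem_proj L)
    (hK.proj_mem_nestAlgebra h𝒩.isClosed) hT hY hZ hLK hTK.1 ?_ ?_ hYL hLZ
    (hYZ.trans_lt (by norm_num))
  · rw [← hTK.2, mul_assoc, proj_mul_proj_of_isOrtho hKL, mul_zero]
  · rw [← hKY, ← mul_assoc, hLK, zero_mul]

theorem IsNonatomic.mem_idempotentHull (h𝒩 : IsNest 𝒩) (hCclosed : IsClosed (C : Set H))
    (hC : Reduces 𝒩 C) (hna : IsNonatomic 𝒩 C) (hT : T ∈ nestAlgebra 𝒩) (hTC : T ∈ corner C) :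
    T ∈ idempotentHull (nestAlgebra 𝒩) := by
  obtain ⟨E, hEclosed, hE, hEC, hroomE, hroomF⟩ := hna.exists_hasRoom h𝒩 hCclosed hC
  set F := C ⊓ Eᗮ
  have hF : Reduces 𝒩 F := hC.inf hE.orthogonal
  have hFclosed : IsClosed (F : Set H) := hCclosed.inter (Submodule.isClosed_orthogonal E)
  have hFE : F ⟂ E := Submodule.isOrtho_iff_le.2 inf_le_right
  have hfactorE : ApproxFactors 𝒩 F E :=
    hroomF.approxFactors h𝒩 hC hna hFclosed hF inf_le_left hEclosed hE hEC
  have hfactorF : ApproxFactors 𝒩 E F :=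
    hroomE.approxFactors h𝒩 hC hna hEclosed hE hEC hFclosed hF inf_le_left
  have : CompleteSpace E := hEclosed.completeSpace_coe
  have hproj : proj C = proj E + proj F := by
    rw [← proj_sup_of_isOrtho hFE.symm, ← Submodule.sup_orthogonal_inf_of_hasOrthogonalProjection
      hEC, inf_comm]
  have hleft : (1 - proj E) * proj C = proj F := by
    rw [hproj, sub_mul, one_mul, mul_add, (isIdempotentElem_proj E).eq,
      proj_mul_proj_of_isOrtho hFE.symm, add_zero, add_sub_cancel_left]
  have hright : proj C * (1 - proj E) = proj F := by
    rw [hproj, mul_sub, mul_one, add_mul, (isIdempotentElem_proj E).eq,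
      proj_mul_proj_of_isOrtho hFE, add_zero, add_sub_cancel_left]
  have hcompl : (1 - proj E) * T * (1 - proj E) = proj F * T * proj F := by
    calc (1 - proj E) * T * (1 - proj E)
      _ = (1 - proj E) * (proj C * (T * proj C)) * (1 - proj E) := by rw [hTC.2, hTC.1]
      _ = (1 - proj E) * proj C * T * (proj C * (1 - proj E)) := by simp only [mul_assoc]
      _ = proj F * T * proj F := by rw [hleft, hright]
  refine idempotentHull.mem_of_diagonal_corners (hE.proj_mem_nestAlgebra h𝒩.isClosed)
    (isIdempotentElem_proj E) hT ?_ ?_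
  · exact hfactorE.mem_idempotentHull h𝒩 hEclosed hE hF hFE.symm
      (proj_mul_mul_proj_mem_nestAlgebra h𝒩.isClosed hE hT) (proj_mul_mul_proj_mem_corner E T)
  · rw [hcompl]
    exact hfactorF.mem_idempotentHull h𝒩 hFclosed hF hE hFE
      (proj_mul_mul_proj_mem_nestAlgebra h𝒩.isClosed hF hT) (proj_mul_mul_proj_mem_corner F T)

theorem nestAlgebra_le_idempotentHull (h𝒩 : IsNest 𝒩) :
    nestAlgebra 𝒩 ≤ idempotentHull (nestAlgebra 𝒩) := by
  intro T hT
  obtain ⟨X, hX, hXa, hna⟩ := exists_orthonormal_isAtomicVector_isNonatomic 𝒩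
  have : Countable X := (countable_of_orthonormal hX).to_subtype
  have hK : Reduces 𝒩 (Submodule.span 𝕜 X) := .span_of_isAtomicVector hXa
  refine idempotentHull.mem_of_diagonal_corners (hK.proj_mem_nestAlgebra h𝒩.isClosed)
    (isIdempotentElem_proj _) hT ?_ ?_
  · refine idempotentHull.mem_of_mem_corner_of_isAtomicVector h𝒩.isClosed h𝒩.isChain hX
      (fun x => hXa x x.2) (proj_mul_mul_proj_mem_nestAlgebra h𝒩.isClosed hK hT) ?_
    rw [Subtype.range_coe]
    exact proj_mul_mul_proj_mem_corner _ T
  · rw [← proj_orthogonal]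
    exact hna.mem_idempotentHull h𝒩 (Submodule.isClosed_orthogonal _) hK.orthogonal
      (proj_mul_mul_proj_mem_nestAlgebra h𝒩.isClosed hK.orthogonal hT)
      (proj_mul_mul_proj_mem_corner _ T)

end Decomposition

set_option synthInstance.maxHeartbeats 1000000 in
/-- Every nest algebra `Alg 𝒩` on a complex separable Hilbert space is a zero product
determined Banach algebra.  Here a nest `𝒩` is a family of closed subspaces
containing `{0}` and `H`, totally ordered by inclusion, and closed under arbitrary
intersections and arbitrary closed linear spans, and
`Alg 𝒩 = {T ∈ B(H) : T(N) ⊆ N for all N ∈ 𝒩}`. -/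
theorem nest_algebra_zpd (H : Type*) [NormedAddCommGroup H] [InnerProductSpace ℂ H]
    [CompleteSpace H] [TopologicalSpace.SeparableSpace H]
    (𝒩 : Set (Submodule ℂ H)) (hclosed : ∀ N ∈ 𝒩, IsClosed (N : Set H))
    (hbot : ⊥ ∈ 𝒩) (htop : ⊤ ∈ 𝒩) (hchain : IsChain (· ≤ ·) 𝒩)
    (hinf : ∀ F ⊆ 𝒩, F.Nonempty → sInf F ∈ 𝒩)
    (hsup : ∀ F ⊆ 𝒩, F.Nonempty → (sSup F).topologicalClosure ∈ 𝒩)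
    (S : Subalgebra ℂ (H →L[ℂ] H))
    (hS : ∀ T : H →L[ℂ] H, T ∈ S ↔ ∀ N ∈ 𝒩, ∀ x ∈ N, T x ∈ N) :
    ZeroProductDetermined ↥S := by
  obtain rfl : S = nestAlgebra 𝒩 := SetLike.ext hS
  exact .of_le_idempotentHull
    (nestAlgebra_le_idempotentHull ⟨hclosed, hbot, htop, hchain, hinf, hsup⟩)
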